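/- Let $k$ be an algebraically closed field of arbitrary characteristic, let $X$ be a projective variety over $k$ (a reduced and irreducible projective $k$-scheme) of dimension $n$, let $L$ be a line bundle on $X$, and let $H$ be a reduced irreducible effective Cartier divisor on $X$ not contained in the singular locus of $X$. Let $W$ be a closed subscheme of $X$ not containing $H$, and let $m_1,\dots,m_r$ be positive integers. Write $W''=\mathrm{Tr}_H(W)=H\cap W$ for the trace of $W$ on $H$, i.e. the closed subscheme of $H$ with ideal sheaf $(\mathcal I_H+\mathcal I_W)/\mathcal I_H$, and $W'=\mathrm{Res}_H(W)$ for the residual, i.e. the closed subscheme of $X$ with ideal sheaf the conductor $(\mathcal I_W:\mathcal I_H)$. For a closed point $P$ of $X$ let $P^m$ be the subscheme of $X$ defined by $\mathcal I_P^m$, and for a closed point $z$ of $H$ let $D_m(z)=z^m\cap (m-1)H$, i.e. the subscheme of $X$ defined by $\mathcal I_z^m+\mathcal I_H^{m-1}$. A property is said to hold for generic points $P_1,\dots,P_r$ of a $k$-variety $Y$ if it holds for all $r$-tuples of closed points of $Y$ lying in some dense open subset of $Y^r=Y\times_k\cdots\times_k Y$. Suppose that for generic points $Q_1,\dots,Q_r$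 of $H$ (Dime) $H^0(H,\mathcal I_{W''\cup Q_1\cup\cdots\cup Q_r}\otimes L|_H)=0$, and (Degue) $H^0(X,\mathcal I_{W'\cup D_{m_1}(Q_1)\cup\cdots\cup D_{m_r}(Q_r)}\otimes L(-H))=0$. Then for generic points $P_1,\dots,P_r$ of $X$ $$H^0(X,\mathcal I_{W\cup P_1^{m_1}\cup\cdots\cup P_r^{m_r}}\otimes L)=0.$$ -/

import Mathlib

open AlgebraicGeometry CategoryTheory Limits

universe u

namespace DiffHorace

noncomputable section

attribute [local instance] MvPolynomial.gradedAlgebra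

/-- `f : X ⟶ Spec k` is projective: `X` is isomorphic, over `k`, to a closed subscheme of some
projective space `Proj k[x₀, …, x_N]`. -/
def IsProjective {k : Type u} [Field k] {X : Scheme.{u}} (f : X ⟶ Spec (.of k)) : Prop :=
  ∃ (N : ℕ) (i : X ⟶ Proj (MvPolynomial.homogeneousSubmodule (Fin (N + 1)) k)),
    IsClosedImmersion i ∧
      i ≫ Proj.toSpecZero (MvPolynomial.homogeneousSubmodule (Fin (N + 1)) k) ≫
        Spec.map (CommRingCat.ofHom
          (algebraMap k (MvPolynomial.homogeneousSubmodule (Fin (N + 1)) k 0))) = f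

/-- A line bundle: a sheaf of `𝒪_X`-modules that is locally isomorphic to `𝒪_X`. -/
def IsLineBundle {X : Scheme.{u}} (L : X.Modules) : Prop :=
  ∀ x : X, ∃ U : X.Opens, x ∈ U ∧
    Nonempty (L.restrict U.ι ≅
      (SheafOfModules.unit U.toScheme.ringCatSheaf : U.toScheme.Modules))

/-! A closed subscheme of `X` is given by its (quasi-coherent) ideal sheaf, an element of
`X.IdealSheafData`. Hence the union of subschemes is the infimum `⊓`, `⨅` of ideal sheaves, the
schematic intersection is the supremum `⊔`, and `V` contains `Z` iff `V ≤ Z`. -/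

/-- The closed subscheme with ideal sheaf `H` is an effective Cartier divisor: locally its ideal is
generated by one nonzerodivisor. -/
def IsEffectiveCartier {X : Scheme.{u}} (H : X.IdealSheafData) : Prop :=
  ∀ x : X, ∃ U : X.affineOpens, x ∈ U.1 ∧
    ∃ h ∈ nonZeroDivisors Γ(X, U.1), H.ideal U = Ideal.span {h}

/-- The singular locus of `X`: the points whose local ring is not regular. -/
def singularLocus (X : Scheme.{u}) : Set X :=
  {x | ¬ IsRegularLocalRing (X.presheaf.stalk x)}

/-- The residual `Res_H(W)`: the closed subscheme of `X` with the conductor ideal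
`(𝓘_W : 𝓘_H)`, computed on affine opens. -/
def residualScheme {X : Scheme.{u}} (H W : X.IdealSheafData) : X.IdealSheafData :=
  Scheme.IdealSheafData.ofIdeals fun U => (W.ideal U).colon (H.ideal U : Set Γ(X, U.1))

/-- The trace `Tr_H(W) = H ∩ W`, as a closed subscheme of `H`. -/
def traceScheme {X : Scheme.{u}} (H W : X.IdealSheafData) : H.subscheme.IdealSheafData :=
  W.comap H.subschemeι

/-- Rational points of an `S`-scheme `f : X ⟶ S`; for `S = Spec k` with `k` algebraically closed and
`X` of finite type these are the closed points of `X`. -/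
abbrev RatPoint {X S : Scheme.{u}} (f : X ⟶ S) : Type u :=
  {p : S ⟶ X // p ≫ f = 𝟙 S}

/-- The fat point `P^m`, with ideal sheaf `𝓘_P ^ m`. -/
def fatPoint {X S : Scheme.{u}} (p : S ⟶ X) (m : ℕ) : X.IdealSheafData :=
  p.ker ^ m

/-- The `m`-th simple residue `D_m(z) = z^m ∩ (m - 1)H`, for `m ≥ 1`. -/
def simpleResidue {X S : Scheme.{u}} (H : X.IdealSheafData) (z : S ⟶ X) (m : ℕ) :
    X.IdealSheafData :=
  fatPoint z m ⊔ H ^ (m - 1)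

/-- The `r`-fold fibre power `X ×_S ⋯ ×_S X`. -/
abbrev fibrePower {X S : Scheme.{u}} (f : X ⟶ S) (r : ℕ) : Scheme.{u} :=
  widePullback S (fun _ : Fin r => X) (fun _ => f)

/-- The rational point of the fibre power given by an `r`-tuple of rational points. -/
def tuplePoint {X S : Scheme.{u}} (f : X ⟶ S) {r : ℕ} (p : Fin r → RatPoint f) :
    S ⟶ fibrePower f r :=
  WidePullback.lift (𝟙 S) (fun i => (p i).1) (fun i => (p i).2)

/-- `Φ` holds for generic points `P₁, …, P_r` of the `k`-scheme `X`: it holds for all `r`-tuples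
of rational points that belong to some dense open subset of `X ×_k ⋯ ×_k X`. -/
def ForGeneric {k : Type u} [Field k] {X : Scheme.{u}} (f : X ⟶ Spec (.of k)) (r : ℕ)
    (Φ : (Fin r → RatPoint f) → Prop) : Prop :=
  ∃ U : (fibrePower f r).Opens, Dense (U : Set (fibrePower f r)) ∧
    ∀ p : Fin r → RatPoint f, tuplePoint f p (IsLocalRing.closedPoint k) ∈ U → Φ p

/-- `H⁰(X, 𝓘 ⊗ L)` for an ideal sheaf `𝓘` and a line bundle `L`. Since `L` is invertible, `𝓘 ⊗ L` is
the subsheaf `𝓘 · L` of `L`; its global sections are the global sections of `L` which on every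
affine open `U` lie in `𝓘(U) · L(U)`. -/
def H0 {X : Scheme.{u}} (I : X.IdealSheafData) (L : X.Modules) :
    Submodule Γ(X, ⊤) Γ(L, ⊤) where
  carrier := {s | ∀ U : X.affineOpens, L.presheaf.map (homOfLE (le_top : U.1 ≤ ⊤)).op s ∈
    I.ideal U • (⊤ : Submodule Γ(X, U.1) Γ(L, U.1))}
  add_mem' ha hb U := by
    rw [map_add]
    exact add_mem (ha U) (hb U)
  zero_mem' U := by
    rw [map_zero]
    exact zero_mem _
  smul_mem' c s hs U := by
    rw [Scheme.Modules.map_smul]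
    exact Submodule.smul_mem _ _ (hs U)

/-- `H⁰(X, 𝓘 ⊗ L(-H))` for an ideal sheaf `𝓘`, a line bundle `L` and an effective Cartier divisor
`H`. Here `L(-H) = 𝓘_H ⊗ L`, and since `𝓘_H` and `L` are invertible, `𝓘 ⊗ L(-H)` is the subsheaf
`𝓘 · 𝓘_H · L` of `L`. -/
def H0Twist {X : Scheme.{u}} (I : X.IdealSheafData) (L : X.Modules) (H : X.IdealSheafData) :
    Submodule Γ(X, ⊤) Γ(L, ⊤) :=
  H0 (I * H) L

/-- The restriction `L|_H` of a sheaf of modules to the closed subscheme `H`. -/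
def restrictTo {X : Scheme.{u}} (L : X.Modules) (H : X.IdealSheafData) : H.subscheme.Modules :=
  (Scheme.Modules.pullback H.subschemeι).obj L

end

end DiffHorace

open DiffHorace

namespace DiffHorace

section EtaleCoordinates

variable {σ k A : Type*} [Field k] [CommRing A] [Algebra k A]

/-- The elements `z l` of the `k`-algebra `A` are formally étale coordinates: `A` is formally étale
over the polynomial ring in the variables indexed by `σ`. -/
def IsEtaleCoordinates (k : Type*) [Field k] [Algebra k A] (z : σ → A) : Prop :=
  (MvPolynomial.aeval z : MvPolynomial σ k →ₐ[k] A).toRingHom.FormallyEtale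

namespace IsEtaleCoordinates

variable {z : σ → A} (hz : IsEtaleCoordinates k z)
  {R : Type*} [CommRing R] [Algebra k R]
include hz

theorem exists_lift (I : Ideal R) (hI : IsNilpotent I) (w : σ → R) (γ : A →ₐ[k] R ⧸ I)
    (h : ∀ l, γ (z l) = Ideal.Quotient.mk I (w l)) :
    ∃ γ' : A →ₐ[k] R, (∀ a, Ideal.Quotient.mk I (γ' a) = γ a) ∧ ∀ l, γ' (z l) = w l := by
  let : Algebra (MvPolynomial σ k) A := (MvPolynomial.aeval z).toRingHom.toAlgebra
  let : Algebra (MvPolynomial σ k) R :=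
    (MvPolynomial.aeval w : MvPolynomial σ k →ₐ[k] R).toRingHom.toAlgebra
  have : Algebra.FormallyEtale (MvPolynomial σ k) A := hz
  have hc : ∀ p : MvPolynomial σ k,
      γ (algebraMap _ A p) = algebraMap (MvPolynomial σ k) (R ⧸ I) p := by
    intro p
    have : γ.comp (MvPolynomial.aeval z) =
        (Ideal.Quotient.mkₐ k I).comp (MvPolynomial.aeval w) := by
      ext l
      simp [h]
    exact congr($this p)
  let g : A →ₐ[MvPolynomial σ k] R ⧸ I := { γ.toRingHom with commutes' := hc }
  let g' := Algebra.FormallySmooth.lift I hI g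
  have hg' : ∀ p, g' (MvPolynomial.aeval z p) = MvPolynomial.aeval w p := fun p => g'.commutes p
  refine ⟨{ g'.toRingHom with commutes' := fun c => ?_ }, fun a => ?_, fun l => ?_⟩
  · simp
  · exact Algebra.FormallySmooth.mk_lift I hI g a
  · simpa using hg' (MvPolynomial.X l)

theorem exists_lift_of_isAdicComplete (I : Ideal R) [IsAdicComplete I R] (w : σ → R)
    (γ : A →ₐ[k] R ⧸ I) (h : ∀ l, γ (z l) = Ideal.Quotient.mk I (w l)) :
    ∃ γ' : A →ₐ[k] R, (∀ a, Ideal.Quotient.mk I (γ' a) = γ a) ∧ ∀ l, γ' (z l) = w l := by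
  let : Algebra (MvPolynomial σ k) A := (MvPolynomial.aeval z).toRingHom.toAlgebra
  let : Algebra (MvPolynomial σ k) R :=
    (MvPolynomial.aeval w : MvPolynomial σ k →ₐ[k] R).toRingHom.toAlgebra
  have : Algebra.FormallyEtale (MvPolynomial σ k) A := hz
  have hc : ∀ p : MvPolynomial σ k,
      γ (algebraMap _ A p) = algebraMap (MvPolynomial σ k) (R ⧸ I) p := by
    intro p
    have : γ.comp (MvPolynomial.aeval z) =
        (Ideal.Quotient.mkₐ k I).comp (MvPolynomial.aeval w) := by
      ext l
      simp [h]
    exact congr($this p)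
  let g : A →ₐ[MvPolynomial σ k] R ⧸ I := { γ.toRingHom with commutes' := hc }
  obtain ⟨g', hg⟩ := Algebra.FormallySmooth.exists_mkₐ_comp_eq_of_isAdicComplete g
  have hg' : ∀ p, g' (MvPolynomial.aeval z p) = MvPolynomial.aeval w p := fun p => g'.commutes p
  refine ⟨{ g'.toRingHom with commutes' := fun c => ?_ }, fun a => ?_, fun l => ?_⟩
  · simp
  · exact congr($hg a)
  · simpa using hg' (MvPolynomial.X l)

theorem algHom_ext (I : Ideal R) (hI : IsNilpotent I) (γ γ' : A →ₐ[k] R)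
    (h : ∀ a, Ideal.Quotient.mk I (γ a) = Ideal.Quotient.mk I (γ' a))
    (h' : ∀ l, γ (z l) = γ' (z l)) : γ = γ' := by
  let : Algebra (MvPolynomial σ k) A := (MvPolynomial.aeval z).toRingHom.toAlgebra
  let : Algebra (MvPolynomial σ k) R :=
    (MvPolynomial.aeval (fun l => γ (z l)) : MvPolynomial σ k →ₐ[k] R).toRingHom.toAlgebra
  have : Algebra.FormallyEtale (MvPolynomial σ k) A := hz
  have key : ∀ γ'' : A →ₐ[k] R, (∀ l, γ'' (z l) = γ (z l)) → ∀ p : MvPolynomial σ k,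
      γ'' (algebraMap _ A p) = algebraMap (MvPolynomial σ k) R p := by
    intro γ'' h p
    have : γ''.comp (MvPolynomial.aeval z) = MvPolynomial.aeval (fun l => γ (z l)) := by
      ext l
      simp [h]
    exact congr($this p)
  let g : A →ₐ[MvPolynomial σ k] R := { γ.toRingHom with commutes' := key γ fun _ => rfl }
  let g' : A →ₐ[MvPolynomial σ k] R :=
    { γ'.toRingHom with commutes' := key γ' fun l => (h' l).symm }
  have := Algebra.FormallyUnramified.ext I hI (g₁ := g) (g₂ := g') h
  ext a
  exact congr($this a)

end IsEtaleCoordinates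

end EtaleCoordinates

section TruncatedPolynomials

variable (σ R : Type*) [CommRing R] (m : ℕ)

/-- Polynomials in the variables `σ` modulo those of order at least `m`. -/
abbrev TruncPoly : Type _ := MvPolynomial σ R ⧸ MvPolynomial.idealOfVars σ R ^ m

namespace TruncPoly

variable {σ R m}

/-- The coefficient of a truncated polynomial at a monomial of degree less than `m`. -/
noncomputable def coeff (α : σ →₀ ℕ) (hα : α.degree < m) : TruncPoly σ R m →ₗ[R] R :=
  Submodule.liftQ ((MvPolynomial.idealOfVars σ R ^ m).restrictScalars R) (MvPolynomial.lcoeff R α)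
    fun p hp => by
      simpa using (MvPolynomial.mem_pow_idealOfVars_iff' m p).1 hp α hα

theorem coeff_mk (α : σ →₀ ℕ) (hα : α.degree < m) (p : MvPolynomial σ R) :
    coeff α hα (Ideal.Quotient.mk (MvPolynomial.idealOfVars σ R ^ m) p) = MvPolynomial.coeff α p :=
  rfl

theorem eq_zero_of_coeff (p : TruncPoly σ R m)
    (h : ∀ (α : σ →₀ ℕ) (hα : α.degree < m), coeff α hα p = 0) : p = 0 := by
  obtain ⟨p, rfl⟩ := Ideal.Quotient.mk_surjective p
  rw [Ideal.Quotient.eq_zero_iff_mem, MvPolynomial.mem_pow_idealOfVars_iff']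
  exact h

theorem eq_zero_of_smul_eq_zero [IsDomain R] {a : R} (ha : a ≠ 0) (p : TruncPoly σ R m)
    (h : a • p = 0) : p = 0 := by
  refine eq_zero_of_coeff p fun α hα => ?_
  have : a * coeff α hα p = 0 := by rw [← smul_eq_mul, ← map_smul, h, map_zero]
  exact (mul_eq_zero.1 this).resolve_left ha

end TruncPoly

end TruncatedPolynomials

namespace TruncPoly

variable {σ R : Type*} [CommRing R] {m : ℕ}

variable (σ R m) in
/-- The ideal of truncated polynomials without constant term. -/
noncomputable def augIdeal : Ideal (TruncPoly σ R m) :=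
  (MvPolynomial.idealOfVars σ R).map (Ideal.Quotient.mk (MvPolynomial.idealOfVars σ R ^ m))

/-- The class of the variable `X l`. -/
noncomputable def var (l : σ) : TruncPoly σ R m :=
  Ideal.Quotient.mk (MvPolynomial.idealOfVars σ R ^ m) (MvPolynomial.X l)

theorem augIdeal_pow : augIdeal σ R m ^ m = ⊥ := by
  rw [augIdeal, ← Ideal.map_pow, Ideal.map_quotient_self]

theorem var_mem_augIdeal (l : σ) : (var l : TruncPoly σ R m) ∈ augIdeal σ R m :=
  Ideal.mem_map_of_mem _ (Ideal.subset_span ⟨l, rfl⟩)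

theorem var_pow (l : σ) : (var l : TruncPoly σ R m) ^ m = 0 := by
  have := Ideal.pow_mem_pow (var_mem_augIdeal (R := R) (m := m) l) m
  rwa [augIdeal_pow, Ideal.mem_bot] at this

section Lift

variable {k : Type*} [CommRing k] [Algebra k R] {S : Type*} [CommRing S] [Algebra k S]

/-- The morphism of truncated polynomial algebras given by a homomorphism of coefficients. -/
noncomputable def map (ψ : R →ₐ[k] S) : TruncPoly σ R m →ₐ[k] TruncPoly σ S m :=
  Ideal.Quotient.liftₐ _ ((Ideal.Quotient.mkₐ k _).comp (MvPolynomial.mapAlgHom ψ)) (by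
    intro p hp
    refine Ideal.Quotient.eq_zero_iff_mem.2 ?_
    rw [MvPolynomial.mem_pow_idealOfVars_iff'] at hp ⊢
    intro α hα
    simp [MvPolynomial.coeff_map, hp α hα])

theorem map_mk (ψ : R →ₐ[k] S) (p : MvPolynomial σ R) :
    map (m := m) ψ (Ideal.Quotient.mk _ p) =
      Ideal.Quotient.mk _ (MvPolynomial.map (ψ : R →+* S) p) :=
  rfl

theorem map_var (ψ : R →ₐ[k] S) (l : σ) : map (m := m) ψ (var l) = var l := by
  rw [var, map_mk, MvPolynomial.map_X, var]

theorem map_algebraMap (ψ : R →ₐ[k] S) (a : R) :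
    map (m := m) ψ (algebraMap R (TruncPoly σ R m) a) = algebraMap S _ (ψ a) := by
  change map ψ (Ideal.Quotient.mk _ (MvPolynomial.C a)) = Ideal.Quotient.mk _ (MvPolynomial.C _)
  rw [map_mk, MvPolynomial.map_C]
  rfl

theorem coeff_map (ψ : R →ₐ[k] S) (p : TruncPoly σ R m) (α : σ →₀ ℕ) (hα : α.degree < m) :
    coeff α hα (map ψ p) = ψ (coeff α hα p) := by
  obtain ⟨p, rfl⟩ := Ideal.Quotient.mk_surjective p
  rw [map_mk, coeff_mk, coeff_mk, MvPolynomial.coeff_map]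
  rfl

theorem map_mem_augIdeal (ψ : R →ₐ[k] S) {p : TruncPoly σ R m} (hp : p ∈ augIdeal σ R m) :
    map ψ p ∈ augIdeal σ S m := by
  have : augIdeal σ R m ≤ (augIdeal σ S m).comap (map ψ) := by
    rw [augIdeal, Ideal.map_span, Ideal.span_le]
    rintro _ ⟨_, ⟨l, rfl⟩, rfl⟩
    change map ψ (var l) ∈ augIdeal σ S m
    rw [map_var]
    exact var_mem_augIdeal l
  exact this hp

end Lift

end TruncPoly

section Taylor

variable {σ k A : Type*} [Field k] [CommRing A] [Algebra k A] {z : σ → A}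
  {R : Type*} [CommRing R] [Algebra k R] {m : ℕ}

/-- `T` is the Taylor expansion of order `m` along the point `γ : A →ₐ[k] R`, with respect to the
coordinates `z`. -/
structure IsTaylor (z : σ → A) (γ : A →ₐ[k] R) (T : A →ₐ[k] TruncPoly σ R m) : Prop where
  sub_mem : ∀ a, T a - algebraMap R _ (γ a) ∈ TruncPoly.augIdeal σ R m
  coord : ∀ l, T (z l) = algebraMap R _ (γ (z l)) + TruncPoly.var l

theorem IsEtaleCoordinates.exists_isTaylor (hz : IsEtaleCoordinates k z) (γ : A →ₐ[k] R) (m : ℕ) :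
    ∃ T : A →ₐ[k] TruncPoly σ R m, IsTaylor z γ T := by
  have hI : IsNilpotent (TruncPoly.augIdeal σ R m) := ⟨m, TruncPoly.augIdeal_pow⟩
  obtain ⟨T, h1, h2⟩ := hz.exists_lift (TruncPoly.augIdeal σ R m) hI
    (fun l => algebraMap R _ (γ (z l)) + TruncPoly.var l)
    ((Ideal.Quotient.mkₐ k (TruncPoly.augIdeal σ R m)).comp
      ((IsScalarTower.toAlgHom k R (TruncPoly σ R m)).comp γ)) (fun l => by
        rw [map_add, Ideal.Quotient.eq_zero_iff_mem.2 (TruncPoly.var_mem_augIdeal l), add_zero]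
        rfl)
  refine ⟨T, fun a => ?_, h2⟩
  rw [← Ideal.Quotient.eq, h1]
  rfl

namespace IsTaylor

variable {γ : A →ₐ[k] R} {T : A →ₐ[k] TruncPoly σ R m} (hT : IsTaylor z γ T)
include hT

theorem map {S : Type*} [CommRing S] [Algebra k S] (ψ : R →ₐ[k] S) :
    IsTaylor z (ψ.comp γ) ((TruncPoly.map ψ).comp T) where
  sub_mem a := by
    have := TruncPoly.map_mem_augIdeal ψ (hT.sub_mem a)
    rwa [map_sub, TruncPoly.map_algebraMap] at this
  coord l := by
    rw [AlgHom.comp_apply, hT.coord, map_add, TruncPoly.map_algebraMap, TruncPoly.map_var]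
    rfl

theorem eq_zero_of_mem_ker_pow {a : A} (ha : a ∈ RingHom.ker γ ^ m) : T a = 0 := by
  have h1 : RingHom.ker γ ≤ (TruncPoly.augIdeal σ R m).comap T := by
    intro a ha
    have := hT.sub_mem a
    rwa [(RingHom.mem_ker).1 ha, map_zero, sub_zero] at this
  have h2 : a ∈ ((TruncPoly.augIdeal σ R m) ^ m).comap T :=
    (Ideal.le_comap_pow T m) (Ideal.pow_right_mono h1 m ha)
  rwa [TruncPoly.augIdeal_pow] at h2

end IsTaylor

/-- The comparison of truncated polynomials with the functions modulo the `m`-th power of the ideal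
of a rational point. -/
theorem IsEtaleCoordinates.exists_comparison (hz : IsEtaleCoordinates k z) (Q : A →ₐ[k] k)
    {T : A →ₐ[k] TruncPoly σ k m} (hT : IsTaylor z Q T) :
    ∃ θ : TruncPoly σ k m →ₐ[k] A ⧸ RingHom.ker Q ^ m,
      (∀ p : MvPolynomial σ k, θ (Ideal.Quotient.mk _ p) = Ideal.Quotient.mk _
        (MvPolynomial.aeval (fun l => z l - algebraMap k A (Q (z l))) p)) ∧
      ∀ a, θ (T a) = Ideal.Quotient.mk _ a := by
  let K : Ideal A := RingHom.ker Q
  let ψ : MvPolynomial σ k →ₐ[k] A := MvPolynomial.aeval fun l => z l - algebraMap k A (Q (z l))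
  have hψ : MvPolynomial.idealOfVars σ k ≤ K.comap ψ := by
    rw [MvPolynomial.idealOfVars, Ideal.span_le]
    rintro _ ⟨l, rfl⟩
    simp [ψ, K, RingHom.mem_ker]
  have hψm : MvPolynomial.idealOfVars σ k ^ m ≤ (K ^ m).comap ψ :=
    (Ideal.pow_right_mono hψ m).trans (Ideal.le_comap_pow ψ m)
  let θ : TruncPoly σ k m →ₐ[k] A ⧸ K ^ m :=
    Ideal.Quotient.liftₐ _ ((Ideal.Quotient.mkₐ k (K ^ m)).comp ψ)
      fun p hp => Ideal.Quotient.eq_zero_iff_mem.2 (hψm hp)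
  have hθ : ∀ p, θ (Ideal.Quotient.mk _ p) = Ideal.Quotient.mk (K ^ m) (ψ p) := fun _ => rfl
  refine ⟨θ, hθ, fun a => ?_⟩
  let I : Ideal (A ⧸ K ^ m) := K.map (Ideal.Quotient.mk (K ^ m))
  have hI : IsNilpotent I := ⟨m, by
    rw [← Ideal.map_pow, Ideal.map_quotient_self]; rfl⟩
  have haug : TruncPoly.augIdeal σ k m ≤ I.comap θ := by
    rw [TruncPoly.augIdeal, Ideal.map_le_iff_le_comap]
    intro p hp
    exact Ideal.mem_map_of_mem _ (hψ hp)
  have key : θ.comp T = Ideal.Quotient.mkₐ k (K ^ m) := by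
    refine hz.algHom_ext I hI _ _ (fun a => ?_) fun l => ?_
    · have h1 := haug (hT.sub_mem a)
      rw [Ideal.mem_comap, map_sub] at h1
      have h2 : Ideal.Quotient.mk (K ^ m) (a - algebraMap k A (Q a)) ∈ I :=
        Ideal.mem_map_of_mem _ (by simp [K, RingHom.mem_ker])
      rw [Ideal.Quotient.eq]
      have h3 : θ (algebraMap k _ (Q a)) = Ideal.Quotient.mk (K ^ m) (algebraMap k A (Q a)) :=
        θ.commutes _
      rw [h3] at h1
      have := I.sub_mem h1 h2
      simpa using this
    · have h3 : θ (algebraMap k _ (Q (z l))) =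
          Ideal.Quotient.mk (K ^ m) (algebraMap k A (Q (z l))) :=
        θ.commutes _
      rw [AlgHom.comp_apply, hT.coord, map_add, h3, TruncPoly.var, hθ]
      simp [ψ]
  exact congr($key a)

end Taylor

section Points

open scoped TensorProduct

variable {k : Type u} [Field k] [IsAlgClosed k]

theorem exists_algHom_apply_ne_zero {A : Type*} [CommRing A] [IsReduced A] [Algebra k A]
    [Algebra.FiniteType k A] {a : A} (ha : a ≠ 0) : ∃ P : A →ₐ[k] k, P a ≠ 0 := by
  have hnt : Nontrivial (Localization.Away a) := by
    rw [← not_subsingleton_iff_nontrivial, IsLocalization.subsingleton_iff (M := .powers a)]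
    rintro ⟨n, hn⟩
    exact ha (pow_eq_zero_iff n.succ_ne_zero |>.1 (by
      rw [pow_succ, show a ^ n = 0 from hn, zero_mul]))
  have : Algebra.FiniteType A (Localization.Away a) :=
    IsLocalization.finiteType_of_monoid_fg (.powers a) _
  have : Algebra.FiniteType k (Localization.Away a) := .trans (S := A) inferInstance inferInstance
  obtain ⟨M, hM⟩ := Ideal.exists_maximal (Localization.Away a)
  let := Ideal.Quotient.field M
  have : Module.Finite k (Localization.Away a ⧸ M) :=
    finite_of_finite_type_of_isJacobsonRing k _
  have : Algebra.IsAlgebraic k (Localization.Away a ⧸ M) := inferInstance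
  let e : (Localization.Away a ⧸ M) →ₐ[k] k := IsAlgClosed.lift
  refine ⟨(e.comp (Ideal.Quotient.mkₐ k M)).comp (IsScalarTower.toAlgHom k A _), ?_⟩
  have hu : IsUnit (algebraMap A (Localization.Away a) a) :=
    IsLocalization.map_units _ (⟨a, Submonoid.mem_powers a⟩ : Submonoid.powers a)
  exact (hu.map (e.comp (Ideal.Quotient.mkₐ k M))).ne_zero

theorem isDomain_tensorProduct (A B : Type*) [CommRing A] [IsDomain A] [Algebra k A]
    [Algebra.FiniteType k A] [CommRing B] [IsDomain B] [Algebra k B] : IsDomain (A ⊗[k] B) := by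
  let b := Module.Basis.ofVectorSpace k B
  let bA := Algebra.TensorProduct.basis A b
  let ev (P : A →ₐ[k] k) : A ⊗[k] B →ₐ[k] B :=
    Algebra.TensorProduct.lift ((Algebra.ofId k B).comp P) (AlgHom.id k B) fun _ _ => .all _ _
  have hev : ∀ (P : A →ₐ[k] k) (x : A ⊗[k] B) i, b.repr (ev P x) i = P (bA.repr x i) := by
    intro P x i
    induction x using TensorProduct.induction_on with
    | zero => simp
    | tmul a c =>
      simp only [ev, bA, Algebra.TensorProduct.lift_tmul, AlgHom.comp_apply, AlgHom.id_apply,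
        Algebra.TensorProduct.basis_repr_tmul, Algebra.ofId_apply, Finsupp.smul_apply,
        Finsupp.mapRange_apply, smul_eq_mul, map_mul, AlgHom.commutes]
      rw [← Algebra.smul_def, map_smul]
      simp
    | add x y hx hy => simp [hx, hy]
  have hnz : ∀ x : A ⊗[k] B, x ≠ 0 → ∃ i, bA.repr x i ≠ 0 := by
    intro x hx
    by_contra! h
    exact hx (bA.repr.map_eq_zero_iff.1 (Finsupp.ext h))
  have : Nontrivial (A ⊗[k] B) := by
    obtain ⟨P, -⟩ := exists_algHom_apply_ne_zero (k := k) (one_ne_zero (α := A))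
    exact (ev P).toRingHom.domain_nontrivial
  refine @NoZeroDivisors.to_isDomain _ _ this ⟨fun {x y} hxy => ?_⟩
  by_contra! h
  obtain ⟨i, hi⟩ := hnz x h.1
  obtain ⟨j, hj⟩ := hnz y h.2
  obtain ⟨P, hP⟩ := exists_algHom_apply_ne_zero (k := k) (mul_ne_zero hi hj)
  rw [map_mul, ← hev, ← hev] at hP
  have h0 : ev P x * ev P y = 0 := by rw [← map_mul, hxy, map_zero]
  rcases mul_eq_zero.1 h0 with h | h <;> simp [h] at hP

/-- A tensor power of a finitely generated domain over an algebraically closed field, described by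
its universal property. -/
theorem exists_tensorPower (A : Type u) [CommRing A] [IsDomain A] [Algebra k A]
    [Algebra.FiniteType k A] (r : ℕ) :
    ∃ (B : Type u) (_ : CommRing B) (_ : IsDomain B) (_ : Algebra k B) (_ : Algebra.FiniteType k B)
      (ι : Fin r → A →ₐ[k] B),
      (∀ (C : Type u) [CommRing C] [Algebra k C] (φ : Fin r → A →ₐ[k] C),
        ∃ ψ : B →ₐ[k] C, ∀ i, ψ.comp (ι i) = φ i) ∧
      ⨆ i, (ι i).range = ⊤ := by
  induction r with
  | zero =>
    refine ⟨k, inferInstance, inferInstance, inferInstance, inferInstance, Fin.elim0,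
      fun C _ _ _ => ⟨Algebra.ofId k C, fun i => i.elim0⟩, ?_⟩
    simp only [iSup_of_empty]
    exact Subsingleton.elim _ _
  | succ r ih =>
    obtain ⟨B, _, _, _, _, ι, h1, h2⟩ := ih
    refine ⟨A ⊗[k] B, inferInstance, isDomain_tensorProduct A B, inferInstance,
      .trans (S := A) inferInstance inferInstance,
      Fin.cons (Algebra.TensorProduct.includeLeft) (fun i =>
        (Algebra.TensorProduct.includeRight).comp (ι i)), fun C _ _ φ => ?_, ?_⟩
    · obtain ⟨ψ, hψ⟩ := h1 C (fun i => φ i.succ)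
      refine ⟨Algebra.TensorProduct.lift (φ 0) ψ fun _ _ => .all _ _, Fin.cases ?_ fun i => ?_⟩
      · simp
      · rw [← hψ i]
        ext
        simp
    · rw [Algebra.eq_top_iff]
      intro x
      induction x using TensorProduct.induction_on with
      | zero => exact zero_mem _
      | add x y hx hy => exact add_mem hx hy
      | tmul a b =>
        rw [show a ⊗ₜ[k] b = (a ⊗ₜ 1) * (1 ⊗ₜ b) by simp]
        refine mul_mem ?_ ?_
        · exact le_iSup (fun i : Fin (r + 1) => ((Fin.cons
            Algebra.TensorProduct.includeLeft fun i =>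
              Algebra.TensorProduct.includeRight.comp (ι i) :
                Fin (r + 1) → A →ₐ[k] A ⊗[k] B) i).range) 0 ⟨a, rfl⟩
        · have hle : ⨆ i, (ι i).range ≤ Subalgebra.comap
              (Algebra.TensorProduct.includeRight : B →ₐ[k] A ⊗[k] B)
              (⨆ i : Fin (r + 1), ((Fin.cons
            Algebra.TensorProduct.includeLeft fun i =>
                Algebra.TensorProduct.includeRight.comp (ι i) :
                  Fin (r + 1) → A →ₐ[k] A ⊗[k] B) i).range) := by
            refine iSup_le fun i => ?_
            rintro _ ⟨a, rfl⟩
            exact le_iSup (fun i : Fin (r + 1) => ((Fin.cons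
            Algebra.TensorProduct.includeLeft fun i =>
              Algebra.TensorProduct.includeRight.comp (ι i) :
                Fin (r + 1) → A →ₐ[k] A ⊗[k] B) i).range) i.succ ⟨a, rfl⟩
          rw [h2] at hle
          exact hle (Algebra.mem_top (x := b))

end Points

section Curves

variable {k : Type u} [Field k]

theorem coeff_aeval_monomial_curve {τ : Type*} (w : τ → ℕ) (c : τ → k) (p : MvPolynomial τ k)
    (d : ℕ) :
    PowerSeries.coeff d (MvPolynomial.aeval
      (fun l => PowerSeries.C (c l) * (PowerSeries.X : PowerSeries k) ^ w l) p) =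
    MvPolynomial.eval c (MvPolynomial.weightedHomogeneousComponent w d p) := by
  induction p using MvPolynomial.induction_on' with
  | add p q hp hq => simp [hp, hq]
  | monomial α a =>
    have h1 : (MvPolynomial.aeval
        (fun l => PowerSeries.C (c l) * (PowerSeries.X : PowerSeries k) ^ w l))
          (MvPolynomial.monomial α a) =
        PowerSeries.C (a * α.prod fun l n => c l ^ n) * PowerSeries.X ^ (Finsupp.weight w α) := by
      rw [MvPolynomial.aeval_monomial, map_mul, map_finsuppProd]
      simp only [mul_pow, Finsupp.prod_mul, map_pow, ← pow_mul]
      rw [mul_assoc]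
      congr 2
      rw [Finsupp.prod, Finset.prod_pow_eq_pow_sum, Finsupp.weight_apply, Finsupp.sum]
      simp [mul_comm]
    rw [h1, MvPolynomial.weightedHomogeneousComponent_apply, PowerSeries.coeff_C_mul,
      PowerSeries.coeff_X_pow]
    classical
    by_cases ha : a = 0
    · simp [ha]
    rw [MvPolynomial.support_monomial, if_neg ha, Finset.filter_singleton]
    by_cases hd : d = Finsupp.weight w α
    · simp [hd, MvPolynomial.eval_monomial]
    · simp [hd, Ne.symm hd]

theorem exists_eval_weightedHomogeneousComponent_ne_zero [Infinite k] {τ : Type*}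
    (w : τ → ℕ) (p : MvPolynomial τ k) (α : τ →₀ ℕ) (hα : p.coeff α ≠ 0) (s : Finset τ) :
    ∃ c : τ → k, (∀ l ∈ s, c l ≠ 0) ∧
      MvPolynomial.eval c (MvPolynomial.weightedHomogeneousComponent w (Finsupp.weight w α) p) ≠
        0 := by
  have h1 : MvPolynomial.weightedHomogeneousComponent w (Finsupp.weight w α) p ≠ 0 := by
    intro h
    apply hα
    have := congr(MvPolynomial.coeff α $h)
    classical
    rwa [MvPolynomial.coeff_weightedHomogeneousComponent, if_pos rfl] at this
  have h2 : (∏ l ∈ s, MvPolynomial.X l : MvPolynomial τ k) ≠ 0 :=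
    Finset.prod_ne_zero_iff.2 fun l _ => MvPolynomial.X_ne_zero l
  have h3 := mul_ne_zero h2 h1
  obtain ⟨c, hc⟩ : ∃ c : τ → k, MvPolynomial.eval c ((∏ l ∈ s, MvPolynomial.X l) *
      MvPolynomial.weightedHomogeneousComponent w (Finsupp.weight w α) p) ≠ 0 := by
    by_contra! h
    exact h3 (MvPolynomial.funext fun c => by simp [h c])
  rw [map_mul, map_prod] at hc
  refine ⟨c, fun l hl h => hc ?_, fun h => hc ?_⟩
  · rw [Finset.prod_eq_zero hl (by simpa using h), zero_mul]
  · rw [h, mul_zero]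

variable {σ : Type*} {A : Type u} [CommRing A] [Algebra k A] {z : σ → A}

theorem IsEtaleCoordinates.exists_polynomial_sub_mem (hz : IsEtaleCoordinates k z)
    (Q : A →ₐ[k] k) (N : ℕ) (a : A) :
    ∃ p : MvPolynomial σ k,
      a - MvPolynomial.aeval (fun l => z l - algebraMap k A (Q (z l))) p ∈ RingHom.ker Q ^ N := by
  obtain ⟨T, hT⟩ := hz.exists_isTaylor Q N
  obtain ⟨θ, h1, h2⟩ := hz.exists_comparison Q hT
  obtain ⟨p, hp⟩ := Ideal.Quotient.mk_surjective (T a)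
  refine ⟨p, ?_⟩
  rw [← Ideal.Quotient.eq, ← h1, hp, h2]

theorem IsEtaleCoordinates.exists_curve (hz : IsEtaleCoordinates k z) (Q : A →ₐ[k] k)
    (w : σ → PowerSeries k) (hw : ∀ l, PowerSeries.constantCoeff (w l) = Q (z l)) :
    ∃ γ : A →ₐ[k] PowerSeries k, (∀ a, PowerSeries.constantCoeff (γ a) = Q a) ∧
      ∀ l, γ (z l) = w l := by
  let I : Ideal (PowerSeries k) := .span {PowerSeries.X}
  have hI : ∀ f : PowerSeries k, f ∈ I ↔ PowerSeries.constantCoeff f = 0 := fun f => by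
    rw [Ideal.mem_span_singleton, PowerSeries.X_dvd_iff]
  obtain ⟨γ, h1, h2⟩ := hz.exists_lift_of_isAdicComplete I w
    (((Ideal.Quotient.mkₐ k I).comp (Algebra.ofId k _)).comp Q) (fun l => by
      change Ideal.Quotient.mk I (algebraMap k _ (Q (z l))) = _
      rw [Ideal.Quotient.eq, hI, map_sub, hw]
      simp)
  refine ⟨γ, fun a => ?_, h2⟩
  have : Ideal.Quotient.mk I (γ a) = Ideal.Quotient.mk I (algebraMap k _ (Q a)) := h1 a
  rw [Ideal.Quotient.eq, hI, map_sub, sub_eq_zero] at this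
  rw [this]
  simp

/-- A tuple of formal arcs through prescribed points along which a given nonzero function on the
product does not vanish. -/
theorem IsEtaleCoordinates.exists_arcs [IsAlgClosed k] (hz : IsEtaleCoordinates k z) {r : ℕ}
    {B : Type u} [CommRing B] [IsDomain B] [Algebra k B] [Algebra.FiniteType k B]
    (ι : Fin r → A →ₐ[k] B)
    (hι : ∀ (C : Type u) [CommRing C] [Algebra k C] (φ : Fin r → A →ₐ[k] C),
        ∃ ψ : B →ₐ[k] C, ∀ i, ψ.comp (ι i) = φ i)
    (hgen : ⨆ i, (ι i).range = ⊤)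
    (Q : Fin r → A →ₐ[k] k) (e : Fin r → ℕ) (he : ∀ i, 0 < e i) (o : σ) {b : B} (hb : b ≠ 0) :
    ∃ (γ : B →ₐ[k] PowerSeries k) (c : Fin r → k), (∀ i, c i ≠ 0) ∧
      (∀ i, γ (ι i (z o)) = PowerSeries.C (Q i (z o)) + PowerSeries.C (c i) * PowerSeries.X ^ e i) ∧
      (∀ i a, PowerSeries.constantCoeff (γ (ι i a)) = Q i a) ∧ γ b ≠ 0 := by
  obtain ⟨ev, hev⟩ := hι k Q
  have hev' : ∀ i a, ev (ι i a) = Q i a := fun i a => congr($(hev i) a)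
  let 𝔪 : Ideal B := RingHom.ker ev
  have hB : IsNoetherianRing B := Algebra.FiniteType.isNoetherianRing k B
  have h𝔪 : 𝔪 ≠ ⊤ := RingHom.ker_ne_top _
  obtain ⟨M, hM⟩ : ∃ M, b ∉ 𝔪 ^ M := by
    by_contra! h
    have : b ∈ ⨅ i, 𝔪 ^ i := by simpa [Submodule.mem_iInf] using h
    rw [Ideal.iInf_pow_eq_bot_of_isDomain 𝔪 h𝔪] at this
    exact hb this
  let zt : Fin r × σ → B := fun l => ι l.1 (z l.2) - algebraMap k B (Q l.1 (z l.2))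
  have hzt : ∀ l, zt l ∈ 𝔪 := fun l => by simp [zt, 𝔪, RingHom.mem_ker, hev']
  have happrox : ∀ (N : ℕ) (b : B), ∃ p : MvPolynomial (Fin r × σ) k,
      b - MvPolynomial.aeval zt p ∈ 𝔪 ^ N := by
    intro N
    let S : Subalgebra k B := Subalgebra.comap (Ideal.Quotient.mkₐ k (𝔪 ^ N))
      ((Ideal.Quotient.mkₐ k (𝔪 ^ N)).comp (MvPolynomial.aeval zt)).range
    have hS : ⨆ i, (ι i).range ≤ S := by
      refine iSup_le fun i => ?_
      rintro _ ⟨a, rfl⟩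
      obtain ⟨p, hp⟩ := hz.exists_polynomial_sub_mem (Q i) N a
      refine ⟨MvPolynomial.rename (fun l => (i, l)) p, ?_⟩
      have hle : RingHom.ker (Q i) ≤ 𝔪.comap (ι i) := fun a ha => by
        simpa [𝔪, RingHom.mem_ker, hev'] using ha
      have := (Ideal.pow_right_mono hle N).trans (Ideal.le_comap_pow (ι i) N) hp
      rw [Ideal.mem_comap, map_sub] at this
      refine Eq.symm (Ideal.Quotient.eq.2 ?_)
      have h : MvPolynomial.aeval zt (MvPolynomial.rename (fun l => (i, l)) p) =
          ι i (MvPolynomial.aeval (fun l => z l - algebraMap k A (Q i (z l))) p) := ?_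
      · rw [← h] at this
        exact this
      rw [MvPolynomial.aeval_rename, ← AlgHom.comp_apply, MvPolynomial.comp_aeval]
      congr 2
      ext l
      simp [zt]
    rw [hgen] at hS
    intro b
    obtain ⟨p, hp⟩ := hS (Algebra.mem_top (x := b))
    exact ⟨p, Ideal.Quotient.eq.1 hp.symm⟩
  let E := ∑ i, e i
  let w : Fin r × σ → ℕ := fun l => e l.1
  obtain ⟨p, hp⟩ := happrox (M + M * E) b
  obtain ⟨α, hα, hpα⟩ : ∃ α : (Fin r × σ) →₀ ℕ, α.degree < M ∧ p.coeff α ≠ 0 := by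
    by_contra! h
    rw [← MvPolynomial.mem_pow_idealOfVars_iff'] at h
    have hle : MvPolynomial.idealOfVars (Fin r × σ) k ≤
        𝔪.comap (MvPolynomial.aeval zt : _ →ₐ[k] B) := by
      rw [MvPolynomial.idealOfVars, Ideal.span_le]
      rintro _ ⟨l, rfl⟩
      simpa using hzt l
    have h1 := (Ideal.pow_right_mono hle M).trans (Ideal.le_comap_pow _ M) h
    rw [Ideal.mem_comap] at h1
    have h2 := add_mem (Ideal.pow_le_pow_right (Nat.le_add_right M (M * E)) hp) h1
    rw [sub_add_cancel] at h2
    exact hM h2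
  have hd : Finsupp.weight w α < M + M * E := by
    have : Finsupp.weight w α ≤ α.degree * E := by
      rw [Finsupp.weight_apply, Finsupp.sum, Finsupp.degree_apply, Finset.sum_mul]
      refine Finset.sum_le_sum fun l _ => ?_
      exact Nat.mul_le_mul_left _
        (Finset.single_le_sum (f := e) (fun _ _ => Nat.zero_le _) (Finset.mem_univ l.1))
    have h2 : α.degree * E ≤ M * E := Nat.mul_le_mul_right _ hα.le
    omega
  have : Infinite k := IsAlgClosed.instInfinite
  obtain ⟨c, hc, hpc⟩ := exists_eval_weightedHomogeneousComponent_ne_zero w p α hpα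
    (Finset.univ.map ⟨fun i : Fin r => (i, o), fun i j h => by simpa using h⟩)
  have hcurve := fun i => hz.exists_curve (Q i)
    (fun l => PowerSeries.C (Q i (z l)) + PowerSeries.C (c (i, l)) * PowerSeries.X ^ e i)
    (fun l => by simp [(he i).ne'])
  choose γ hγ hγz using hcurve
  obtain ⟨Γ, hΓ⟩ := hι (PowerSeries k) γ
  have hΓ' : ∀ i a, Γ (ι i a) = γ i a := fun i a => congr($(hΓ i) a)
  refine ⟨Γ, fun i => c (i, o), fun i => hc _ (Finset.mem_map.2 ⟨i, Finset.mem_univ i, rfl⟩),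
    fun i => ?_, fun i a => ?_, ?_⟩
  · rw [hΓ', hγz]
  · rw [hΓ', hγ]
  have hconst : ∀ b, PowerSeries.constantCoeff (Γ b) = ev b := by
    let c0 : PowerSeries k →ₐ[k] k :=
      { PowerSeries.constantCoeff with commutes' := fun a => by simp }
    have hle : ⨆ i, (ι i).range ≤ AlgHom.equalizer (c0.comp Γ) ev := by
      refine iSup_le fun i => ?_
      rintro _ ⟨a, rfl⟩
      change PowerSeries.constantCoeff (Γ (ι i a)) = ev (ι i a)
      rw [hΓ', hγ, hev']
    rw [hgen] at hle
    exact fun b => hle (Algebra.mem_top (x := b))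
  have hX : 𝔪 ≤ (Ideal.span {PowerSeries.X}).comap Γ := fun b hb => by
    rw [Ideal.mem_comap, Ideal.mem_span_singleton, PowerSeries.X_dvd_iff, hconst]
    exact hb
  have h1 := (Ideal.pow_right_mono hX _).trans (Ideal.le_comap_pow _ _) hp
  rw [Ideal.mem_comap, Ideal.span_singleton_pow, Ideal.mem_span_singleton,
    PowerSeries.X_pow_dvd_iff] at h1
  have h2 := h1 _ hd
  rw [map_sub, map_sub, sub_eq_zero, ← AlgHom.comp_apply, MvPolynomial.comp_aeval] at h2
  have h3 : (fun l => Γ (zt l)) =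
      fun l => PowerSeries.C (c l) * (PowerSeries.X : PowerSeries k) ^ w l := by
    ext1 l
    simp only [zt, map_sub, hΓ', hγz, AlgHom.commutes]
    simp [w]
  rw [h3, coeff_aeval_monomial_curve] at h2
  intro h
  rw [h, map_zero] at h2
  exact hpc h2.symm

end Curves

section Degeneration

theorem TruncPoly.eq_zero_of_algebraMap_mul {σ R : Type*} [CommRing R] [IsDomain R] {m : ℕ} {a : R}
    (ha : a ≠ 0) (p : TruncPoly σ R m) (h : algebraMap R _ a * p = 0) : p = 0 :=
  TruncPoly.eq_zero_of_smul_eq_zero ha p ((Algebra.smul_def a p).trans h)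

variable {k : Type u} [Field k]

/-- Evaluation of the constant coefficient, as a homomorphism of algebras. -/
noncomputable def constCoeffAlgHom : PowerSeries k →ₐ[k] k :=
  { PowerSeries.constantCoeff with commutes' := fun a => by simp }

variable {σ : Type*} {A : Type u} [CommRing A] [Algebra k A] {z : σ → A} {m : ℕ}

open PowerSeries in
/-- If `X_o + τ = T (z o)`, substituting `X_o = -τ` gives a point of the divisor `z o = 0` close to
the given arc. -/
theorem exists_divisorial_arc (o : σ) (Q : A →ₐ[k] k) (γ : A →ₐ[k] PowerSeries k)
    {c : k} {e N : ℕ} (he : 0 < e) (hN : e * m = N)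
    (hγ : ∀ a, constantCoeff (γ a) = Q a) (hγo : γ (z o) = C c * X ^ e)
    {T : A →ₐ[k] TruncPoly σ (PowerSeries k) m} (hT : IsTaylor z γ T) :
    ∃ (S : Type u) (_ : CommRing S) (_ : Algebra (PowerSeries k) S)
      (ε : TruncPoly σ (PowerSeries k) m →+* S),
      (∀ f : PowerSeries k, ε (algebraMap (PowerSeries k) _ f) = algebraMap (PowerSeries k) S f) ∧
      (∀ f : PowerSeries k, algebraMap (PowerSeries k) S f = 0 → X ^ N ∣ f) ∧ ε (T (z o)) = 0 ∧
      ∀ a, ∃ d : PowerSeries k, constantCoeff d = Q a ∧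
        ε (T a) = algebraMap (PowerSeries k) S d := by
  classical
  let R := PowerSeries k
  let τ : R := C c * X ^ e
  let I : Ideal R := Ideal.span {X ^ N}
  let S := R ⧸ I
  let π : R →+* S := Ideal.Quotient.mk I
  have hτ : (π τ) ^ m = 0 := by
    rw [← map_pow]
    refine Ideal.Quotient.eq_zero_iff_mem.2 (Ideal.mem_span_singleton.2 ?_)
    rw [mul_pow, ← pow_mul, hN]
    exact Dvd.intro_left _ rfl
  let ψ : MvPolynomial σ R →ₐ[R] S := MvPolynomial.aeval fun l => if l = o then -π τ else 0
  have hψ : MvPolynomial.idealOfVars σ R ≤ (Ideal.span {π τ}).comap ψ := by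
    rw [MvPolynomial.idealOfVars, Ideal.span_le]
    rintro _ ⟨l, rfl⟩
    simp only [SetLike.mem_coe, Ideal.mem_comap, ψ, MvPolynomial.aeval_X]
    split_ifs
    · exact neg_mem (Ideal.mem_span_singleton_self _)
    · exact zero_mem _
  let ε : TruncPoly σ R m →ₐ[R] S := Ideal.Quotient.liftₐ _ ψ fun p hp => by
    have := (Ideal.pow_right_mono hψ m).trans (Ideal.le_comap_pow _ m) hp
    rwa [Ideal.mem_comap, Ideal.span_singleton_pow, hτ, Ideal.span_singleton_zero] at this
  have hεaug : TruncPoly.augIdeal σ R m ≤ (Ideal.span {π τ}).comap ε := by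
    rw [TruncPoly.augIdeal, Ideal.map_le_iff_le_comap]
    exact fun p hp => hψ hp
  refine ⟨S, inferInstance, inferInstance, ε.toRingHom, fun f => ε.commutes f, fun f hf => ?_, ?_,
    fun a => ?_⟩
  · exact Ideal.mem_span_singleton.1 (Ideal.Quotient.eq_zero_iff_mem.1 hf)
  · have hv : ε (TruncPoly.var o) = -π τ := by
      change ψ (MvPolynomial.X o) = _
      simp [ψ]
    change ε (T (z o)) = 0
    rw [hT.coord, map_add, hv, hγo, ε.commutes]
    exact add_neg_cancel _
  · have h1 := hεaug (hT.sub_mem a)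
    rw [Ideal.mem_comap, map_sub, ε.commutes, Ideal.mem_span_singleton] at h1
    obtain ⟨q, hq⟩ := h1
    obtain ⟨q, rfl⟩ := Ideal.Quotient.mk_surjective q
    refine ⟨γ a + τ * q, ?_, ?_⟩
    · simp [hγ, τ, he.ne']
    · rw [map_add]
      change ε (T a) = _ + π (τ * q)
      rw [map_mul, ← hq]
      ring

open PowerSeries in
theorem X_pow_dvd_of_isTaylor {ι J₁ J₂ : Type*} [Fintype J₁] [Fintype J₂] (o : σ)
    (Q : ι → A →ₐ[k] k) (m : ι → ℕ) (e : ι → ℕ) (he : ∀ i, 0 < e i) {N : ℕ}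
    (hN : ∀ i, e i * m i = N)
    (γ : ι → A →ₐ[k] PowerSeries k) (hγ : ∀ i a, constantCoeff (γ i a) = Q i a) (c : ι → k)
    (hγo : ∀ i, γ i (z o) = C (c i) * X ^ e i)
    (T : ∀ i, A →ₐ[k] TruncPoly σ (PowerSeries k) (m i)) (hT : ∀ i, IsTaylor z (γ i) (T i))
    (u : J₁ → A) (v : J₂ → A)
    (h1 : ∀ y : J₂ → k, (∀ i, ∑ j, y j * Q i (v j) = 0) → y = 0)
    (β₁ : J₁ → PowerSeries k) (β₂ : J₂ → PowerSeries k)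
    (hβ : ∀ i, ∑ j, algebraMap _ _ (β₁ j) * T i (z o * u j) +
      ∑ j, algebraMap _ _ (β₂ j) * T i (v j) = 0) (j : J₂) : X ^ N ∣ β₂ j := by
  suffices H : ∀ l ≤ N, ∀ j, X ^ l ∣ β₂ j from H N le_rfl j
  intro l
  induction l with
  | zero => simp
  | succ l ih =>
    intro hl
    choose β' hβ' using ih (by omega)
    have key : (fun j => constantCoeff (β' j)) = 0 := by
      refine h1 _ fun i => ?_
      obtain ⟨S, _, _, ε, hε, hS, hεo, hεd⟩ := exists_divisorial_arc o (Q i) (γ i) (he i) (hN i)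
        (hγ i) (hγo i) (hT i)
      choose d hd0 hd using hεd
      have h2 := congr(ε $(hβ i))
      simp only [map_add, map_sum, map_mul, hεo, zero_mul, mul_zero, Finset.sum_const_zero,
        zero_add, map_zero, hε, hd] at h2
      simp only [← map_mul, ← map_sum] at h2
      have h3 := hS _ h2
      have h4 : ∑ j, β₂ j * d (v j) = X ^ l * ∑ j, β' j * d (v j) := by
        rw [Finset.mul_sum]
        exact Finset.sum_congr rfl fun j _ => by rw [hβ', mul_assoc]
      rw [h4, show N = l + (N - l) by omega, pow_add] at h3
      have h5 := (mul_dvd_mul_iff_left (pow_ne_zero l (X_ne_zero (R := k)))).1 h3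
      have h6 := (dvd_pow_self X (by omega : N - l ≠ 0)).trans h5
      rw [X_dvd_iff, map_sum] at h6
      simpa [hd0] using h6
    intro j
    rw [hβ', pow_succ]
    exact mul_dvd_mul_left _ (X_dvd_iff.2 (congrFun key j))

theorem mul_eq_neg_geom_sum_mul {E : Type*} [CommRing E] {a ξ d g w : E} (n : E) {m : ℕ}
    (hξ : ξ ^ m = 0) (ha : a ^ m = d * n) (hn : ∀ y, n * y = 0 → y = 0)
    (h : (a + ξ) * g + n * w = 0) :
    d * g = -((∑ l ∈ Finset.range m, a ^ l * (-ξ) ^ (m - 1 - l)) * w) := by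
  have h1 := geom_sum₂_mul a (-ξ) m
  rw [sub_neg_eq_add, neg_pow, hξ, mul_zero, sub_zero, ha] at h1
  rw [← sub_eq_zero]
  refine hn _ ?_
  linear_combination (∑ l ∈ Finset.range m, a ^ l * (-ξ) ^ (m - 1 - l)) * h - g * h1

open PowerSeries in
/-- The limit along an arc of sections with a point of multiplicity `m` on the moving arc vanishes
on the simple residue. -/
theorem limit_mem_simpleResidue {J₁ J₂ : Type*} [Fintype J₁] [Fintype J₂]
    (hz : IsEtaleCoordinates k z) (o : σ)
    (Q : A →ₐ[k] k) (hm : 0 < m) {e : ℕ} (he : 0 < e) {N : ℕ} (hN : e * m = N)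
    (γ : A →ₐ[k] PowerSeries k) (hγ : ∀ a, constantCoeff (γ a) = Q a) {c : k} (hc : c ≠ 0)
    (hγo : γ (z o) = C c * X ^ e)
    (T : A →ₐ[k] TruncPoly σ (PowerSeries k) m) (hT : IsTaylor z γ T)
    (u : J₁ → A) (v : J₂ → A)
    (β₁ : J₁ → PowerSeries k) (ρ : J₂ → PowerSeries k)
    (hβ : ∑ j, algebraMap _ _ (β₁ j) * T (z o * u j) +
      ∑ j, algebraMap _ _ (X ^ N * ρ j) * T (v j) = 0) :
    ∑ j, constantCoeff (β₁ j) • u j ∈ RingHom.ker Q ^ m ⊔ Ideal.span {z o ^ (m - 1)} := by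
  let am : PowerSeries k →+* TruncPoly σ (PowerSeries k) m := algebraMap _ _
  let τ : PowerSeries k := C c * X ^ e
  let U : TruncPoly σ (PowerSeries k) m :=
    ∑ l ∈ Finset.range m, am τ ^ l * (-TruncPoly.var o) ^ (m - 1 - l)
  let g := ∑ j, am (β₁ j) * T (u j)
  let w := ∑ j, am (ρ j) * T (v j)
  have hTo : T (z o) = am τ + TruncPoly.var o := by rw [hT.coord, hγo]
  have hβ' : (am τ + TruncPoly.var o) * g + am (X ^ N) * w = 0 := by
    rw [← hβ, Finset.mul_sum, Finset.mul_sum, ← hTo]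
    congr 1
    · refine Finset.sum_congr rfl fun j _ => ?_
      rw [map_mul]
      exact mul_left_comm _ _ _
    · refine Finset.sum_congr rfl fun j _ => ?_
      rw [← mul_assoc, ← map_mul]
  have hg : am (C (c ^ m)) * g = -(U * w) := by
    refine mul_eq_neg_geom_sum_mul (am (X ^ N)) (TruncPoly.var_pow o) ?_ (fun y hy => ?_) hβ'
    · rw [← map_pow, ← map_mul, mul_pow, ← pow_mul, hN, map_pow]
    · exact TruncPoly.eq_zero_of_algebraMap_mul (pow_ne_zero N (X_ne_zero (R := k))) y hy
  let φ : TruncPoly σ (PowerSeries k) m →ₐ[k] TruncPoly σ k m := TruncPoly.map constCoeffAlgHom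
  have hφam : ∀ f, φ (am f) = algebraMap k _ (constantCoeff f) := fun f =>
    TruncPoly.map_algebraMap _ _
  have hφU : φ U = (-TruncPoly.var o) ^ (m - 1) := by
    simp only [U, map_sum, map_mul, map_pow, hφam, map_neg]
    rw [Finset.sum_eq_single 0]
    · simp only [pow_zero, one_mul, Nat.sub_zero]
      congr 2
      exact TruncPoly.map_var _ _
    · intro l _ hl
      have : constantCoeff τ = 0 := by simp [τ, he.ne']
      rw [this, map_zero, zero_pow hl, zero_mul]
    · intro h
      exact absurd (Finset.mem_range.2 hm) h
  have hTQ : IsTaylor z Q (φ.comp T) := by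
    have h3 := hT.map (constCoeffAlgHom (k := k))
    have h4 : constCoeffAlgHom.comp γ = Q := AlgHom.ext fun a => hγ a
    rwa [h4] at h3
  obtain ⟨θ, hθ, hθT⟩ := hz.exists_comparison Q hTQ
  have hQo : Q (z o) = 0 := by rw [← hγ, hγo]; simp [he.ne']
  have hθo : θ (TruncPoly.var o) = Ideal.Quotient.mk _ (z o) := by
    rw [TruncPoly.var, hθ]
    simp [hQo]
  have hfin : Ideal.Quotient.mk (RingHom.ker Q ^ m) (c ^ m • ∑ j, constantCoeff (β₁ j) • u j) =
      -((-Ideal.Quotient.mk _ (z o)) ^ (m - 1) * θ (φ w)) := by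
    have hσ : (φ.comp T) (c ^ m • ∑ j, constantCoeff (β₁ j) • u j) = φ (am (C (c ^ m)) * g) := by
      simp only [Algebra.smul_def, map_mul, map_sum, AlgHom.commutes, g, hφam, constantCoeff_C]
      rfl
    rw [← hθT, hσ, hg, map_neg, map_neg, map_mul, map_mul, hφU, map_pow, map_neg, hθo]
  obtain ⟨w', hw'⟩ := Ideal.Quotient.mk_surjective (θ (φ w))
  rw [← hw', ← map_neg, ← map_pow, ← map_mul, ← map_neg, Ideal.Quotient.eq] at hfin
  have hmem : c ^ m • ∑ j, constantCoeff (β₁ j) • u j ∈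
      RingHom.ker Q ^ m ⊔ Ideal.span {z o ^ (m - 1)} := by
    have h5 : -((-z o) ^ (m - 1) * w') ∈ Ideal.span {z o ^ (m - 1)} := by
      rw [Ideal.mem_span_singleton, dvd_neg, neg_pow, mul_assoc]
      exact Dvd.dvd.mul_left (Dvd.intro _ rfl) _
    have := add_mem (Ideal.mem_sup_left hfin) (Ideal.mem_sup_right h5)
    rwa [sub_add_cancel] at this
  have := Submodule.smul_of_tower_mem _ (c ^ m)⁻¹ hmem
  rwa [smul_smul, inv_mul_cancel₀ (pow_ne_zero m hc), one_smul] at this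

end Degeneration

section Generic

theorem Matrix.exists_mulVec_eq_zero_or_exists_mul_eq_smul_one {B I J : Type*} [CommRing B]
    [IsDomain B] [Fintype I] [Fintype J] [DecidableEq J] (M : Matrix I J B) :
    (∃ b : J → B, b ≠ 0 ∧ M.mulVec b = 0) ∨
      ∃ (D : B) (N : Matrix J I B), D ≠ 0 ∧ N * M = D • (1 : Matrix J J B) := by
  classical
  let K := FractionRing B
  have hBK : Function.Injective (algebraMap B K) := IsFractionRing.injective B K
  let M' : Matrix I J K := M.map (algebraMap B K)
  by_cases hinj : Function.Injective M'.mulVecLin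
  · right
    obtain ⟨g, hg⟩ := M'.mulVecLin.exists_leftInverse_of_injective (LinearMap.ker_eq_bot.2 hinj)
    let G : Matrix J I K := LinearMap.toMatrix' g
    have hG : G * M' = 1 := by
      have := congr(LinearMap.toMatrix' $hg)
      rwa [LinearMap.toMatrix'_comp, LinearMap.toMatrix'_id, ← Matrix.toLin'_apply',
        LinearMap.toMatrix'_toLin'] at this
    obtain ⟨d, hd⟩ := IsLocalization.exist_integer_multiples_of_finite (nonZeroDivisors B)
      (fun p : J × I => G p.1 p.2)
    choose N hN using hd
    let N' : Matrix J I B := Matrix.of fun j i => N (j, i)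
    refine ⟨d, N', nonZeroDivisors.ne_zero d.2, ?_⟩
    ext j j'
    apply hBK
    have h1 : algebraMap B K ((N' * M) j j') =
        (d : B) • (G * M') j j' := by
      simp only [Matrix.mul_apply, map_sum, map_mul, Finset.smul_sum]
      refine Finset.sum_congr rfl fun i _ => ?_
      rw [← smul_mul_assoc, ← hN (j, i)]
      rfl
    rw [h1, hG, Matrix.smul_apply, Matrix.one_apply, Matrix.one_apply]
    split_ifs <;> simp [Algebra.smul_def]
  · left
    rw [← LinearMap.ker_eq_bot, Submodule.eq_bot_iff] at hinj
    push Not at hinj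
    obtain ⟨y, hy, hy0⟩ := hinj
    obtain ⟨d, hd⟩ := IsLocalization.exist_integer_multiples_of_finite (nonZeroDivisors B) y
    choose b hb using hd
    have hd0 : (algebraMap B K d) ≠ 0 := by
      rw [Ne, map_eq_zero_iff _ hBK]
      exact nonZeroDivisors.ne_zero d.2
    refine ⟨b, fun h => hy0 ?_, ?_⟩
    · ext j
      have h1 := hb j
      rw [h, Pi.zero_apply, map_zero, Algebra.smul_def] at h1
      exact (mul_eq_zero.1 h1.symm).resolve_left hd0
    · ext i
      apply hBK
      have h1 : algebraMap B K (M.mulVec b i) = algebraMap B K d * M'.mulVec y i := by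
        simp only [Matrix.mulVec, dotProduct, map_sum, map_mul, Finset.mul_sum, hb,
          Algebra.smul_def]
        exact Finset.sum_congr rfl fun j _ => mul_left_comm _ _ _
      have h2 : M'.mulVec y = 0 := hy
      rw [h1, h2]
      simp

open PowerSeries in
theorem PowerSeries.exists_eq_X_pow_mul {k J : Type*} [Field k] (β : J → PowerSeries k)
    (hβ : β ≠ 0) : ∃ (q : ℕ) (β' : J → PowerSeries k), (∀ j, β j = X ^ q * β' j) ∧
      ∃ j, constantCoeff (β' j) ≠ 0 := by
  classical
  have hex : ∃ n, ∃ j, coeff n (β j) ≠ 0 := by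
    by_contra! h
    exact hβ (funext fun j => PowerSeries.ext fun n => by simpa using h n j)
  let q := Nat.find hex
  have hq : ∀ j, X ^ q ∣ β j := fun j => X_pow_dvd_iff.2 fun n hn => by
    by_contra h
    exact Nat.find_min hex hn ⟨j, h⟩
  choose β' hβ' using hq
  refine ⟨q, β', hβ', ?_⟩
  obtain ⟨j, hj⟩ := Nat.find_spec hex
  refine ⟨j, fun h => hj ?_⟩
  rw [hβ']
  change coeff q (X ^ q * β' j) = 0
  rw [← h, coeff_X_pow_mul', if_pos le_rfl, Nat.sub_self, coeff_zero_eq_constantCoeff]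

variable {k : Type u} [Field k] {σ : Type*} {A : Type u} [CommRing A] [Algebra k A] {z : σ → A}

theorem IsEtaleCoordinates.mem_ker_pow_of_coeff (hz : IsEtaleCoordinates k z) (Q : A →ₐ[k] k)
    {m : ℕ} {T : A →ₐ[k] TruncPoly σ k m} (hT : IsTaylor z Q T) {a : A}
    (ha : ∀ (α : σ →₀ ℕ) (hα : α.degree < m), TruncPoly.coeff α hα (T a) = 0) :
    a ∈ RingHom.ker Q ^ m := by
  obtain ⟨θ, -, hθ⟩ := hz.exists_comparison Q hT
  have := hθ a
  rw [TruncPoly.eq_zero_of_coeff _ ha, map_zero] at this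
  exact Ideal.Quotient.eq_zero_iff_mem.1 this.symm

instance finite_monomials [Finite σ] (m : ℕ) : Finite {α : σ →₀ ℕ // α.degree < m} :=
  (Finsupp.finite_of_degree_lt m).to_subtype

/-- The functions `b` with `x b ∈ V` form a finite-dimensional space. -/
theorem IsEtaleCoordinates.finiteDimensional_residual [Finite σ] (hz : IsEtaleCoordinates k z)
    (U : Submodule k A) {r : ℕ} (m : Fin r → ℕ) (Q : Fin r → A →ₐ[k] k)
    (hU : ∀ b ∈ U, (∀ i, b ∈ RingHom.ker (Q i) ^ m i) → b = 0) : FiniteDimensional k U := by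
  choose T hT using fun i => hz.exists_isTaylor (Q i) (m i)
  let F : U →ₗ[k] (i : Fin r) → {α : σ →₀ ℕ // α.degree < m i} → k :=
    LinearMap.pi fun i => LinearMap.pi fun α =>
      (TruncPoly.coeff α.1 α.2).comp ((T i).toLinearMap.comp U.subtype)
  refine FiniteDimensional.of_injective F ?_
  rw [← LinearMap.ker_eq_bot, Submodule.eq_bot_iff]
  intro b hb
  refine Subtype.ext (hU b b.2 fun i => hz.mem_ker_pow_of_coeff (Q i) (hT i) fun α hα => ?_)
  exact congr($hb i ⟨α, hα⟩)

end Generic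

section AlgebraicHorace

variable {k : Type u} [Field k] {σ : Type*} {A : Type u} [CommRing A] [Algebra k A] {z : σ → A}

theorem exists_aeval_eq {r : ℕ} {B : Type u} [CommRing B] [Algebra k B] (ι : Fin r → A →ₐ[k] B)
    (hgen : ⨆ i, (ι i).range = ⊤) (D : B) :
    ∃ p : MvPolynomial (Fin r × A) k, MvPolynomial.aeval (fun l => ι l.1 l.2) p = D := by
  have hle : ⨆ i, (ι i).range ≤
      (MvPolynomial.aeval (R := k) (fun l : Fin r × A => ι l.1 l.2)).range := by
    refine iSup_le fun i => ?_
    rintro _ ⟨a, rfl⟩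
    exact ⟨MvPolynomial.X (i, a), by simp⟩
  rw [hgen] at hle
  exact hle (Algebra.mem_top (x := D))

/-- Adapted generators of a space of functions: those divisible by `x`, and the others. -/
theorem IsEtaleCoordinates.exists_adapted_generators [Finite σ] (hz : IsEtaleCoordinates k z)
    {x : A} (V : Submodule k A) {r : ℕ} (m : Fin r → ℕ) (Q : Fin r → A →ₐ[k] k)
    (h1 : ∀ a ∈ V, (∀ i, Q i a = 0) → x ∣ a)
    (h2 : ∀ b, x * b ∈ V →
      (∀ i, b ∈ RingHom.ker (Q i) ^ m i ⊔ Ideal.span {x ^ (m i - 1)}) → b = 0) :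
    ∃ (d₁ d₂ : ℕ) (u : Fin d₁ → A) (v : Fin d₂ → A),
      (∀ a ∈ V, ∃ (y₁ : Fin d₁ → k) (y₂ : Fin d₂ → k),
        a = ∑ j, y₁ j • (x * u j) + ∑ j, y₂ j • v j) ∧
      (∀ y : Fin d₂ → k, (∀ i, ∑ j, y j * Q i (v j) = 0) → y = 0) ∧
      (∀ y : Fin d₁ → k, (∀ i, ∑ j, y j • u j ∈
        RingHom.ker (Q i) ^ m i ⊔ Ideal.span {x ^ (m i - 1)}) → y = 0) := by
  let U : Submodule k A := V.comap (LinearMap.mulLeft k x)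
  have hUfin : FiniteDimensional k U :=
    hz.finiteDimensional_residual U m Q fun b hb hb' => h2 b hb fun i => Ideal.mem_sup_left (hb' i)
  let V₁ : Submodule k A := U.map (LinearMap.mulLeft k x)
  have hV₁ : V₁ ≤ V := Submodule.map_comap_le _ _
  obtain ⟨C, hC⟩ := exists_isCompl V₁
  let V₂ : Submodule k A := C ⊓ V
  have hsup : V₁ ⊔ V₂ = V := by
    rw [← sup_inf_assoc_of_le _ hV₁, hC.sup_eq_top, top_inf_eq]
  have hinf : ∀ a ∈ V₂, (∀ i, Q i a = 0) → a = 0 := by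
    intro a ha hQ
    obtain ⟨b, rfl⟩ := h1 a ha.2 hQ
    have : x * b ∈ V₁ ⊓ C := ⟨⟨b, ha.2, rfl⟩, ha.1⟩
    rwa [hC.inf_eq_bot] at this
  have hV₂fin : FiniteDimensional k V₂ := by
    let F : V₂ →ₗ[k] Fin r → k := LinearMap.pi fun i => (Q i).toLinearMap.comp V₂.subtype
    refine FiniteDimensional.of_injective F ?_
    rw [← LinearMap.ker_eq_bot, Submodule.eq_bot_iff]
    intro b hb
    exact Subtype.ext (hinf b b.2 fun i => congr($hb i))
  let bU := Module.finBasis k U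
  let bV := Module.finBasis k V₂
  refine ⟨_, _, fun j => bU j, fun j => bV j, fun a ha => ?_, fun y hy => ?_, fun y hy => ?_⟩
  · rw [← hsup, Submodule.mem_sup] at ha
    obtain ⟨_, ⟨b, hb, rfl⟩, c, hc, rfl⟩ := ha
    refine ⟨bU.repr ⟨b, hb⟩, bV.repr ⟨c, hc⟩, ?_⟩
    have e1 := congr(($(bU.sum_repr ⟨b, hb⟩) : A))
    have e2 := congr(($(bV.sum_repr ⟨c, hc⟩) : A))
    simp only [Submodule.coe_sum, Submodule.coe_smul] at e1 e2
    rw [e2, LinearMap.mulLeft_apply]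
    conv_lhs => rw [← e1]
    rw [Finset.mul_sum]
    simp only [mul_smul_comm]
  · have h3 : ∑ j, y j • bV j = 0 := by
      refine Subtype.ext (hinf _ (∑ j, y j • bV j).2 fun i => ?_)
      simpa [Submodule.coe_sum] using hy i
    exact funext (Fintype.linearIndependent_iff.1 bV.linearIndependent y h3)
  · have h3 : ∑ j, y j • bU j = 0 := by
      refine Subtype.ext (h2 _ (∑ j, y j • bU j).2 fun i => ?_)
      simpa [Submodule.coe_sum] using hy i
    exact funext (Fintype.linearIndependent_iff.1 bU.linearIndependent y h3)

/-- The differential Horace lemma for functions on an affine variety with étale coordinates, the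
divisor being the zero locus of one of them. -/
theorem IsEtaleCoordinates.exists_generic_polynomial [IsAlgClosed k] [IsDomain A]
    [Algebra.FiniteType k A] [Finite σ] (hz : IsEtaleCoordinates k z)
    (o : σ) (V : Submodule k A) {r : ℕ} (m : Fin r → ℕ) (hm : ∀ i, 0 < m i)
    (Q : Fin r → A →ₐ[k] k) (hQ : ∀ i, Q i (z o) = 0)
    (h1 : ∀ a ∈ V, (∀ i, Q i a = 0) → z o ∣ a)
    (h2 : ∀ b, z o * b ∈ V →
      (∀ i, b ∈ RingHom.ker (Q i) ^ m i ⊔ Ideal.span {z o ^ (m i - 1)}) → b = 0) :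
    ∃ D : MvPolynomial (Fin r × A) k,
      (∃ P : Fin r → A →ₐ[k] k, MvPolynomial.aeval (fun l => P l.1 l.2) D ≠ 0) ∧
      ∀ P : Fin r → A →ₐ[k] k, MvPolynomial.aeval (fun l => P l.1 l.2) D ≠ 0 →
        ∀ a ∈ V, (∀ i, a ∈ RingHom.ker (P i) ^ m i) → a = 0 := by
  classical
  obtain ⟨B, _, _, _, _, ι, hι, hgen⟩ := exists_tensorPower (k := k) A r
  obtain ⟨d₁, d₂, u, v, hspan, hv, hu⟩ := hz.exists_adapted_generators V m Q h1 h2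
  choose T hT using fun i => hz.exists_isTaylor (ι i) (m i)
  let I := Σ i, {α : σ →₀ ℕ // α.degree < m i}
  have : Fintype I := Fintype.ofFinite I
  let v' : Fin d₁ ⊕ Fin d₂ → A := Sum.elim (fun j => z o * u j) v
  let M : Matrix I (Fin d₁ ⊕ Fin d₂) B :=
    Matrix.of fun i j => TruncPoly.coeff i.2.1 i.2.2 (T i.1 (v' j))
  have hcoeff : ∀ {C : Type u} [CommRing C] [Algebra k C] (ψ : B →ₐ[k] C) (y : Fin d₁ ⊕ Fin d₂ → C)
      (i : Fin r) (α : σ →₀ ℕ) (hα : α.degree < m i),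
      TruncPoly.coeff α hα (∑ j, algebraMap C (TruncPoly σ C (m i)) (y j) *
        TruncPoly.map ψ (T i (v' j))) = ∑ j, ψ (M ⟨i, α, hα⟩ j) * y j := by
    intro C _ _ ψ y i α hα
    rw [map_sum]
    refine Finset.sum_congr rfl fun j _ => ?_
    have h3 : algebraMap C (TruncPoly σ C (m i)) (y j) * TruncPoly.map ψ (T i (v' j)) =
      y j • TruncPoly.map ψ (T i (v' j)) := (Algebra.smul_def _ _).symm
    rw [h3, map_smul, TruncPoly.coeff_map, smul_eq_mul, mul_comm]
    rfl
  rcases Matrix.exists_mulVec_eq_zero_or_exists_mul_eq_smul_one M with ⟨b, hb, hMb⟩ | ⟨D, N, hD, hN⟩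
  · exfalso
    let L := ∏ i, m i
    have hL : 0 < L := Finset.prod_pos fun i _ => hm i
    let e : Fin r → ℕ := fun i => L / m i
    have heL : ∀ i, e i * m i = L := fun i =>
      Nat.div_mul_cancel (Finset.dvd_prod_of_mem m (Finset.mem_univ i))
    have he : ∀ i, 0 < e i := fun i => Nat.pos_of_mul_pos_right (heL i ▸ hL)
    obtain ⟨j₀, hj₀⟩ := Function.ne_iff.1 hb
    obtain ⟨γ, c, hc, hγo, hγ, hγb⟩ := hz.exists_arcs ι hι hgen Q e he o hj₀
    obtain ⟨q, β, hβ, j₁, hj₁⟩ := PowerSeries.exists_eq_X_pow_mul (fun j => γ (b j))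
      (Function.ne_iff.2 ⟨j₀, hγb⟩)
    have hTγ := fun i => (hT i).map γ
    have hrel : ∀ i, ∑ j, algebraMap _ _ (β j) * TruncPoly.map γ (T i (v' j)) = 0 := by
      intro i
      refine TruncPoly.eq_zero_of_algebraMap_mul
        (pow_ne_zero q (PowerSeries.X_ne_zero (R := k))) _ ?_
      rw [Finset.mul_sum]
      simp only [← mul_assoc, ← map_mul, ← hβ]
      refine TruncPoly.eq_zero_of_coeff _ fun α hα => ?_
      rw [hcoeff]
      simp only [← map_mul, ← map_sum]
      rw [show ∑ j, M ⟨i, α, hα⟩ j * b j = 0 from congrFun hMb ⟨i, α, hα⟩, map_zero]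
    have hrel' : ∀ i, ∑ j, algebraMap _ _ (β (Sum.inl j)) * ((TruncPoly.map γ).comp (T i))
        (z o * u j) + ∑ j, algebraMap _ _ (β (Sum.inr j)) * ((TruncPoly.map γ).comp (T i)) (v j) =
          0 := by
      intro i
      have := hrel i
      rwa [Fintype.sum_sum_type] at this
    have hγo' : ∀ i, (γ.comp (ι i)) (z o) = PowerSeries.C (c i) * PowerSeries.X ^ e i := by
      intro i
      rw [AlgHom.comp_apply, hγo, hQ, map_zero, zero_add]
    have hdvd := X_pow_dvd_of_isTaylor o Q m e he heL (fun i => γ.comp (ι i)) hγ c hγo'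
      (fun i => (TruncPoly.map γ).comp (T i)) hTγ u v hv _ _ hrel'
    choose ρ hρ using hdvd
    have hzero : (fun j => PowerSeries.constantCoeff (β (Sum.inl j))) = 0 := by
      refine hu _ fun i => ?_
      refine limit_mem_simpleResidue hz o (Q i) (hm i) (he i) (heL i) (γ.comp (ι i)) (hγ i) (hc i)
        (hγo' i) _ (hTγ i) u v (fun j => β (Sum.inl j)) ρ ?_
      simp only [← hρ]
      exact hrel' i
    rcases j₁ with j | j
    · exact hj₁ (congrFun hzero j)
    · apply hj₁
      rw [hρ, map_mul, map_pow, PowerSeries.constantCoeff_X, zero_pow hL.ne', zero_mul]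
  · obtain ⟨p, hp⟩ := exists_aeval_eq ι hgen D
    have hev : ∀ (P : Fin r → A →ₐ[k] k) (ev : B →ₐ[k] k), (∀ i, ev.comp (ι i) = P i) →
        MvPolynomial.aeval (fun l => P l.1 l.2) p = ev D := by
      intro P ev h
      rw [← hp, ← AlgHom.comp_apply, MvPolynomial.comp_aeval]
      simp only [← h]
      rfl
    refine ⟨p, ?_, fun P hP a ha hker => ?_⟩
    · obtain ⟨ev, hev'⟩ := exists_algHom_apply_ne_zero (k := k) hD
      refine ⟨fun i => ev.comp (ι i), ?_⟩
      rwa [hev _ ev fun _ => rfl]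
    · obtain ⟨ev, hevP⟩ := hι k P
      rw [hev P ev hevP] at hP
      obtain ⟨y₁, y₂, hy⟩ := hspan a ha
      let y : Fin d₁ ⊕ Fin d₂ → k := Sum.elim y₁ y₂
      have hay : a = ∑ j, y j • v' j := by rw [Fintype.sum_sum_type, hy]; rfl
      have hMy : (M.map ev).mulVec y = 0 := by
        ext ⟨i, α, hα⟩
        have hTa : TruncPoly.map ev (T i a) = 0 := by
          refine ((hT i).map ev).eq_zero_of_mem_ker_pow (a := a) ?_
          rw [hevP]
          exact hker i
        rw [hay] at hTa
        simp only [map_sum, Algebra.smul_def, map_mul, AlgHom.commutes] at hTa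
        have := hcoeff ev y i α hα
        rw [hTa, map_zero] at this
        exact this.symm
      have h5 : (N.map ev) * (M.map ev) = ev D • (1 : Matrix _ _ k) := by
        rw [← Matrix.map_mul, hN]
        ext j j'
        by_cases h : j = j' <;> simp [h]
      have h6 : ev D • y = 0 := by
        rw [← Matrix.one_mulVec y, ← Matrix.smul_mulVec, ← h5, ← Matrix.mulVec_mulVec, hMy,
          Matrix.mulVec_zero]
      have h7 : y = 0 := (smul_eq_zero.1 h6).resolve_left hP
      rw [hay, h7]
      simp

end AlgebraicHorace

section EtaleCoordinates

open IsLocalRing TensorProduct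

/-- An algebra of finite presentation that is unramified and flat at a prime is étale there. -/
theorem isEtaleAt_of_isUnramifiedAt_of_flat {R S : Type*} [CommRing R] [CommRing S] [Algebra R S]
    [Algebra.FinitePresentation R S] (p : Ideal R) (q : Ideal S) [p.IsPrime] [q.IsPrime]
    [q.LiesOver p] [Algebra (Localization.AtPrime p) (Localization.AtPrime q)]
    [Localization.AtPrime.IsLiesOverAlgebra p q]
    [Module.Flat (Localization.AtPrime p) (Localization.AtPrime q)]
    [Algebra.IsUnramifiedAt R q] : Algebra.IsEtaleAt R q := by
  let Rp := Localization.AtPrime p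
  let Sp := Localization (Algebra.algebraMapSubmonoid S p.primeCompl)
  let Sq := Localization.AtPrime q
  let f : Sp →ₐ[S] Sq := IsLocalization.liftAlgHom (M := Algebra.algebraMapSubmonoid S p.primeCompl)
        (f := Algebra.ofId _ _) (by
      rintro ⟨_, x, hx, rfl⟩
      simpa using! IsLocalization.map_units (M := q.primeCompl) Sq ⟨algebraMap _ _ x,
        by simp_all [q.over_def p]⟩)
  algebraize [f.toRingHom]
  have : IsScalarTower R Sp Sq := .to₁₃₄ _ S _ _
  have : IsScalarTower Rp Sp Sq := .of_algebraMap_eq' <| by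
    apply IsLocalization.ringHom_ext p.primeCompl
    simp only [RingHom.comp_assoc, ← IsScalarTower.algebraMap_eq]
  have : IsLocalization (Algebra.algebraMapSubmonoid Sp q.primeCompl) Sq :=
    .isLocalization_of_submonoid_le _ _ (Algebra.algebraMapSubmonoid S p.primeCompl) _
    (by rintro _ ⟨x, hx, rfl⟩; simp_all [q.over_def p])
  have : Algebra.FinitePresentation Rp Sp := by
    have : Algebra.IsPushout R Rp S Sp :=
      .symm <| Algebra.isPushout_of_isLocalization p.primeCompl _ _ _
    exact .equiv (Algebra.IsPushout.equiv R Rp S Sp)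
  have : Algebra.FormallyUnramified Rp Sq := .of_restrictScalars R _ _
  have : Algebra.EssFiniteType Rp Sq := .of_comp R _ _
  have : Algebra.FormallyEtale (ResidueField Rp) (ResidueField Rp ⊗[Rp] Sq) :=
    .of_formallyUnramified_of_field _ _
  have : IsLocalHom (algebraMap Rp Sq) := by
    rw [Localization.AtPrime.IsLiesOverAlgebra.algebraMap_eq (p := p) (P := q)]
    infer_instance
  have := Algebra.FormallySmooth.of_formallySmooth_residueField_tensor
    (R := Rp) (S := Sq) (P := Sp) (Algebra.algebraMapSubmonoid _ q.primeCompl)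
  have : Algebra.FormallySmooth R Sq := .comp R Rp Sq
  exact .of_formallyUnramified_and_formallySmooth

theorem isSeparable_of_adjoin_le {k F K ι : Type*} [Field k] [Field F] [Field K] [Algebra k K]
    [Algebra F K] (y : ι → K) (hk : ∀ c : k, ∃ a : F, algebraMap F K a = algebraMap k K c)
    (hy : ∀ i, ∃ a : F, algebraMap F K a = y i)
    [Algebra.IsSeparable (IntermediateField.adjoin k (Set.range y)) K] :
    Algebra.IsSeparable F K := by
  let E : IntermediateField k K := (algebraMap F K).fieldRange.toIntermediateField hk
  have hE : IntermediateField.adjoin k (Set.range y) ≤ E := by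
    rw [IntermediateField.adjoin_le_iff]
    rintro _ ⟨i, rfl⟩
    exact hy i
  let := (IntermediateField.inclusion hE).toRingHom.toAlgebra
  have : IsScalarTower (IntermediateField.adjoin k (Set.range y)) E K := .of_algebraMap_eq' rfl
  have : Algebra.IsSeparable E K :=
    Algebra.isSeparable_tower_top_of_isSeparable (IntermediateField.adjoin k (Set.range y)) E K
  let e : F ≃+* E := RingEquiv.ofBijective
    ((algebraMap F K).codRestrict E.toSubring fun a => ⟨a, rfl⟩)
    ⟨fun a b h => (algebraMap F K).injective congr(($h).1), fun ⟨_, a, h⟩ => ⟨a, Subtype.ext h⟩⟩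
  exact Algebra.IsSeparable.of_equiv_equiv e.symm (RingEquiv.refl K) (by
    ext a
    obtain ⟨b, rfl⟩ := e.surjective a
    simp
    rfl)

variable {k ι : Type*} {A : Type u} [Field k] [CommRing A] [Algebra k A]

theorem sub_rename_aeval_mem_span (F : MvPolynomial (Option ι) k) :
    F - MvPolynomial.rename some (MvPolynomial.aeval (fun o : Option ι => o.elim 0 MvPolynomial.X) F
      : MvPolynomial ι k) ∈ Ideal.span {(MvPolynomial.X none : MvPolynomial (Option ι) k)} := by
  rw [← Ideal.Quotient.eq]
  have : Ideal.Quotient.mkₐ k (Ideal.span {(MvPolynomial.X none : MvPolynomial (Option ι) k)}) =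
    ((Ideal.Quotient.mkₐ k _).comp (MvPolynomial.rename some)).comp
      (MvPolynomial.aeval (fun o : Option ι => o.elim 0 MvPolynomial.X)) := by
    ext o
    cases o
    · simp
    · simp
  exact DFunLike.congr_fun this F

theorem comap_aeval_span_eq {K : Type*} [Field K] [Algebra k K] [Algebra A K] [IsScalarTower k A K]
    (x : A)
    (hx : RingHom.ker (algebraMap A K) = Ideal.span {x}) (y : ι → A)
    (hy : AlgebraicIndependent k (fun i => algebraMap A K (y i))) :
    (Ideal.span {x}).comap (MvPolynomial.aeval (R := k) (fun o : Option ι => o.elim x y)) =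
      Ideal.span {MvPolynomial.X none} := by
  apply le_antisymm
  · intro F hF
    have h := sub_rename_aeval_mem_span F
    suffices (MvPolynomial.aeval (fun o : Option ι => o.elim 0 MvPolynomial.X) F
      : MvPolynomial ι k) = 0 by
      rwa [this, map_zero, sub_zero] at h
    apply hy
    rw [Ideal.mem_comap, ← hx, RingHom.mem_ker] at hF
    rw [map_zero, ← hF]
    have : (MvPolynomial.aeval (fun i => algebraMap A K (y i))).comp
      (MvPolynomial.aeval (fun o : Option ι => o.elim 0 MvPolynomial.X)) =
      (IsScalarTower.toAlgHom k A K).comp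
        (MvPolynomial.aeval (R := k) (fun o : Option ι => o.elim x y)) := by
      ext o
      cases o
      · have : algebraMap A K x = 0 := by
          rw [← RingHom.mem_ker, hx]; exact Ideal.mem_span_singleton_self x
        simp [this]
      · simp
    exact DFunLike.congr_fun this F
  · rw [Ideal.span_singleton_le_iff_mem]
    simp

theorem isDedekindDomain_localization_of_span {R : Type*} [CommRing R] [IsDomain R]
    [IsNoetherianRing R] (x : R) [(Ideal.span {x}).IsPrime] :
    IsDedekindDomain (Localization.AtPrime (Ideal.span {x})) := by
  have : IsDomain (Localization.AtPrime (Ideal.span {x})) :=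
    IsLocalization.isDomain_localization (Ideal.primeCompl_le_nonZeroDivisors _)
  have : IsNoetherianRing (Localization.AtPrime (Ideal.span {x})) :=
    IsLocalization.isNoetherianRing (Ideal.span {x}).primeCompl _ inferInstance
  have h : (maximalIdeal (Localization.AtPrime (Ideal.span {x}))).IsPrincipal := by
    rw [← Localization.AtPrime.map_eq_maximalIdeal, Ideal.map_span, Set.image_singleton]
    exact ⟨_, rfl⟩
  exact ((tfae_of_isNoetherianRing_of_isLocalRing_of_isDomain
    (Localization.AtPrime (Ideal.span {x}))).out 2 4).mpr h

theorem flat_of_injective_algebraMap {R S : Type*} [CommRing R] [IsDedekindDomain R] [CommRing S]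
    [IsDomain S] [Algebra R S] (h : Function.Injective (algebraMap R S)) : Module.Flat R S := by
  have : Module.IsTorsionFree R S := ⟨fun r hr a b hab => by
    simp only [Algebra.smul_def] at hab
    exact mul_left_cancel₀ ((map_ne_zero_iff _ h).mpr hr.ne_zero) hab⟩
  infer_instance

theorem exists_etale_of_isTranscendenceBasis [IsDomain A] [Algebra.FiniteType k A] [Finite ι]
    {K : Type*} [Field K] [Algebra k K] [Algebra A K] [IsScalarTower k A K]
    (x : A) (hx0 : x ≠ 0) (hx : RingHom.ker (algebraMap A K) = Ideal.span {x}) (y : ι → A)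
    (hy : AlgebraicIndependent k (fun i => algebraMap A K (y i)))
    [Algebra.IsSeparable (IntermediateField.adjoin k
      (Set.range fun i => algebraMap A K (y i))) K] :
    ∃ g ∉ Ideal.span {x}, IsEtaleCoordinates k (fun o : Option ι =>
      algebraMap A (Localization.Away g) (o.elim x y)) := by
  have hq : (Ideal.span {x}).IsPrime := by
    rw [← hx]
    exact RingHom.ker_isPrime _
  let P := MvPolynomial (Option ι) k
  let φ : P →ₐ[k] A := MvPolynomial.aeval (R := k) (fun o : Option ι => o.elim x y)
  have hp : (Ideal.span {x}).comap φ = Ideal.span {MvPolynomial.X none} :=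
    comap_aeval_span_eq x hx y hy
  let : Algebra P A := φ.toRingHom.toAlgebra
  have : IsScalarTower k P A := .of_algebraMap_eq fun c => (φ.commutes c).symm
  have hPA : algebraMap P A (MvPolynomial.X none) = x := MvPolynomial.aeval_X _ _
  have : (Ideal.span {(MvPolynomial.X none : P)}).IsPrime := by rw [← hp]; infer_instance
  set p := Ideal.span {(MvPolynomial.X none : P)}
  set q := Ideal.span {x}
  have hlie : q.LiesOver p := ⟨hp.symm⟩
  let := Localization.AtPrime.algebraOfLiesOver p q
  have : Algebra.FiniteType P A := .of_restrictScalars_finiteType k P A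
  have : Algebra.FinitePresentation P A :=
    Algebra.FinitePresentation.of_finiteType.mp inferInstance
  have : IsDedekindDomain (Localization.AtPrime p) := isDedekindDomain_localization_of_span _
  have : IsDomain (Localization.AtPrime q) :=
    IsLocalization.isDomain_localization (Ideal.primeCompl_le_nonZeroDivisors _)
  have hinj : Function.Injective
      (algebraMap (Localization.AtPrime p) (Localization.AtPrime q)) := by
    rw [RingHom.injective_iff_ker_eq_bot]
    by_contra hne
    have hmax := Ideal.IsPrime.isMaximal (RingHom.ker_isPrime
      (algebraMap (Localization.AtPrime p) (Localization.AtPrime q))) hne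
    have := IsLocalRing.eq_maximalIdeal hmax
    have hX : algebraMap P (Localization.AtPrime p) (MvPolynomial.X none) ∈
        maximalIdeal (Localization.AtPrime p) := by
      rw [← Localization.AtPrime.map_eq_maximalIdeal]
      exact Ideal.mem_map_of_mem _ (Ideal.mem_span_singleton_self _)
    rw [← this, RingHom.mem_ker, ← IsScalarTower.algebraMap_apply,
      IsScalarTower.algebraMap_apply P A, hPA] at hX
    exact hx0 (IsLocalization.injective _ (Ideal.primeCompl_le_nonZeroDivisors q)
      (hX.trans (map_zero _).symm))
  have : Module.Flat (Localization.AtPrime p) (Localization.AtPrime q) :=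
    flat_of_injective_algebraMap hinj
  have : Algebra.IsUnramifiedAt P q := by
    rw [Algebra.isUnramifiedAt_iff_map_eq P p q]
    constructor
    · let ψ : q.ResidueField →+* K := Ideal.ResidueField.lift q (algebraMap A K) hx.ge
        fun a ha => isUnit_iff_ne_zero.mpr fun h => ha (hx ▸ h)
      let : Algebra q.ResidueField K := ψ.toAlgebra
      let : Algebra p.ResidueField K :=
        (ψ.comp (algebraMap p.ResidueField q.ResidueField)).toAlgebra
      have : IsScalarTower p.ResidueField q.ResidueField K := .of_algebraMap_eq' rfl
      have hψ (F : P) : algebraMap p.ResidueField K (algebraMap P _ F) =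
          algebraMap A K (algebraMap P A F) := by
        rw [IsScalarTower.algebraMap_apply p.ResidueField q.ResidueField K,
          ← IsScalarTower.algebraMap_apply P p.ResidueField q.ResidueField,
          IsScalarTower.algebraMap_apply P A q.ResidueField]
        exact Ideal.ResidueField.lift_algebraMap _ _ _ _ _
      have : Algebra.IsSeparable p.ResidueField K := by
        refine isSeparable_of_adjoin_le (k := k) (fun i => algebraMap A K (y i)) ?_ ?_
        · intro c
          refine ⟨algebraMap P _ (algebraMap k P c), ?_⟩
          rw [hψ, ← IsScalarTower.algebraMap_apply k P A, ← IsScalarTower.algebraMap_apply]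
        · intro i
          refine ⟨algebraMap P _ (MvPolynomial.X (some i)), ?_⟩
          rw [hψ]
          exact congrArg _ (MvPolynomial.aeval_X _ _)
      exact Algebra.isSeparable_tower_bot_of_isSeparable p.ResidueField q.ResidueField K
    · rw [← Localization.AtPrime.map_eq_maximalIdeal, Ideal.map_span, Ideal.map_span,
        Set.image_singleton, Set.image_singleton, IsScalarTower.algebraMap_apply P A, hPA]
  have : Algebra.IsEtaleAt P q := isEtaleAt_of_isUnramifiedAt_of_flat p q
  obtain ⟨g, hg, het⟩ := Algebra.exists_etale_of_isEtaleAt (R := P) q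
  refine ⟨g, hg, ?_⟩
  have h : (algebraMap P (Localization.Away g)) = (MvPolynomial.aeval (R := k) (fun o : Option ι =>
      algebraMap A (Localization.Away g) (o.elim x y))).toRingHom := by
    rw [IsScalarTower.algebraMap_eq P A]
    change RingHom.comp _ φ.toRingHom = _
    refine MvPolynomial.ringHom_ext (fun c => ?_) (fun o => ?_)
    · exact (congrArg _ (φ.commutes c)).trans ((IsScalarTower.algebraMap_apply k A _ c).symm.trans
        (MvPolynomial.aeval_C _ c).symm)
    · exact (congrArg (algebraMap A (Localization.Away g)) (MvPolynomial.aeval_X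
        (fun o : Option ι => o.elim x y) o)).trans (MvPolynomial.aeval_X (R := k)
          (fun o : Option ι => algebraMap A (Localization.Away g) (o.elim x y)) o).symm
  unfold IsEtaleCoordinates
  rw [← h, RingHom.formallyEtale_algebraMap]
  infer_instance

theorem formallyEtale_ringEquiv {R S : Type*} [CommRing R] [CommRing S] (e : R ≃+* S) :
    e.toRingHom.FormallyEtale := by
  let := e.toRingHom.toAlgebra
  exact Algebra.FormallyEtale.of_equiv (AlgEquiv.ofRingEquiv (f := e) fun _ => rfl :
    R ≃ₐ[R] S)

theorem IsEtaleCoordinates.comp_equiv {σ τ : Type*} {z : σ → A} (hz : IsEtaleCoordinates k z)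
    (e : τ ≃ σ) : IsEtaleCoordinates k (z ∘ e) := by
  have h : (MvPolynomial.aeval (z ∘ e) : MvPolynomial τ k →ₐ[k] A).toRingHom =
      (MvPolynomial.aeval z : MvPolynomial σ k →ₐ[k] A).toRingHom.comp
        (MvPolynomial.renameEquiv k e).toRingEquiv.toRingHom := by
    refine MvPolynomial.ringHom_ext (fun c => ?_) (fun o => ?_) <;> simp
  unfold IsEtaleCoordinates
  rw [h]
  exact RingHom.FormallyEtale.comp
    (formallyEtale_ringEquiv _) hz

theorem IsEtaleCoordinates.map_algEquiv {B σ : Type*} [CommRing B] [Algebra k B] {z : σ → A}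
    (hz : IsEtaleCoordinates k z) (e : A ≃ₐ[k] B) : IsEtaleCoordinates k (fun i => e (z i)) := by
  have h : (MvPolynomial.aeval (fun i => e (z i)) : MvPolynomial σ k →ₐ[k] B).toRingHom =
      e.toRingEquiv.toRingHom.comp
        (MvPolynomial.aeval z : MvPolynomial σ k →ₐ[k] A).toRingHom := by
    refine MvPolynomial.ringHom_ext (fun c => ?_) (fun o => ?_) <;> simp
  unfold IsEtaleCoordinates
  rw [h]
  exact RingHom.FormallyEtale.comp hz
    (formallyEtale_ringEquiv _)

/-- A prime divisor `x = 0` on an integral variety over a perfect field is, near its generic point,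
a coordinate hyperplane in a system of étale coordinates. -/
theorem exists_isEtaleCoordinates [PerfectField k] [IsDomain A] [Algebra.FiniteType k A]
    (x : A) (hx0 : x ≠ 0) [hq : (Ideal.span {x}).IsPrime] :
    ∃ g ∉ Ideal.span {x}, ∀ (B : Type u) [CommRing B] [Algebra k B] [Algebra A B]
      [IsScalarTower k A B] [IsLocalization.Away g B], ∃ (n : ℕ) (z : Option (Fin n) → B),
      z none = algebraMap A B x ∧ IsEtaleCoordinates k z := by
  set q := Ideal.span {x} with hqdef
  let K := q.ResidueField
  have : Algebra.EssFiniteType k K := .comp k A K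
  obtain ⟨s, hs, hsep⟩ := exists_isTranscendenceBasis_and_isSeparable_of_perfectField k K
  have hK {a : A} (ha : a ∉ q) : algebraMap A K a ≠ 0 :=
    fun h => ha (Ideal.algebraMap_residueField_eq_zero.mp h)
  have hfrac (i : s) : ∃ a b : A, b ∉ q ∧ algebraMap A K b * i.1 = algebraMap A K a := by
    obtain ⟨a, b, hb, h⟩ := IsFractionRing.div_surjective (A ⧸ q) i.1
    obtain ⟨a, rfl⟩ := Ideal.Quotient.mk_surjective a
    obtain ⟨b, rfl⟩ := Ideal.Quotient.mk_surjective b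
    have hb' : b ∉ q := fun hb0 =>
      nonZeroDivisors.ne_zero hb (Ideal.Quotient.eq_zero_iff_mem.mpr hb0)
    refine ⟨a, b, hb', ?_⟩
    rw [← h]
    change algebraMap A K b * (algebraMap A K a / algebraMap A K b) = _
    exact mul_div_cancel₀ _ (hK hb')
  choose a b hb hab using hfrac
  let c : A := ∏ i, b i
  have hc : c ∉ q := by
    simp only [c, hq.prod_mem_iff, not_exists, not_and]
    exact fun i _ => hb i
  have hcK : IsUnit (algebraMap A K c) := isUnit_iff_ne_zero.mpr (hK hc)
  have hc0 : c ≠ 0 := fun h => hc (h ▸ zero_mem _)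
  let A' := Localization.Away c
  have : IsDomain A' := IsLocalization.Away.isDomain _ hc0
  let : Algebra A' K := (IsLocalization.Away.lift c hcK).toAlgebra
  have : IsScalarTower A A' K := .of_algebraMap_eq fun r =>
    (IsLocalization.Away.lift_eq c hcK r).symm
  have : IsScalarTower k A' K := .of_algebraMap_eq fun r => by
    rw [IsScalarTower.algebraMap_apply k A K, IsScalarTower.algebraMap_apply A A' K,
      ← IsScalarTower.algebraMap_apply k A A']
  have : Algebra.FiniteType k A' :=
    .trans (S := A) inferInstance (IsLocalization.finiteType_of_monoid_fg (.powers c) _)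
  have hker : RingHom.ker (algebraMap A' K) = Ideal.span {algebraMap A A' x} := by
    apply le_antisymm
    · intro t ht
      have h := IsLocalization.Away.sec_spec c t
      have hu : IsUnit (algebraMap A A' (c ^ (IsLocalization.Away.sec c t).2)) := by
        rw [map_pow]; exact (IsLocalization.Away.algebraMap_isUnit c).pow _
      have hmem : (IsLocalization.Away.sec c t).1 ∈ q := by
        rw [← Ideal.algebraMap_residueField_eq_zero, IsScalarTower.algebraMap_apply A A' K, ← h,
          map_mul, RingHom.mem_ker.mp ht, zero_mul]
      obtain ⟨d, hd⟩ := Ideal.mem_span_singleton.mp hmem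
      rw [hd, map_mul] at h
      rw [Ideal.mem_span_singleton, ← hu.dvd_mul_right, h]
      exact dvd_mul_right _ _
    · rw [Ideal.span_singleton_le_iff_mem, RingHom.mem_ker, ← IsScalarTower.algebraMap_apply]
      exact Ideal.algebraMap_residueField_eq_zero.mpr (Ideal.mem_span_singleton_self x)
  have hbu (i : s) : IsUnit (algebraMap A A' (b i)) :=
    IsLocalization.Away.isUnit_of_dvd c (Finset.dvd_prod_of_mem b (Finset.mem_univ i))
  let y (i : s) : A' := algebraMap A A' (a i) * ((hbu i).unit⁻¹ : A'ˣ)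
  have hy : (fun i => algebraMap A' K (y i)) = ((↑) : s → K) := by
    funext i
    have h1 : algebraMap A K (b i) ≠ 0 := hK (hb i)
    apply mul_left_cancel₀ h1
    rw [hab, IsScalarTower.algebraMap_apply A A' K, IsScalarTower.algebraMap_apply A A' K,
      ← map_mul]
    congr 1
    rw [mul_left_comm, IsUnit.mul_val_inv, mul_one]
  have hind : AlgebraicIndependent k (fun i => algebraMap A' K (y i)) := hy ▸ hs.1
  have : Algebra.IsSeparable (IntermediateField.adjoin k
      (Set.range fun i => algebraMap A' K (y i))) K := by
    have h : Set.range (fun i => algebraMap A' K (y i)) = (s : Set K) := by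
      rw [hy]
      exact Subtype.range_coe
    exact h ▸ hsep
  have hx0' : algebraMap A A' x ≠ 0 := by
    rw [Ne, IsLocalization.to_map_eq_zero_iff A' (powers_le_nonZeroDivisors_of_noZeroDivisors hc0)]
    exact hx0
  obtain ⟨g, hg, hz⟩ := exists_etale_of_isTranscendenceBasis (K := K) (algebraMap A A' x) hx0'
    hker y hind
  refine ⟨c * (IsLocalization.Away.sec c g).1, ?_, ?_⟩
  · refine hq.mul_notMem hc fun hmem => hg ?_
    rw [← hker, RingHom.mem_ker]
    have h := congrArg (algebraMap A' K) (IsLocalization.Away.sec_spec c g)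
    rw [map_mul, ← IsScalarTower.algebraMap_apply, ← IsScalarTower.algebraMap_apply,
      Ideal.algebraMap_residueField_eq_zero.mpr hmem, map_pow] at h
    exact (mul_eq_zero.mp h).resolve_right (pow_ne_zero _ hcK.ne_zero)
  · intro B _ _ _ _ _
    have : IsLocalization.Away (c * (IsLocalization.Away.sec c g).1) (Localization.Away g) :=
      IsLocalization.Away.mul_of_associated c _ g (IsLocalization.Away.associated_sec_fst c g)
    let e : Localization.Away g ≃ₐ[A] B := IsLocalization.algEquiv
      (.powers (c * (IsLocalization.Away.sec c g).1)) _ _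
    refine ⟨Fintype.card s, _, ?_, (hz.map_algEquiv (e.restrictScalars k)).comp_equiv
      (Equiv.optionCongr (Fintype.equivFin s).symm)⟩
    simp only [Function.comp_apply, Equiv.optionCongr_apply, Option.map_none, Option.elim_none,
      AlgEquiv.restrictScalars_apply]
    rw [← IsScalarTower.algebraMap_apply, e.commutes]

end EtaleCoordinates

section FibrePower

attribute [local instance] MvPolynomial.gradedAlgebra

theorem IsProjective.locallyOfFiniteType {k : Type u} [Field k] {X : Scheme.{u}}
    {f : X ⟶ Spec (.of k)} (hf : IsProjective f) : LocallyOfFiniteType f := by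
  obtain ⟨N, i, hi, rfl⟩ := hf
  have hcomp : (algebraMap (MvPolynomial.homogeneousSubmodule (Fin (N + 1)) k 0)
      (MvPolynomial (Fin (N + 1)) k)).comp
      (algebraMap k (MvPolynomial.homogeneousSubmodule (Fin (N + 1)) k 0)) =
      algebraMap k (MvPolynomial (Fin (N + 1)) k) := rfl
  have : IsScalarTower k (MvPolynomial.homogeneousSubmodule (Fin (N + 1)) k 0)
      (MvPolynomial (Fin (N + 1)) k) := .of_algebraMap_eq' hcomp.symm
  have : Algebra.FiniteType (MvPolynomial.homogeneousSubmodule (Fin (N + 1)) k 0)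
      (MvPolynomial (Fin (N + 1)) k) := .of_restrictScalars_finiteType k _ _
  have hsurj : Function.Surjective
      (algebraMap k (MvPolynomial.homogeneousSubmodule (Fin (N + 1)) k 0)) := by
    rintro ⟨p, hp⟩
    refine ⟨p.coeff 0, Subtype.ext ?_⟩
    exact (MvPolynomial.totalDegree_eq_zero_iff_eq_C.mp
      ((MvPolynomial.totalDegree_zero_iff_isHomogeneous _).mpr hp)).symm
  have : LocallyOfFiniteType (Spec.map (CommRingCat.ofHom
      (algebraMap k (MvPolynomial.homogeneousSubmodule (Fin (N + 1)) k 0)))) := by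
    have := IsClosedImmersion.spec_of_surjective (CommRingCat.ofHom
      (algebraMap k (MvPolynomial.homogeneousSubmodule (Fin (N + 1)) k 0))) hsurj
    infer_instance
  infer_instance

variable {X S : Scheme.{u}} (f : X ⟶ S)

/-- The morphism to a fibre power with given components. -/
noncomputable def fibrePowerLift {T : Scheme.{u}} {r : ℕ} (b : T ⟶ S) (g : Fin r → (T ⟶ X))
    (w : ∀ i, g i ≫ f = b) : T ⟶ fibrePower f r :=
  WidePullback.lift b g w

variable {f} in
@[simp]
theorem fibrePowerLift_π {T : Scheme.{u}} {r : ℕ} (b : T ⟶ S) (g : Fin r → (T ⟶ X))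
    (w : ∀ i, g i ≫ f = b) (i : Fin r) :
    fibrePowerLift f b g w ≫ WidePullback.π (fun _ => f) i = g i :=
  WidePullback.lift_π _ _ _ _ _

variable {f} in
@[simp]
theorem fibrePowerLift_base {T : Scheme.{u}} {r : ℕ} (b : T ⟶ S) (g : Fin r → (T ⟶ X))
    (w : ∀ i, g i ≫ f = b) :
    fibrePowerLift f b g w ≫ WidePullback.base (fun _ => f) = b :=
  WidePullback.lift_base _ _ _ _

/-- The projection of a fibre power that forgets the first factor. -/
noncomputable def fibrePowerTail (r : ℕ) : fibrePower f (r + 1) ⟶ fibrePower f r :=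
  fibrePowerLift f (WidePullback.base _) (fun i => WidePullback.π (fun _ => f) i.succ)
    fun _ => WidePullback.π_arrow _ _

theorem isPullback_fibrePowerTail (r : ℕ) :
    IsPullback (fibrePowerTail f r) (WidePullback.π (fun _ => f) 0) (WidePullback.base _) f where
  w := (fibrePowerLift_base _ _ _).trans (WidePullback.π_arrow (fun _ => f) 0).symm
  isLimit' := ⟨PullbackCone.IsLimit.mk _
    (fun s => fibrePowerLift f (s.snd ≫ f)
      (Fin.cases s.snd fun i => s.fst ≫ WidePullback.π (fun _ => f) i) (by
        refine Fin.cases ?_ fun i => ?_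
        · simp
        · simp [← s.condition]))
    (fun s => by
      apply WidePullback.hom_ext
      · intro i
        rw [Category.assoc, fibrePowerTail, fibrePowerLift_π, fibrePowerLift_π]
        rfl
      · rw [Category.assoc, fibrePowerTail, fibrePowerLift_base, fibrePowerLift_base, s.condition])
    (fun s => fibrePowerLift_π _ _ _ 0)
    (fun s m h1 h2 => by
      apply WidePullback.hom_ext
      · refine Fin.cases ?_ fun i => ?_
        · rw [h2, fibrePowerLift_π]
          rfl
        · rw [fibrePowerLift_π, Fin.cases_succ, ← h1, Category.assoc, fibrePowerTail,
            fibrePowerLift_π]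
      · rw [fibrePowerLift_base, ← h2, Category.assoc, WidePullback.π_arrow])⟩

theorem locallyOfFiniteType_base [LocallyOfFiniteType f] (r : ℕ) :
    LocallyOfFiniteType (WidePullback.base (fun _ : Fin r => f)) := by
  induction r with
  | zero =>
    have : IsIso (WidePullback.base (fun _ : Fin 0 => f)) :=
      ⟨fibrePowerLift f (𝟙 S) (fun i => i.elim0) (fun i => i.elim0), by
        apply WidePullback.hom_ext
        · exact fun i => i.elim0
        · rw [Category.assoc, fibrePowerLift_base, Category.comp_id, Category.id_comp],
        fibrePowerLift_base _ _ _⟩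
    infer_instance
  | succ r ih =>
    have : LocallyOfFiniteType (fibrePowerTail f r) :=
      MorphismProperty.of_isPullback (isPullback_fibrePowerTail f r).flip ‹_›
    have h : WidePullback.base (fun _ : Fin (r + 1) => f) =
        fibrePowerTail f r ≫ WidePullback.base _ := (fibrePowerLift_base _ _ _).symm
    rw [h]
    infer_instance

theorem tuplePoint_π {r : ℕ} (p : Fin r → RatPoint f) (i : Fin r) :
    tuplePoint f p ≫ WidePullback.π (fun _ => f) i = (p i).1 :=
  WidePullback.lift_π _ _ _ _ _

theorem tuplePoint_base {r : ℕ} (p : Fin r → RatPoint f) :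
    tuplePoint f p ≫ WidePullback.base (fun _ => f) = 𝟙 S :=
  WidePullback.lift_base _ _ _ _

variable {r : ℕ}

/-- The slice of a fibre power through a tuple of points, in the direction of one factor. -/
noncomputable def slice (p : Fin r → RatPoint f) (i : Fin r) : X ⟶ fibrePower f r :=
  fibrePowerLift f f (fun j => if j = i then 𝟙 X else f ≫ (p j).1) fun j => by
    split_ifs
    · simp
    · simp [(p j).2]

theorem ratPoint_slice (p : Fin r → RatPoint f) (i : Fin r) (t : RatPoint f) :
    t.1 ≫ slice f p i = tuplePoint f (Function.update p i t) := by
  apply WidePullback.hom_ext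
  · intro j
    by_cases h : j = i
    · subst h
      rw [Category.assoc, slice, fibrePowerLift_π, if_pos rfl, tuplePoint_π, Function.update_self,
        Category.comp_id]
    · rw [Category.assoc, slice, fibrePowerLift_π, if_neg h, tuplePoint_π,
        Function.update_of_ne h, ← Category.assoc, t.2, Category.id_comp]
  · rw [Category.assoc, slice, fibrePowerLift_base, tuplePoint_base, t.2]

end FibrePower

section GenericTuples

variable {k : Type u} [Field k] [IsAlgClosed k] {X : Scheme.{u}} (f : X ⟶ Spec (.of k))
  [LocallyOfFiniteType f]

theorem exists_ratPoint_mem (U : X.Opens) (hU : (U : Set X).Nonempty) :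
    ∃ p : RatPoint f, p.1 (IsLocalRing.closedPoint k) ∈ U := by
  have : JacobsonSpace X := LocallyOfFiniteType.jacobsonSpace f
  obtain ⟨x, hxU, hx⟩ := nonempty_inter_closedPoints hU U.2.isLocallyClosed
  exact ⟨⟨pointOfClosedPoint f x hx, pointOfClosedPoint_comp f x hx⟩, by
    rw [show pointOfClosedPoint f x hx (IsLocalRing.closedPoint k) = x from
      pointOfClosedPoint_apply f x hx _]
    exact hxU⟩

variable {r : ℕ}

theorem exists_tuplePoint_mem (U : (fibrePower f r).Opens)
    (hU : (U : Set (fibrePower f r)).Nonempty) :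
    ∃ p : Fin r → RatPoint f, tuplePoint f p (IsLocalRing.closedPoint k) ∈ U := by
  have := locallyOfFiniteType_base f r
  obtain ⟨p, hp⟩ := exists_ratPoint_mem (WidePullback.base (fun _ : Fin r => f)) U hU
  refine ⟨fun i => ⟨p.1 ≫ WidePullback.π (fun _ => f) i, by simpa using p.2⟩, ?_⟩
  suffices h : tuplePoint f (fun i => ⟨p.1 ≫ WidePullback.π (fun _ => f) i, by simpa using p.2⟩) =
      p.1 by rwa [h]
  apply WidePullback.hom_ext
  · intro i
    rw [tuplePoint_π]
  · rw [tuplePoint_base, p.2]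

/-- A nonempty open subset of a power of an irreducible scheme over an algebraically closed field
meets every other one. -/
theorem exists_tuplePoint_mem_inter [IrreducibleSpace X] (O₁ O₂ : (fibrePower f r).Opens)
    (s : Finset (Fin r)) (p q : Fin r → RatPoint f) (hpq : ∀ i ∉ s, p i = q i)
    (hp : tuplePoint f p (IsLocalRing.closedPoint k) ∈ O₁)
    (hq : tuplePoint f q (IsLocalRing.closedPoint k) ∈ O₂) :
    ∃ t : Fin r → RatPoint f, tuplePoint f t (IsLocalRing.closedPoint k) ∈ O₁ ⊓ O₂ := by
  induction s using Finset.induction_on generalizing p q with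
  | empty =>
    obtain rfl : p = q := funext fun i => hpq i (by simp)
    exact ⟨p, hp, hq⟩
  | insert i s hi ih =>
    have key (p : Fin r → RatPoint f) (t : RatPoint f) (O : (fibrePower f r).Opens) :
        t.1 (IsLocalRing.closedPoint k) ∈ slice f p i ⁻¹ᵁ O ↔
          tuplePoint f (Function.update p i t) (IsLocalRing.closedPoint k) ∈ O := by
      rw [← ratPoint_slice]
      rfl
    have h1 : ((slice f p i ⁻¹ᵁ O₁ : X.Opens) : Set X).Nonempty :=
      ⟨(p i).1 (IsLocalRing.closedPoint k), (key p (p i) O₁).mpr (by simpa using hp)⟩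
    have h2 : ((slice f q i ⁻¹ᵁ O₂ : X.Opens) : Set X).Nonempty :=
      ⟨(q i).1 (IsLocalRing.closedPoint k), (key q (q i) O₂).mpr (by simpa using hq)⟩
    obtain ⟨t, ht1, ht2⟩ := exists_ratPoint_mem f (slice f p i ⁻¹ᵁ O₁ ⊓ slice f q i ⁻¹ᵁ O₂)
      (nonempty_preirreducible_inter (slice f p i ⁻¹ᵁ O₁).2 (slice f q i ⁻¹ᵁ O₂).2 h1 h2)
    refine ih _ _ (fun j hj => ?_) ((key p t O₁).mp ht1) ((key q t O₂).mp ht2)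
    by_cases h : j = i
    · subst h; simp
    · simp [h, hpq j (by simp [h, hj])]

theorem dense_of_tuplePoint_mem [IrreducibleSpace X] (O : (fibrePower f r).Opens)
    (p : Fin r → RatPoint f) (hp : tuplePoint f p (IsLocalRing.closedPoint k) ∈ O) :
    Dense (O : Set (fibrePower f r)) := by
  rw [dense_iff_inter_open]
  intro U hU hne
  obtain ⟨q, hq⟩ := exists_tuplePoint_mem f ⟨U, hU⟩ hne
  obtain ⟨t, ht⟩ := exists_tuplePoint_mem_inter f ⟨U, hU⟩ O Finset.univ q p
    (by simp) hq hp
  exact ⟨_, ht⟩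

end GenericTuples

section Frames

variable {X : Scheme.{u}}

/-- Restriction of regular functions. -/
noncomputable def resO {U V : X.Opens} (h : V ≤ U) : Γ(X, U) →+* Γ(X, V) :=
  (X.presheaf.map (homOfLE h).op).hom

/-- Restriction of sections of a sheaf of modules. -/
noncomputable def res (M : X.Modules) {U V : X.Opens} (h : V ≤ U) : Γ(M, U) →+ Γ(M, V) :=
  (M.presheaf.map (homOfLE h).op).hom

variable (M : X.Modules) {U V W : X.Opens}

theorem resO_resO (h : V ≤ U) (h' : W ≤ V) (a : Γ(X, U)) :
    resO h' (resO h a) = resO (h'.trans h) a := by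
  simp only [resO, ← CommRingCat.comp_apply, ← Functor.map_comp, ← op_comp, homOfLE_comp]

theorem resO_self (h : U ≤ U) (a : Γ(X, U)) : resO h a = a := by
  rw [resO, show (homOfLE h).op = 𝟙 _ from rfl, X.presheaf.map_id]
  rfl

theorem res_res (h : V ≤ U) (h' : W ≤ V) (s : Γ(M, U)) :
    res M h' (res M h s) = res M (h'.trans h) s := by
  change (M.presheaf.map (homOfLE h).op ≫ M.presheaf.map (homOfLE h').op) s = _
  rw [← Functor.map_comp]
  rfl

theorem res_self (h : U ≤ U) (s : Γ(M, U)) : res M h s = s := by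
  rw [res, show (homOfLE h).op = 𝟙 _ from rfl, M.presheaf.map_id]
  rfl

theorem res_smul (h : V ≤ U) (a : Γ(X, U)) (s : Γ(M, U)) :
    res M h (a • s) = resO h a • res M h s :=
  M.map_smul (homOfLE h) a s

theorem eq_of_res_eq {ι : Type*} (O : ι → X.Opens) (hO : ∀ i, O i ≤ U) (hcov : U ≤ ⨆ i, O i)
    {s t : Γ(M, U)} (h : ∀ i, res M (hO i) s = res M (hO i) t) : s = t :=
  TopCat.Sheaf.eq_of_locally_eq' ⟨M.presheaf, M.isSheaf⟩ O U (fun i => homOfLE (hO i)) hcov s t h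

theorem exists_gluing {ι : Type*} (O : ι → X.Opens) (hO : ∀ i, O i ≤ U) (hcov : U ≤ ⨆ i, O i)
    (s : ∀ i, Γ(M, O i))
    (h : ∀ i j, res M (inf_le_left : O i ⊓ O j ≤ O i) (s i) =
      res M (inf_le_right : O i ⊓ O j ≤ O j) (s j)) :
    ∃ t : Γ(M, U), ∀ i, res M (hO i) t = s i :=
  (TopCat.Sheaf.existsUnique_gluing' ⟨M.presheaf, M.isSheaf⟩ O U (fun i => homOfLE (hO i)) hcov s
    h).exists

variable {M}

/-- A section is a frame if it freely generates the sheaf over its domain. -/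
def IsFrame (e : Γ(M, U)) : Prop :=
  ∀ (V : X.Opens) (h : V ≤ U), Function.Bijective fun a : Γ(X, V) => a • res M h e

theorem IsFrame.restrict {e : Γ(M, U)} (he : IsFrame e) (h : V ≤ U) : IsFrame (res M h e) := by
  intro W hW
  simpa only [res_res] using he W (hW.trans h)

theorem IsFrame.exists_eq_smul {e : Γ(M, U)} (he : IsFrame e) (s : Γ(M, U)) :
    ∃ a : Γ(X, U), s = a • e := by
  obtain ⟨a, ha⟩ := (he U le_rfl).2 s
  exact ⟨a, by rw [← ha]; simp only [res_self]⟩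

theorem IsFrame.smul_injective {e : Γ(M, U)} (he : IsFrame e) {a b : Γ(X, U)}
    (h : a • e = b • e) : a = b :=
  (he U le_rfl).1 (by simpa only [res_self] using h)

theorem IsFrame.smul_mem_iff {e : Γ(M, U)} (he : IsFrame e) (I : Ideal Γ(X, U)) {a : Γ(X, U)} :
    a • e ∈ I • (⊤ : Submodule Γ(X, U) Γ(M, U)) ↔ a ∈ I := by
  refine ⟨fun h => ?_, fun h => Submodule.smul_mem_smul h trivial⟩
  suffices ∀ s ∈ I • (⊤ : Submodule Γ(X, U) Γ(M, U)), ∃ b ∈ I, s = b • e by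
    obtain ⟨b, hb, hab⟩ := this _ h
    rwa [he.smul_injective hab]
  intro s hs
  induction hs using Submodule.smul_induction_on' with
  | smul c hc t ht =>
    obtain ⟨d, rfl⟩ := he.exists_eq_smul t
    exact ⟨c * d, I.mul_mem_right d hc, by rw [mul_smul]⟩
  | add s hs t ht ihs iht =>
    obtain ⟨b, hb, rfl⟩ := ihs
    obtain ⟨c, hc, rfl⟩ := iht
    exact ⟨b + c, add_mem hb hc, by rw [add_smul]⟩

/-- The structure sheaf of a scheme, as a sheaf of modules. -/
noncomputable abbrev structureModule (Z : Scheme.{u}) : Z.Modules :=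
  SheafOfModules.unit Z.ringCatSheaf

/-- The function `1`, as a section of the structure sheaf. -/
def oneSection (Z : Scheme.{u}) (V : Z.Opens) : Γ(structureModule Z, V) :=
  (1 : Γ(Z, V))

theorem map_oneSection {Z : Scheme.{u}} {V W : Z.Opens} (i : W ⟶ V) :
    (structureModule Z).presheaf.map i.op (oneSection Z V) = oneSection Z W :=
  map_one (Z.presheaf.map i.op).hom

section Trivialization

variable {U : X.Opens} (θ : M.restrict U.ι ≅ structureModule U.toScheme)

/-- The frame given by a trivialization. -/
noncomputable def frameOf : Γ(M, U.ι ''ᵁ ⊤) :=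
  (θ.inv.app ⊤ (oneSection _ ⊤) : Γ(M.restrict U.ι, ⊤))

theorem res_frameOf {V : U.toScheme.Opens} (hV : U.ι ''ᵁ V ≤ U.ι ''ᵁ ⊤) :
    res M hV (frameOf θ) = θ.inv.app V (oneSection _ V) :=
  (ConcreteCategory.congr_hom (θ.inv.mapPresheaf.naturality
    (homOfLE (le_top : V ≤ ⊤)).op) (oneSection _ ⊤)).symm.trans
    (congrArg (θ.inv.app V) (map_oneSection _))

theorem isFrame_frameOf : IsFrame (frameOf θ) := by
  intro V hV
  obtain ⟨V', rfl⟩ : ∃ V', V = U.ι ''ᵁ V' := ⟨U.ι ⁻¹ᵁ V, by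
    rw [Scheme.Hom.image_preimage_eq_opensRange_inf]
    exact (inf_eq_right.mpr (by simpa using hV)).symm⟩
  let e' : Γ(M, U.ι ''ᵁ V') := θ.inv.app V' (oneSection _ V')
  have h1 : res M hV (frameOf θ) = e' := res_frameOf θ hV
  have h2 (b : Γ(U.toScheme, V')) : θ.inv.app V' b = (U.ι.appIso V').inv b • e' := by
    refine Eq.trans (congrArg (θ.inv.app V') ?_) (θ.inv.app_smul b (oneSection _ V'))
    exact (mul_one b).symm
  have h3 : (fun a : Γ(X, U.ι ''ᵁ V') => a • res M hV (frameOf θ)) =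
      (θ.inv.app V') ∘ (U.ι.appIso V').hom := by
    funext a
    refine Eq.trans ?_ (h2 _).symm
    rw [h1]
    exact congrArg (· • e') (ConcreteCategory.congr_hom (U.ι.appIso V').hom_inv_id a).symm
  have : IsIso (θ.inv.app V') :=
    Scheme.Modules.Hom.isIso_iff_isIso_app.mp θ.isIso_inv V'
  rw [h3]
  exact (ConcreteCategory.bijective_of_isIso (θ.inv.app V')).comp
    (ConcreteCategory.bijective_of_isIso (U.ι.appIso V').hom)

end Trivialization

theorem IsLineBundle.exists_isFrame (hM : IsLineBundle M) (x : X) :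
    ∃ (U : X.Opens) (e : Γ(M, U)), x ∈ U ∧ IsFrame e := by
  obtain ⟨U, hxU, ⟨θ⟩⟩ := hM x
  exact ⟨U.ι ''ᵁ ⊤, frameOf θ, by simpa using hxU, isFrame_frameOf θ⟩

end Frames

section QuasiCoherence

variable {X : Scheme.{u}} {M : X.Modules} {U V : X.Opens}

theorem resO_pow_mul_eq_zero (hV : IsAffineOpen V) {f a : Γ(X, V)}
    (h : resO (X.basicOpen_le f) a = 0) : ∃ n : ℕ, f ^ n * a = 0 :=
  exists_pow_mul_eq_zero_of_res_basicOpen_eq_zero_of_isAffineOpen X hV a f h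

theorem exists_resO_eq_pow_mul (hV : IsAffineOpen V) (f : Γ(X, V)) (a : Γ(X, X.basicOpen f)) :
    ∃ (n : ℕ) (b : Γ(X, V)), resO (X.basicOpen_le f) b = resO (X.basicOpen_le f) f ^ n * a :=
  exists_eq_pow_mul_of_isAffineOpen X V hV f a

theorem basicOpen_resO (h : V ≤ U) (f : Γ(X, U)) : X.basicOpen (resO h f) = V ⊓ X.basicOpen f :=
  X.basicOpen_res f (homOfLE h).op

theorem IsFrame.exists_pow_smul_eq_zero (hV : IsAffineOpen V) {e : Γ(M, V)} (he : IsFrame e)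
    {f : Γ(X, V)} {D : X.Opens} (hD : D = X.basicOpen f) (hDV : D ≤ V) {t : Γ(M, V)}
    (h : res M hDV t = 0) : ∃ n : ℕ, f ^ n • t = 0 := by
  subst hD
  obtain ⟨a, rfl⟩ := he.exists_eq_smul t
  rw [res_smul, ← zero_smul Γ(X, X.basicOpen f) (res M hDV e)] at h
  obtain ⟨n, hn⟩ := resO_pow_mul_eq_zero hV ((he.restrict hDV).smul_injective h)
  exact ⟨n, by rw [smul_smul, hn, zero_smul]⟩

theorem IsFrame.exists_res_eq_pow_smul (hV : IsAffineOpen V) {e : Γ(M, V)} (he : IsFrame e)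
    {f : Γ(X, V)} {D : X.Opens} (hD : D = X.basicOpen f) (hDV : D ≤ V) (t : Γ(M, D)) :
    ∃ (n : ℕ) (t' : Γ(M, V)), res M hDV t' = resO hDV f ^ n • t := by
  subst hD
  obtain ⟨a, rfl⟩ := (he.restrict hDV).exists_eq_smul t
  obtain ⟨n, b, hb⟩ := exists_resO_eq_pow_mul hV f a
  exact ⟨n, b • e, by rw [res_smul, hb, mul_smul]⟩

theorem exists_finset_isFrame (hM : IsLineBundle M) (hU : IsAffineOpen U) :
    ∃ s : Finset Γ(X, U), U ≤ ⨆ g : s, X.basicOpen g.1 ∧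
      ∀ g ∈ s, ∃ e : Γ(M, X.basicOpen g), IsFrame e := by
  let S : Set Γ(X, U) := {g | ∃ e : Γ(M, X.basicOpen g), IsFrame e}
  have hS : Ideal.span S = ⊤ := by
    rw [← hU.self_le_iSup_basicOpen_iff]
    intro x hx
    obtain ⟨O, e, hxO, he⟩ := hM.exists_isFrame x
    obtain ⟨g, hg, hxg⟩ := hU.exists_basicOpen_le ⟨x, hxO⟩ hx
    exact TopologicalSpace.Opens.mem_iSup.mpr ⟨⟨g, res M hg e, he.restrict hg⟩, hxg⟩
  obtain ⟨s, hsS, hs⟩ := (Ideal.span_eq_top_iff_finite S).mp hS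
  exact ⟨s, hU.self_le_iSup_basicOpen_iff.mpr hs, fun g hg => hsS hg⟩

/-- A section over an affine open vanishing on `D(f)` is killed by a power of `f`. -/
theorem IsLineBundle.exists_pow_smul_eq_zero (hM : IsLineBundle M) (hU : IsAffineOpen U)
    (f : Γ(X, U)) {t : Γ(M, U)} (h : res M (X.basicOpen_le f) t = 0) : ∃ n : ℕ, f ^ n • t = 0 := by
  obtain ⟨s, hcov, hs⟩ := exists_finset_isFrame hM hU
  have key (g : s) : ∃ n : ℕ,
      resO (X.basicOpen_le g.1) (f ^ n) • res M (X.basicOpen_le g.1) t = 0 := by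
    obtain ⟨e, he⟩ := hs g.1 g.2
    obtain ⟨n, hn⟩ := he.exists_pow_smul_eq_zero (hU.basicOpen g.1)
      (basicOpen_resO (X.basicOpen_le g.1) f).symm inf_le_left
      (t := res M (X.basicOpen_le g.1) t) (by
        rw [res_res, ← res_res M (X.basicOpen_le f) inf_le_right, h, map_zero])
    exact ⟨n, by rw [map_pow, hn]⟩
  choose n hn using key
  refine ⟨Finset.univ.sup n, eq_of_res_eq M _ (fun g : s => X.basicOpen_le g.1) hcov fun g => ?_⟩
  obtain ⟨d, hd⟩ := Nat.exists_eq_add_of_le (Finset.le_sup (f := n) (Finset.mem_univ g))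
  rw [map_zero, res_smul, hd, pow_add, mul_comm, map_mul, mul_smul, hn, smul_zero]

/-- A section over `D(f)` extends to the ambient affine open after multiplication by a power
of `f`. -/
theorem IsLineBundle.exists_res_eq_pow_smul (hM : IsLineBundle M) (hU : IsAffineOpen U)
    (f : Γ(X, U)) (t : Γ(M, X.basicOpen f)) :
    ∃ (n : ℕ) (t' : Γ(M, U)),
      res M (X.basicOpen_le f) t' = resO (X.basicOpen_le f) f ^ n • t := by
  obtain ⟨s, hcov, hs⟩ := exists_finset_isFrame hM hU
  let O (g : s) : X.Opens := X.basicOpen g.1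
  have hO (g : s) : O g ≤ U := X.basicOpen_le g.1
  have hOa (g : s) : IsAffineOpen (O g) := hU.basicOpen g.1
  have key (g : s) : ∃ (n : ℕ) (t' : Γ(M, O g)),
      res M inf_le_left t' =
        resO ((inf_le_left : O g ⊓ X.basicOpen f ≤ O g).trans (hO g)) (f ^ n) •
        res M (inf_le_right : O g ⊓ X.basicOpen f ≤ X.basicOpen f) t := by
    obtain ⟨e, he⟩ := hs g.1 g.2
    obtain ⟨n, t', ht'⟩ := he.exists_res_eq_pow_smul (hOa g) (f := resO (hO g) f)
      (basicOpen_resO (hO g) f).symm inf_le_left (res M inf_le_right t)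
    exact ⟨n, t', by rw [ht', resO_resO, map_pow]⟩
  choose n t' ht' using key
  let N := Finset.univ.sup n
  let t'' (g : s) : Γ(M, O g) := resO (hO g) (f ^ (N - n g)) • t' g
  have ht'' (g : s) : res M inf_le_left (t'' g) =
      resO ((inf_le_left : O g ⊓ X.basicOpen f ≤ O g).trans (hO g)) (f ^ N) •
        res M (inf_le_right : O g ⊓ X.basicOpen f ≤ X.basicOpen f) t := by
    rw [res_smul, ht', resO_resO, smul_smul, ← map_mul, ← pow_add,
      Nat.sub_add_cancel (Finset.le_sup (Finset.mem_univ g))]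
  have hcomp (p : s × s) : ∃ d : ℕ,
      resO ((inf_le_left : O p.1 ⊓ O p.2 ≤ O p.1).trans (hO p.1)) (f ^ d) •
      (res M (inf_le_left : O p.1 ⊓ O p.2 ≤ O p.1) (t'' p.1) -
        res M (inf_le_right : O p.1 ⊓ O p.2 ≤ O p.2) (t'' p.2)) = 0 := by
    obtain ⟨e, he⟩ := hs p.1.1 p.1.2
    have haff : IsAffineOpen (O p.1 ⊓ O p.2) := by
      have := hU.basicOpen (p.1.1 * p.2.1)
      rwa [X.basicOpen_mul] at this
    obtain ⟨d, hd⟩ := (he.restrict (inf_le_left : O p.1 ⊓ O p.2 ≤ O p.1)).exists_pow_smul_eq_zero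
      haff (f := resO ((inf_le_left : O p.1 ⊓ O p.2 ≤ O p.1).trans (hO p.1)) f)
      (basicOpen_resO _ f).symm inf_le_left
      (t := res M (inf_le_left : O p.1 ⊓ O p.2 ≤ O p.1) (t'' p.1) -
        res M (inf_le_right : O p.1 ⊓ O p.2 ≤ O p.2) (t'' p.2)) (by
        rw [map_sub, res_res, res_res, sub_eq_zero,
          ← res_res M (inf_le_left : O p.1 ⊓ X.basicOpen f ≤ _)
            (le_inf (inf_le_left.trans inf_le_left) inf_le_right),
          ← res_res M (inf_le_left : O p.2 ⊓ X.basicOpen f ≤ _)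
            (le_inf (inf_le_left.trans inf_le_right) inf_le_right),
          ht'', ht'', res_smul, res_smul, res_res, res_res, resO_resO, resO_resO])
    exact ⟨d, by rw [map_pow, hd]⟩
  choose d hd using hcomp
  clear_value t''
  let E := Finset.univ.sup d
  obtain ⟨T, hT⟩ := exists_gluing M O hO hcov (fun g => resO (hO g) (f ^ E) • t'' g) (by
    intro g g'
    obtain ⟨c, hc⟩ := Nat.exists_eq_add_of_le (Finset.le_sup (f := d) (Finset.mem_univ (g, g')))
    rw [← sub_eq_zero, res_smul, res_smul, resO_resO, resO_resO, ← smul_sub]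
    change resO _ (f ^ Finset.univ.sup d) • _ = _
    rw [hc, pow_add, mul_comm, map_mul, mul_smul, hd (g, g'), smul_zero])
  refine ⟨E + N, T, eq_of_res_eq M (fun g => O g ⊓ X.basicOpen f) (fun g => inf_le_right) ?_
    fun g => ?_⟩
  · rw [← iSup_inf_eq]
    exact le_inf ((X.basicOpen_le f).trans hcov) le_rfl
  · rw [res_res, ← res_res M (hO g) inf_le_left, hT, res_smul, ht'', res_smul, smul_smul,
      resO_resO, ← map_mul, ← pow_add, ← map_pow, resO_resO]

/-- Membership of a section of a line bundle in `𝓘 · M` is local. -/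
theorem IsLineBundle.mem_smul_top_of_local (hM : IsLineBundle M) (I : X.IdealSheafData)
    (U : X.affineOpens) (σ : Γ(M, U.1))
    (h : ∀ x ∈ U.1, ∃ (V : X.affineOpens) (hVU : V.1 ≤ U.1), x ∈ V.1 ∧
      res M hVU σ ∈ I.ideal V • (⊤ : Submodule Γ(X, V.1) Γ(M, V.1))) :
    σ ∈ I.ideal U • (⊤ : Submodule Γ(X, U.1) Γ(M, U.1)) := by
  let N : Set Γ(X, U.1) := {g | g • σ ∈ I.ideal U • (⊤ : Submodule Γ(X, U.1) Γ(M, U.1))}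
  suffices hN : Ideal.span N = ⊤ by
    have hle : Ideal.span N ≤ Submodule.comap (LinearMap.toSpanSingleton Γ(X, U.1) Γ(M, U.1) σ)
        (I.ideal U • (⊤ : Submodule Γ(X, U.1) Γ(M, U.1))) :=
      Ideal.span_le.mpr fun g hg => hg
    simpa using hle (hN ▸ Submodule.mem_top : (1 : Γ(X, U.1)) ∈ Ideal.span N)
  rw [← U.2.self_le_iSup_basicOpen_iff]
  intro x hx
  obtain ⟨V, hVU, hxV, hσ⟩ := h x hx
  obtain ⟨f, hfV, hxf⟩ := U.2.exists_basicOpen_le ⟨x, hxV⟩ hx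
  let J : Ideal Γ(X, X.basicOpen f) := I.ideal (X.affineBasicOpen f)
  have hσf : res M (X.basicOpen_le f) σ ∈
      J • (⊤ : Submodule Γ(X, X.basicOpen f) Γ(M, X.basicOpen f)) := by
    rw [← res_res M hVU hfV]
    generalize res M hVU σ = τ at hσ
    induction hσ using Submodule.smul_induction_on' with
    | smul c hc t ht =>
      rw [res_smul]
      exact Submodule.smul_mem_smul
        (I.ideal_le_comap_ideal (U := X.affineBasicOpen f) hfV hc) trivial
    | add s hs t ht ihs iht =>
      rw [map_add]
      exact add_mem ihs iht
  have hext : ∀ τ ∈ J • (⊤ : Submodule Γ(X, X.basicOpen f) Γ(M, X.basicOpen f)), ∃ n : ℕ,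
      ∃ τ' ∈ I.ideal U • (⊤ : Submodule Γ(X, U.1) Γ(M, U.1)),
      res M (X.basicOpen_le f) τ' = resO (X.basicOpen_le f) (f ^ n) • τ := by
    intro τ hτ
    induction hτ using Submodule.smul_induction_on' with
    | smul c hc t ht =>
      rw [show J = _ from (I.map_ideal_basicOpen U f).symm] at hc
      have := U.2.isLocalization_basicOpen f
      obtain ⟨⟨⟨c', hc'⟩, ⟨_, n, rfl⟩⟩, hcc'⟩ :=
        (IsLocalization.mem_map_algebraMap_iff (.powers f) Γ(X, X.basicOpen f)).mp hc
      obtain ⟨m, t', ht'⟩ := hM.exists_res_eq_pow_smul U.2 f t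
      refine ⟨n + m, c' • t', Submodule.smul_mem_smul hc' trivial, ?_⟩
      have hcc : c * resO (X.basicOpen_le f) (f ^ n) = resO (X.basicOpen_le f) c' := hcc'
      rw [res_smul, ht', ← hcc, smul_smul, smul_smul, pow_add, map_mul, map_pow, map_pow]
      ring_nf
    | add s hs t ht ihs iht =>
      obtain ⟨n, s', hs', h1⟩ := ihs
      obtain ⟨m, t', ht', h2⟩ := iht
      refine ⟨n + m, f ^ m • s' + f ^ n • t', add_mem (Submodule.smul_mem _ _ hs')
        (Submodule.smul_mem _ _ ht'), ?_⟩
      rw [map_add, res_smul, res_smul, h1, h2, smul_add, smul_smul, smul_smul, ← map_mul,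
        ← map_mul, ← pow_add, ← pow_add, add_comm m n]
  obtain ⟨n, τ', hτ', heq⟩ := hext _ hσf
  obtain ⟨m, hm⟩ := hM.exists_pow_smul_eq_zero U.2 f (t := f ^ n • σ - τ') (by
    rw [map_sub, heq, res_smul, sub_self])
  rw [smul_sub, sub_eq_zero] at hm
  refine TopologicalSpace.Opens.mem_iSup.mpr ⟨⟨f ^ (1 + m + n), ?_⟩, ?_⟩
  · change f ^ (1 + m + n) • σ ∈ I.ideal U • (⊤ : Submodule Γ(X, U.1) Γ(M, U.1))
    rw [pow_add, pow_add, mul_smul, mul_smul, hm]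
    exact Submodule.smul_mem _ _ (Submodule.smul_mem _ _ hτ')
  · rwa [X.basicOpen_pow f (by omega)]

end QuasiCoherence

section Pullback

variable {X Y : Scheme.{u}} (f : Y ⟶ X)

theorem final_opensMap : (TopologicalSpace.Opens.map f.base).Final where
  out d := by
    have : HasTerminal (StructuredArrow d (TopologicalSpace.Opens.map f.base)) :=
      (IsTerminal.ofUniqueHom (Y := StructuredArrow.mk (Y := (⊤ : X.Opens)) (homOfLE le_top))
        (fun V => StructuredArrow.homMk (homOfLE le_top) rfl)
        (fun V g => StructuredArrow.hom_ext _ _ (Subsingleton.elim _ _))).hasTerminal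
    exact isConnected_of_hasTerminal _

open SheafOfModules in
theorem isIso_pullbackObjUnitToUnit {C D : Type*} [Category* C] [Category* D]
    {J : GrothendieckTopology C} {K : GrothendieckTopology D} {F : C ⥤ D}
    {S : Sheaf J RingCat.{u}} {R : Sheaf K RingCat.{u}} [Functor.IsContinuous F J K]
    (φ : S ⟶ (F.sheafPushforwardContinuous RingCat.{u} J K).obj R)
    [(pushforward.{u} φ).IsRightAdjoint] [F.Final] : IsIso (pullbackObjUnitToUnit φ) :=
  inferInstance

/-- The pullback of the structure sheaf is the structure sheaf. -/
noncomputable def pullbackUnitIso :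
    (Scheme.Modules.pullback f).obj (SheafOfModules.unit X.ringCatSheaf : X.Modules) ≅
      (SheafOfModules.unit Y.ringCatSheaf : Y.Modules) :=
  haveI := final_opensMap f
  haveI : (SheafOfModules.pushforward.{u} f.toRingCatSheafHom).IsRightAdjoint :=
    (Scheme.Modules.pullbackPushforwardAdjunction f).isRightAdjoint
  @asIso Y.Modules _ _ _ (SheafOfModules.pullbackObjUnitToUnit f.toRingCatSheafHom)
    (isIso_pullbackObjUnitToUnit f.toRingCatSheafHom)

theorem IsLineBundle.pullback {M : X.Modules} (hM : IsLineBundle M) :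
    IsLineBundle ((Scheme.Modules.pullback f).obj M) := by
  intro y
  obtain ⟨U, hxU, ⟨θ⟩⟩ := hM (f y)
  refine ⟨f ⁻¹ᵁ U, hxU, ⟨?_⟩⟩
  exact (Scheme.Modules.restrictFunctorIsoPullback (f ⁻¹ᵁ U).ι).app _ ≪≫
    (Scheme.Modules.pullbackComp (f ⁻¹ᵁ U).ι f).app M ≪≫
    (Scheme.Modules.pullbackCongr (morphismRestrict_ι f U).symm).app M ≪≫
    ((Scheme.Modules.pullbackComp (f ∣_ U) U.ι).app M).symm ≪≫
    (Scheme.Modules.pullback (f ∣_ U)).mapIso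
      ((Scheme.Modules.restrictFunctorIsoPullback U.ι).symm.app M ≪≫ θ) ≪≫
    pullbackUnitIso (f ∣_ U)

end Pullback

section PullbackSections

variable {X Y : Scheme.{u}} (f : Y ⟶ X) (M : X.Modules)

/-- The pullback of sections of a sheaf of modules. -/
noncomputable def pullbackSection (U : X.Opens) :
    Γ(M, U) →+ Γ((Scheme.Modules.pullback f).obj M, f ⁻¹ᵁ U) :=
  (((Scheme.Modules.pullbackPushforwardAdjunction f).unit.app M).app U).hom

theorem pullbackSection_smul {U : X.Opens} (a : Γ(X, U)) (s : Γ(M, U)) :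
    pullbackSection f M U (a • s) = f.app U a • pullbackSection f M U s :=
  ((Scheme.Modules.pullbackPushforwardAdjunction f).unit.app M).app_smul a s

theorem pullbackSection_res {U V : X.Opens} (h : V ≤ U) (s : Γ(M, U)) :
    pullbackSection f M V (res M h s) =
      res _ (f.preimage_mono h) (pullbackSection f M U s) :=
  ConcreteCategory.congr_hom
    (((Scheme.Modules.pullbackPushforwardAdjunction f).unit.app M).mapPresheaf.naturality
      (homOfLE h).op) s

variable {M}

theorem app_eq_zero_of_pullbackSection_eq_zero {N : Y.Modules}
    (Φ : M ⟶ (Scheme.Modules.pushforward f).obj N) {U : X.Opens} {s : Γ(M, U)}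
    (h : pullbackSection f M U s = 0) : Φ.app U s = 0 := by
  let adj := Scheme.Modules.pullbackPushforwardAdjunction f
  have hΦ : Φ = adj.unit.app M ≫ (Scheme.Modules.pushforward f).map ((adj.homEquiv _ _).symm Φ) :=
    ((adj.homEquiv M N).apply_symm_apply Φ).symm.trans (adj.homEquiv_unit _ _ _)
  rw [hΦ]
  exact (congrArg (((Scheme.Modules.pushforward f).map ((adj.homEquiv _ _).symm Φ)).app U) h).trans
    (map_zero (((Scheme.Modules.pushforward f).map ((adj.homEquiv _ _).symm Φ)).app U).hom)

/-- The comorphism of a morphism of schemes, as a morphism of sheaves of modules. -/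
noncomputable def structureModuleHom {Z T : Scheme.{u}} (g : T ⟶ Z) :
    structureModule Z ⟶ (Scheme.Modules.pushforward g).obj (structureModule T) :=
  SheafOfModules.unitToPushforwardObjUnit g.toRingCatSheafHom

theorem structureModuleHom_oneSection {Z T : Scheme.{u}} (g : T ⟶ Z) (V : Z.Opens) :
    (structureModuleHom g).app V (oneSection Z V) = oneSection T (g ⁻¹ᵁ V) :=
  map_one (g.app V).hom

variable {U : X.Opens} (θ : M.restrict U.ι ≅ structureModule U.toScheme)

/-- The morphism from a trivialized module to the pushforward of the structure sheaf. -/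
noncomputable def trivializationHom : M ⟶ (Scheme.Modules.pushforward f).obj
    ((Scheme.Modules.pushforward (f ⁻¹ᵁ U).ι).obj (structureModule (f ⁻¹ᵁ U).toScheme)) :=
  (Scheme.Modules.restrictAdjunction U.ι).unit.app M ≫
  (Scheme.Modules.pushforward U.ι).map (θ.hom ≫ structureModuleHom (f ∣_ U)) ≫
  (Scheme.Modules.pushforwardComp (f ∣_ U) U.ι).hom.app _ ≫
  (Scheme.Modules.pushforwardCongr (morphismRestrict_ι f U)).hom.app _ ≫
  (Scheme.Modules.pushforwardComp (f ⁻¹ᵁ U).ι f).inv.app _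

theorem trivializationHom_frameOf {V : X.Opens} (hV : V ≤ U.ι ''ᵁ ⊤) :
    (trivializationHom f θ).app V (res M hV (frameOf θ)) =
      oneSection (f ⁻¹ᵁ U).toScheme ((f ⁻¹ᵁ U).ι ⁻¹ᵁ f ⁻¹ᵁ V) := by
  have h1 : θ.hom.app (U.ι ⁻¹ᵁ V) (M.presheaf.map (homOfLE (U.ι.image_preimage_le V)).op
      (res M hV (frameOf θ))) = oneSection _ _ := by
    change θ.hom.app (U.ι ⁻¹ᵁ V) (res M (U.ι.image_preimage_le V) (res M hV (frameOf θ))) = _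
    rw [res_res, res_frameOf]
    exact ConcreteCategory.congr_hom (congrArg (fun g => Scheme.Modules.Hom.app g _) θ.inv_hom_id)
      (oneSection _ _)
  refine Eq.trans ?_ (map_oneSection (eqToHom (by rw [← Scheme.Hom.comp_preimage,
    ← Scheme.Hom.comp_preimage, morphismRestrict_ι]) :
      (f ⁻¹ᵁ U).ι ⁻¹ᵁ f ⁻¹ᵁ V ⟶ (f ∣_ U) ⁻¹ᵁ U.ι ⁻¹ᵁ V))
  refine congrArg ((structureModule (f ⁻¹ᵁ U).toScheme).presheaf.map _) ?_
  exact (congrArg ((structureModuleHom (f ∣_ U)).app _) h1).trans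
    (structureModuleHom_oneSection _ _)

theorem app_eq_zero_of_pullbackSection_smul_frameOf {V : X.Opens} (hV : V ≤ U.ι ''ᵁ ⊤)
    {a : Γ(X, V)} (h : pullbackSection f M V (a • res M hV (frameOf θ)) = 0) :
    f.app V a = 0 := by
  have h0 := app_eq_zero_of_pullbackSection_eq_zero f (trivializationHom f θ) h
  rw [Scheme.Modules.Hom.app_smul, trivializationHom_frameOf] at h0
  have h1 : (f ⁻¹ᵁ U).ι.app (f ⁻¹ᵁ V) (f.app V a) = 0 := (mul_one _).symm.trans h0
  have hVU : f ⁻¹ᵁ V ≤ (f ⁻¹ᵁ U).ι ''ᵁ (f ⁻¹ᵁ U).ι ⁻¹ᵁ f ⁻¹ᵁ V := by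
    rw [Scheme.Hom.image_preimage_eq_opensRange_inf]
    refine le_inf ?_ le_rfl
    simpa using f.preimage_mono (hV.trans (by simp))
  have h2 : resO ((f ⁻¹ᵁ U).ι.image_preimage_le (f ⁻¹ᵁ V)) (f.app V a) = 0 := by
    rw [Scheme.Opens.ι_app] at h1
    exact h1
  have h3 := congrArg (resO hVU) h2
  rwa [resO_resO, resO_self, map_zero] at h3

theorem IsLineBundle.exists_isFrame_pullback (hM : IsLineBundle M) (x : X) :
    ∃ (U : X.Opens) (e : Γ(M, U)), x ∈ U ∧ IsFrame e ∧
      ∀ (V : X.Opens) (hV : V ≤ U) (a : Γ(X, V)),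
        pullbackSection f M V (a • res M hV e) = 0 → f.app V a = 0 := by
  obtain ⟨U, hxU, ⟨θ⟩⟩ := hM x
  exact ⟨U.ι ''ᵁ ⊤, frameOf θ, by simpa using hxU, isFrame_frameOf θ,
    fun V hV a => app_eq_zero_of_pullbackSection_smul_frameOf f θ hV⟩

end PullbackSections

section Residual

theorem map_colon_of_fg {A B : Type*} [CommRing A] [CommRing B] [Algebra A B] (f : A)
    [IsLocalization.Away f B] (I J : Ideal A) (hJ : J.FG) :
    (I.colon (J : Set A)).map (algebraMap A B) =
      (I.map (algebraMap A B)).colon (J.map (algebraMap A B) : Set B) := by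
  apply le_antisymm
  · rw [Ideal.map_le_iff_le_comap]
    intro a ha
    rw [Ideal.mem_comap, Submodule.mem_colon]
    intro b hb
    induction hb using Submodule.span_induction with
    | mem x hx =>
      obtain ⟨j, hj, rfl⟩ := hx
      rw [smul_eq_mul, ← map_mul]
      exact Ideal.mem_map_of_mem _ (Submodule.mem_colon.mp ha j hj)
    | zero => simp
    | add x y _ _ hx hy => rw [smul_add]; exact add_mem hx hy
    | smul c x _ hx => rw [smul_comm]; exact Submodule.smul_mem _ c hx
  · intro b hb
    obtain ⟨x, s, rfl⟩ := IsLocalization.exists_mk'_eq (.powers f) b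
    rw [IsLocalization.mk'_mem_map_algebraMap_iff]
    have key (j : A) (hj : j ∈ J) : ∃ n : ℕ, f ^ n * (x * j) ∈ I := by
      have h := Submodule.mem_colon.mp hb _ (Ideal.mem_map_of_mem (algebraMap A B) hj)
      have h' : IsLocalization.mk' B (x * j) s ∈ I.map (algebraMap A B) := by
        rwa [mul_comm x j, ← IsLocalization.mul_mk'_eq_mk'_of_mul, mul_comm]
      rw [IsLocalization.mk'_mem_map_algebraMap_iff] at h'
      obtain ⟨_, ⟨n, rfl⟩, hn⟩ := h'
      exact ⟨n, hn⟩
    obtain ⟨t, rfl⟩ := hJ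
    choose! n hn using key
    refine ⟨f ^ t.sup n, ⟨_, rfl⟩, ?_⟩
    rw [Submodule.mem_colon]
    intro j hj
    induction hj using Submodule.span_induction with
    | mem j hj =>
      obtain ⟨d, hd⟩ := Nat.exists_eq_add_of_le (Finset.le_sup (f := n) hj)
      rw [hd, pow_add, smul_eq_mul, mul_comm (f ^ n j), mul_assoc, mul_assoc]
      exact I.mul_mem_left _ (hn j (Ideal.subset_span hj))
    | zero => simp
    | add x y _ _ hx hy => rw [smul_add]; exact add_mem hx hy
    | smul c x _ hx => rw [smul_comm]; exact Submodule.smul_mem _ c hx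

theorem colon_le_residualScheme {X : Scheme.{u}} [IsLocallyNoetherian X]
    (H W : X.IdealSheafData) (U : X.affineOpens) :
    (W.ideal U).colon (H.ideal U : Set Γ(X, U.1)) ≤ (residualScheme H W).ideal U := by
  let J : X.IdealSheafData :=
    { ideal := fun U => (W.ideal U).colon (H.ideal U : Set Γ(X, U.1))
      map_ideal_basicOpen := fun U f => by
        have := U.2.isLocalization_basicOpen f
        have := IsLocallyNoetherian.component_noetherian U
        rw [← W.map_ideal_basicOpen, ← H.map_ideal_basicOpen]
        exact map_colon_of_fg f _ _ (IsNoetherian.noetherian _) }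
  have : J ≤ residualScheme H W := Scheme.IdealSheafData.le_ofIdeals_iff.mpr le_rfl
  exact this U

end Residual

section Evaluation

variable {k : Type u} [Field k] {X Y : Scheme.{u}}

theorem top_le_preimage {p : Spec (.of k) ⟶ X} {U : X.Opens}
    (hp : p (IsLocalRing.closedPoint k) ∈ U) : ⊤ ≤ p ⁻¹ᵁ U := fun x _ => by
  have : x = IsLocalRing.closedPoint k := Subsingleton.elim (α := PrimeSpectrum k) _ _
  subst this
  exact hp

/-- The value of a function at a point with values in `k`. -/
noncomputable def evalAt (p : Spec (.of k) ⟶ X) {U : X.Opens}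
    (hp : p (IsLocalRing.closedPoint k) ∈ U) : Γ(X, U) →+* k :=
  (p.appLE U ⊤ (top_le_preimage hp) ≫ (Scheme.ΓSpecIso (.of k)).hom).hom

theorem evalAt_appLE (p : Spec (.of k) ⟶ Y) (g : Y ⟶ X) {U : X.Opens} {V : Y.Opens}
    (e : V ≤ g ⁻¹ᵁ U) (hp : p (IsLocalRing.closedPoint k) ∈ V)
    (hp' : (p ≫ g) (IsLocalRing.closedPoint k) ∈ U) (a : Γ(X, U)) :
    evalAt p hp (g.appLE U V e a) = evalAt (p ≫ g) hp' a := by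
  simp only [evalAt, ← Scheme.Hom.appLE_comp_appLE p g U V ⊤ e (top_le_preimage hp)]
  rfl

theorem evalAt_app (p : Spec (.of k) ⟶ Y) (g : Y ⟶ X) {U : X.Opens}
    (hp : p (IsLocalRing.closedPoint k) ∈ g ⁻¹ᵁ U)
    (hp' : (p ≫ g) (IsLocalRing.closedPoint k) ∈ U) (a : Γ(X, U)) :
    evalAt p hp (g.app U a) = evalAt (p ≫ g) hp' a := by
  rw [Scheme.Hom.app_eq_appLE]
  exact evalAt_appLE p g le_rfl hp hp' a

theorem mem_basicOpen_iff_evalAt_ne_zero (p : Spec (.of k) ⟶ X) {U : X.Opens}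
    (hp : p (IsLocalRing.closedPoint k) ∈ U) (a : Γ(X, U)) :
    p (IsLocalRing.closedPoint k) ∈ X.basicOpen a ↔ evalAt p hp a ≠ 0 := by
  have h1 : p (IsLocalRing.closedPoint k) ∈ X.basicOpen a ↔
      IsLocalRing.closedPoint k ∈
        (Spec (.of k)).basicOpen (p.appLE U ⊤ (top_le_preimage hp) a) := by
    rw [Scheme.basicOpen_appLE, top_inf_eq]
    rfl
  rw [h1]
  set c := p.appLE U ⊤ (top_le_preimage hp) a
  have h2 : evalAt p hp a = (Scheme.ΓSpecIso (.of k)).hom c := rfl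
  rw [h2]
  constructor
  · intro h h0
    have : c = 0 := (Scheme.ΓSpecIso (.of k)).commRingCatIsoToRingEquiv.injective
      (h0.trans (map_zero _).symm)
    rw [this, Scheme.basicOpen_zero] at h
    exact h
  · intro h
    have hu : IsUnit c := by
      have := (IsUnit.mk0 _ h).map (Scheme.ΓSpecIso (.of k)).inv.hom
      rwa [show (Scheme.ΓSpecIso (.of k)).inv.hom ((Scheme.ΓSpecIso (.of k)).hom c) = c from
        (Scheme.ΓSpecIso (.of k)).commRingCatIsoToRingEquiv.symm_apply_apply c] at this
    rw [Scheme.basicOpen_of_isUnit _ hu]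
    trivial

theorem ker_ideal_of_mem (p : Spec (.of k) ⟶ X) (U : X.affineOpens)
    (hp : p (IsLocalRing.closedPoint k) ∈ U.1) :
    p.ker.ideal U = RingHom.ker (evalAt p hp) := by
  rw [Scheme.Hom.ker_apply]
  ext a
  have hinj : Function.Injective ((Spec (.of k)).presheaf.map
      (homOfLE (top_le_preimage hp)).op ≫ (Scheme.ΓSpecIso (.of k)).hom) := by
    have : p ⁻¹ᵁ U.1 = ⊤ := top_le_iff.mp (top_le_preimage hp)
    have : IsIso (homOfLE (top_le_preimage hp)).op := by
      have h : homOfLE (top_le_preimage hp) = eqToHom this.symm := Subsingleton.elim _ _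
      rw [h]; infer_instance
    exact (ConcreteCategory.bijective_of_isIso _).1
  rw [RingHom.mem_ker, RingHom.mem_ker]
  exact (map_eq_zero_iff (CommRingCat.Hom.hom _) hinj).symm

theorem ker_ideal_of_notMem (p : Spec (.of k) ⟶ X) (U : X.affineOpens)
    (hp : p (IsLocalRing.closedPoint k) ∉ U.1) : p.ker.ideal U = ⊤ := by
  rw [Scheme.Hom.ker_apply]
  have : p ⁻¹ᵁ U.1 = ⊥ := by
    refine le_bot_iff.mp fun x hx => hp ?_
    have h : x = IsLocalRing.closedPoint k := Subsingleton.elim (α := PrimeSpectrum k) _ _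
    rwa [h] at hx
  have : Subsingleton Γ(Spec (.of k), p ⁻¹ᵁ U.1) := by
    rw [this]
    infer_instance
  exact (Ideal.eq_top_iff_one _).mpr (Subsingleton.elim _ _)

theorem fatPoint_ideal_of_mem (p : Spec (.of k) ⟶ X) (m : ℕ) (U : X.affineOpens)
    (hp : p (IsLocalRing.closedPoint k) ∈ U.1) :
    (fatPoint p m).ideal U = RingHom.ker (evalAt p hp) ^ m := by
  rw [← ker_ideal_of_mem]
  rfl

theorem fatPoint_ideal_of_notMem (p : Spec (.of k) ⟶ X) (m : ℕ) (U : X.affineOpens)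
    (hp : p (IsLocalRing.closedPoint k) ∉ U.1) : (fatPoint p m).ideal U = ⊤ := by
  change p.ker.ideal U ^ m = ⊤
  rw [ker_ideal_of_notMem p U hp, ← Ideal.one_eq_top, one_pow]

variable (f : X ⟶ Spec (.of k))

theorem le_preimage_top (U : X.Opens) : U ≤ f ⁻¹ᵁ ⊤ := fun _ _ => trivial

/-- The `k`-algebra structure on the functions on an open subset of a `k`-scheme. -/
noncomputable abbrev sectionAlgebra (U : X.Opens) : Algebra k Γ(X, U) :=
  ((Scheme.ΓSpecIso (.of k)).inv ≫ f.appLE ⊤ U (le_preimage_top f U)).hom.toAlgebra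

theorem resO_sectionAlgebra {U V : X.Opens} (h : V ≤ U) (c : k) :
    resO h ((sectionAlgebra f U).algebraMap c) = (sectionAlgebra f V).algebraMap c := by
  change ((Scheme.ΓSpecIso (.of k)).inv ≫ f.appLE ⊤ U (le_preimage_top f U) ≫
    X.presheaf.map _) c = _
  rw [Scheme.Hom.appLE_map]
  rfl

theorem appLE_sectionAlgebra (g : Y ⟶ X) {f' : Y ⟶ Spec (.of k)} (hg : g ≫ f = f') {U : X.Opens}
    {V : Y.Opens} (e : V ≤ g ⁻¹ᵁ U) (c : k) :
    g.appLE U V e ((sectionAlgebra f U).algebraMap c) = (sectionAlgebra f' V).algebraMap c := by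
  subst hg
  change ((Scheme.ΓSpecIso (.of k)).inv ≫ f.appLE ⊤ U (le_preimage_top f U) ≫ g.appLE U V e) c = _
  rw [Scheme.Hom.appLE_comp_appLE]
  rfl

theorem evalAt_sectionAlgebra (p : RatPoint f) {U : X.Opens}
    (hp : p.1 (IsLocalRing.closedPoint k) ∈ U) (c : k) :
    evalAt p.1 hp ((sectionAlgebra f U).algebraMap c) = c := by
  change (Scheme.ΓSpecIso (.of k)).hom (p.1.appLE U ⊤ _ _) = c
  rw [appLE_sectionAlgebra f p.1 p.2]
  change ((Scheme.ΓSpecIso (.of k)).inv ≫ (𝟙 (Spec (.of k)) :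
    Spec (.of k) ⟶ Spec (.of k)).appLE ⊤ ⊤ le_top ≫ (Scheme.ΓSpecIso (.of k)).hom) c = c
  simp [Scheme.Hom.appLE]

/-- The value of a function at a rational point, as a homomorphism of `k`-algebras. -/
noncomputable def evalAlgHom (p : RatPoint f) {U : X.Opens}
    (hp : p.1 (IsLocalRing.closedPoint k) ∈ U) :
    letI := sectionAlgebra f U
    Γ(X, U) →ₐ[k] k :=
  letI := sectionAlgebra f U
  { evalAt p.1 hp with commutes' := evalAt_sectionAlgebra f p hp }

/-- Every character of the algebra of functions on an affine open is the evaluation at a rational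
point. -/
theorem exists_ratPoint_evalAlgHom_eq {U : X.Opens} (hU : IsAffineOpen U) :
    letI := sectionAlgebra f U
    ∀ φ : Γ(X, U) →ₐ[k] k, ∃ (p : RatPoint f) (hp : p.1 (IsLocalRing.closedPoint k) ∈ U),
      evalAlgHom f p hp = φ := by
  let := sectionAlgebra f U
  intro φ
  let p : Spec (.of k) ⟶ X := Spec.map (CommRingCat.ofHom (φ : Γ(X, U) →+* k)) ≫ hU.fromSpec
  have hp : p (IsLocalRing.closedPoint k) ∈ U := by
    have : hU.fromSpec (Spec.map (CommRingCat.ofHom (φ : Γ(X, U) →+* k))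
        (IsLocalRing.closedPoint k)) ∈ Set.range hU.fromSpec := ⟨_, rfl⟩
    rwa [hU.range_fromSpec] at this
  have heval : evalAt p hp = (φ : Γ(X, U) →+* k) := by
    have h1 : hU.fromSpec.appLE U ⊤ hU.fromSpec_preimage_self.ge =
        (Scheme.ΓSpecIso Γ(X, U)).inv := by
      rw [Scheme.Hom.appLE, hU.fromSpec_app_self, Category.assoc, ← Functor.map_comp]
      exact (congrArg _ ((Spec Γ(X, U)).presheaf.map_id _)).trans (Category.comp_id _)
    have h2 : p.appLE U ⊤ (top_le_preimage hp) = (Scheme.ΓSpecIso Γ(X, U)).inv ≫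
        (Spec.map (CommRingCat.ofHom (φ : Γ(X, U) →+* k))).appTop := by
      rw [← h1, Scheme.Hom.appTop, Scheme.Hom.app_eq_appLE]
      exact (Scheme.Hom.appLE_comp_appLE _ _ _ _ _ _ _).symm
    rw [evalAt, h2, Category.assoc, Scheme.ΓSpecIso_naturality]
    exact congrArg CommRingCat.Hom.hom ((Scheme.ΓSpecIso Γ(X, U)).inv_hom_id_assoc
      (CommRingCat.ofHom (φ : Γ(X, U) →+* k)))
  have hpf : p ≫ f = 𝟙 _ := by
    have h1 : (Scheme.ΓSpecIso (.of k)).inv ≫ f.appLE ⊤ U (le_preimage_top f U) ≫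
        CommRingCat.ofHom (φ : Γ(X, U) →+* k) = 𝟙 _ := by
      ext c
      exact φ.commutes c
    rw [Category.assoc, ← IsAffineOpen.SpecMap_appLE_fromSpec f (isAffineOpen_top _) hU
      (le_preimage_top f U), IsAffineOpen.fromSpec_top, Scheme.isoSpec_Spec_inv,
      ← Spec.map_comp, ← Spec.map_comp, Category.assoc, h1, Spec.map_id]
  exact ⟨⟨p, hpf⟩, hp, AlgHom.ext fun a => congr($heval a)⟩

theorem finiteType_sectionAlgebra [LocallyOfFiniteType f] {U : X.Opens} (hU : IsAffineOpen U) :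
    letI := sectionAlgebra f U
    Algebra.FiniteType k Γ(X, U) := by
  let := sectionAlgebra f U
  have h := f.finiteType_appLE (isAffineOpen_top _) hU (le_preimage_top f U)
  have h' : (algebraMap k Γ(X, U)).FiniteType := h.comp (.of_surjective _
    (Scheme.ΓSpecIso (.of k)).commRingCatIsoToRingEquiv.symm.surjective)
  exact RingHom.finiteType_algebraMap.mp h'


theorem isClosed_ratPoint [IsAlgClosed k] [LocallyOfFiniteType f] (p : RatPoint f) :
    IsClosed {p.1 (IsLocalRing.closedPoint k)} :=
  (pointEquivClosedPoint f p).2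

end Evaluation

section GlobalSections

variable {X Y : Scheme.{u}} {M : X.Modules}

theorem res_mem_ideal_smul_top (I : X.IdealSheafData) {U V : X.affineOpens} (h : V.1 ≤ U.1)
    {s : Γ(M, U.1)} (hs : s ∈ I.ideal U • (⊤ : Submodule Γ(X, U.1) Γ(M, U.1))) :
    res M h s ∈ I.ideal V • (⊤ : Submodule Γ(X, V.1) Γ(M, V.1)) := by
  induction hs using Submodule.smul_induction_on' with
  | smul c hc t ht =>
    rw [res_smul]
    exact Submodule.smul_mem_smul (I.ideal_le_comap_ideal h hc) trivial
  | add s hs t ht ihs iht =>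
    rw [map_add]
    exact add_mem ihs iht

theorem exists_affineOpens_mem_le {O : X.Opens} {x : X} (hx : x ∈ O) :
    ∃ V : X.affineOpens, x ∈ V.1 ∧ V.1 ≤ O := by
  obtain ⟨_, ⟨V, hV, rfl⟩, hxV, hVO⟩ :=
    X.isBasis_affineOpens.exists_subset_of_mem_open hx O.2
  exact ⟨⟨V, hV⟩, hxV, hVO⟩

theorem IsLineBundle.mem_H0_of_local (hM : IsLineBundle M) (I : X.IdealSheafData) (s : Γ(M, ⊤))
    (h : ∀ x : X, ∃ V : X.affineOpens, x ∈ V.1 ∧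
      res M (le_top : V.1 ≤ ⊤) s ∈ I.ideal V • (⊤ : Submodule Γ(X, V.1) Γ(M, V.1))) :
    s ∈ H0 I M := by
  intro U
  refine hM.mem_smul_top_of_local I U (res M le_top s) fun x hx => ?_
  obtain ⟨V, hxV, hV⟩ := h x
  obtain ⟨V', hxV', hV'⟩ := exists_affineOpens_mem_le (O := U.1 ⊓ V.1) ⟨hx, hxV⟩
  refine ⟨V', hV'.trans inf_le_left, hxV', ?_⟩
  have := res_mem_ideal_smul_top I (hV'.trans inf_le_right) hV
  rwa [res_res] at this ⊢

theorem IsLineBundle.eq_zero_of_res_eq_zero [IsIntegral X] (hM : IsLineBundle M) {O : X.Opens}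
    (hO : (O : Set X).Nonempty) {s : Γ(M, ⊤)} (hs : res M (le_top : O ≤ ⊤) s = 0) : s = 0 := by
  choose U e hxU he using hM.exists_isFrame
  refine eq_of_res_eq M U (fun _ => le_top)
    (fun x _ => TopologicalSpace.Opens.mem_iSup.mpr ⟨x, hxU x⟩) fun x => ?_
  obtain ⟨a, ha⟩ := (he x).exists_eq_smul (res M le_top s)
  have hne : ((U x ⊓ O : X.Opens) : Set X).Nonempty :=
    nonempty_preirreducible_inter (U x).2 O.2 ⟨x, hxU x⟩ hO
  have : Nonempty (U x ⊓ O : X.Opens) := hne.to_subtype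
  have h0 : resO (inf_le_left : U x ⊓ O ≤ U x) a = 0 := by
    apply ((he x).restrict (inf_le_left : U x ⊓ O ≤ U x)).smul_injective
    rw [← res_smul, ← ha, res_res, ← res_res M (le_top : O ≤ ⊤) inf_le_right, hs, map_zero,
      zero_smul]
  have : a = 0 := map_injective_of_isIntegral X (homOfLE (inf_le_left : U x ⊓ O ≤ U x))
    (h0.trans (map_zero _).symm)
  rw [ha, this, zero_smul, map_zero]

end GlobalSections

section PullbackFrames

variable {X Y : Scheme.{u}} (f : Y ⟶ X) {M : X.Modules}

/-- A frame whose pullback has no torsion. -/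
def IsPullbackFrame {U : X.Opens} (e : Γ(M, U)) : Prop :=
  IsFrame e ∧ ∀ (V : X.Opens) (hV : V ≤ U) (a : Γ(X, V)),
    pullbackSection f M V (a • res M hV e) = 0 → f.app V a = 0

variable {f}

theorem IsPullbackFrame.restrict {U V : X.Opens} {e : Γ(M, U)} (he : IsPullbackFrame f e)
    (h : V ≤ U) : IsPullbackFrame f (res M h e) :=
  ⟨he.1.restrict h, fun W hW a h0 => he.2 W (hW.trans h) a (by rwa [res_res] at h0)⟩

theorem IsPullbackFrame.app_eq_zero {U : X.Opens} {e : Γ(M, U)} (he : IsPullbackFrame f e)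
    {a : Γ(X, U)} (h : pullbackSection f M U (a • e) = 0) : f.app U a = 0 :=
  he.2 U le_rfl a (by rwa [res_self])

end PullbackFrames

section Divisor

variable {X : Scheme.{u}} {H : X.IdealSheafData} {M : X.Modules}

theorem ideal_eq_span_resO {U V : X.affineOpens} (hVU : V.1 ≤ U.1) {h : Γ(X, U.1)}
    (hU : H.ideal U = Ideal.span {h}) : H.ideal V = Ideal.span {resO hVU h} := by
  rw [← H.map_ideal (U := V) (V := U) hVU, hU, Ideal.map_span, Set.image_singleton]
  rfl

/-- A line bundle and a Cartier divisor are simultaneously trivial locally. -/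
theorem IsEffectiveCartier.exists_affineOpens (hH : IsEffectiveCartier H) (hM : IsLineBundle M)
    [IsIntegral X] {O : X.Opens} {x : X} (hx : x ∈ O) :
    ∃ V : X.affineOpens, x ∈ V.1 ∧ V.1 ≤ O ∧
      (∃ e : Γ(M, V.1), IsPullbackFrame H.subschemeι e) ∧
      ∃ h : Γ(X, V.1), h ≠ 0 ∧ H.ideal V = Ideal.span {h} := by
  obtain ⟨U, hxU, h, hh, hU⟩ := hH x
  obtain ⟨T, e, hxT, he⟩ := hM.exists_isFrame_pullback H.subschemeι x
  obtain ⟨V, hxV, hV⟩ := exists_affineOpens_mem_le (O := U.1 ⊓ (T ⊓ O)) ⟨hxU, hxT, hx⟩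
  have hVU : V.1 ≤ U.1 := hV.trans inf_le_left
  have hVT : V.1 ≤ T := hV.trans (inf_le_right.trans inf_le_left)
  have : Nonempty V.1 := ⟨⟨x, hxV⟩⟩
  have : Nonempty U.1 := ⟨⟨x, hxU⟩⟩
  refine ⟨V, hxV, hV.trans (inf_le_right.trans inf_le_right),
    ⟨res M hVT e, IsPullbackFrame.restrict he hVT⟩, resO hVU h, ?_, ideal_eq_span_resO hVU hU⟩
  intro h0
  exact nonZeroDivisors.ne_zero hh (map_injective_of_isIntegral X (homOfLE hVU)
    (h0.trans (map_zero _).symm))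

theorem app_mem_traceScheme_ideal {W : X.IdealSheafData} {U : X.affineOpens} {a : Γ(X, U.1)}
    (ha : a ∈ W.ideal U) :
    H.subschemeι.app U.1 a ∈ (traceScheme H W).ideal ⟨_, U.2.preimage H.subschemeι⟩ := by
  have := Scheme.IdealSheafData.le_map_comap (J := W) H.subschemeι U ha
  rwa [Scheme.IdealSheafData.ideal_map_of_isAffineHom] at this

variable {k : Type u} [Field k] {W : X.IdealSheafData} {U : X.affineOpens}

theorem simpleResidue_ideal_of_mem (z : Spec (.of k) ⟶ X) (m : ℕ) {h : Γ(X, U.1)}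
    (hU : H.ideal U = Ideal.span {h}) (hz : z (IsLocalRing.closedPoint k) ∈ U.1) :
    (simpleResidue H z m).ideal U =
      RingHom.ker (evalAt z hz) ^ m ⊔ Ideal.span {h ^ (m - 1)} := by
  rw [← Ideal.span_singleton_pow, ← hU, ← fatPoint_ideal_of_mem]
  rfl

theorem simpleResidue_ideal_of_notMem (z : Spec (.of k) ⟶ X) (m : ℕ)
    (hz : z (IsLocalRing.closedPoint k) ∉ U.1) : (simpleResidue H z m).ideal U = ⊤ := by
  refine top_le_iff.mp ?_
  rw [← fatPoint_ideal_of_notMem z m U hz]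
  exact le_sup_left (a := (fatPoint z m).ideal U)

theorem mem_residualScheme_ideal [IsLocallyNoetherian X] {h b : Γ(X, U.1)}
    (hU : H.ideal U = Ideal.span {h}) (hb : h * b ∈ W.ideal U) :
    b ∈ (residualScheme H W).ideal U := by
  refine colon_le_residualScheme H W U (Submodule.mem_colon.mpr fun c hc => ?_)
  rw [SetLike.mem_coe, hU, Ideal.mem_span_singleton] at hc
  obtain ⟨d, rfl⟩ := hc
  have := Ideal.mul_mem_right d _ hb
  rwa [smul_eq_mul, ← mul_assoc, mul_comm b h]

end Divisor

section Horace

variable {k : Type u} [Field k] [IsAlgClosed k] {X : Scheme.{u}} (f : X ⟶ Spec (.of k))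
  [LocallyOfFiniteType f] {L : X.Modules} (hL : IsLineBundle L)
  {H : X.IdealSheafData} (hH : IsEffectiveCartier H) {W : X.IdealSheafData} {r : ℕ}
  (Q : Fin r → RatPoint (H.subschemeι ≫ f))

theorem exists_open_notMem {x : X} {O : X.Opens} (hx : x ∉ O)
    (hQ : ∀ i, (Q i).1 (IsLocalRing.closedPoint k) ∈ H.subschemeι ⁻¹ᵁ O) :
    ∃ T : X.Opens, x ∈ T ∧ ∀ i, (Q i).1 (IsLocalRing.closedPoint k) ∉ H.subschemeι ⁻¹ᵁ T := by
  let q (i : Fin r) : X := H.subschemeι ((Q i).1 (IsLocalRing.closedPoint k))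
  have hcl : IsClosed (Set.range q) := by
    rw [← Set.iUnion_singleton_eq_range]
    exact isClosed_iUnion_of_finite fun i => isClosed_ratPoint f
      ⟨(Q i).1 ≫ H.subschemeι, by rw [Category.assoc, (Q i).2]⟩
  refine ⟨⟨(Set.range q)ᶜ, hcl.isOpen_compl⟩, ?_, fun i hi => hi ⟨i, rfl⟩⟩
  rintro ⟨i, rfl⟩
  exact hx (hQ i)

variable {s : Γ(L, ⊤)} (hs : s ∈ H0 W L) {U : X.affineOpens}
  (hQ : ∀ i, (Q i).1 (IsLocalRing.closedPoint k) ∈ H.subschemeι ⁻¹ᵁ U.1) {e : Γ(L, U.1)}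

include hL hs hQ in
theorem pullbackSection_mem_H0 (he : IsFrame e) {a : Γ(X, U.1)}
    (ha : res L (le_top : U.1 ≤ ⊤) s = a • e)
    (haQ : ∀ i, evalAt ((Q i).1 ≫ H.subschemeι) (hQ i) a = 0) :
    (pullbackSection H.subschemeι L ⊤ s : Γ(restrictTo L H, ⊤)) ∈
      H0 (traceScheme H W ⊓ ⨅ i, fatPoint (Q i).1 1) (restrictTo L H) := by
  refine (hL.pullback H.subschemeι).mem_H0_of_local _ _ fun y => ?_
  suffices ∃ (V : X.affineOpens) (e : Γ(L, V.1)) (a : Γ(X, V.1)), H.subschemeι y ∈ V.1 ∧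
      IsFrame e ∧ res L (le_top : V.1 ≤ ⊤) s = a • e ∧ ∀ i, H.subschemeι.app V.1 a ∈
        (fatPoint (Q i).1 1).ideal ⟨_, V.2.preimage H.subschemeι⟩ by
    obtain ⟨V, e, a, hyV, he, ha, haQ⟩ := this
    refine ⟨⟨_, V.2.preimage H.subschemeι⟩, hyV, ?_⟩
    have h1 := pullbackSection_res H.subschemeι L (le_top : V.1 ≤ ⊤) s
    rw [ha, pullbackSection_smul] at h1
    have haW : a ∈ W.ideal V := by
      rw [← he.smul_mem_iff, ← ha]
      exact hs V
    have h2 : H.subschemeι.app V.1 a ∈ (traceScheme H W ⊓ ⨅ i, fatPoint (Q i).1 1).ideal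
        ⟨_, V.2.preimage H.subschemeι⟩ := by
      rw [Scheme.IdealSheafData.ideal_inf, Scheme.IdealSheafData.ideal_iInf, Pi.inf_apply,
        iInf_apply]
      exact ⟨app_mem_traceScheme_ideal haW, Ideal.mem_iInf.mpr haQ⟩
    refine Set.mem_of_eq_of_mem h1.symm ?_
    exact Submodule.smul_mem_smul h2 trivial
  by_cases hy : H.subschemeι y ∈ U.1
  · refine ⟨U, e, a, hy, he, ha, fun i => ?_⟩
    rw [fatPoint_ideal_of_mem _ _ _ (hQ i), pow_one, RingHom.mem_ker]
    exact (evalAt_app _ _ _ (hQ i) a).trans (haQ i)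
  · obtain ⟨T, hyT, hT⟩ := exists_open_notMem f Q hy hQ
    obtain ⟨O, e', hyO, he'⟩ := hL.exists_isFrame (H.subschemeι y)
    obtain ⟨V, hyV, hV⟩ := exists_affineOpens_mem_le (O := T ⊓ O) ⟨hyT, hyO⟩
    have he'' := he'.restrict (hV.trans inf_le_right)
    obtain ⟨c, hc⟩ := he''.exists_eq_smul (res L (le_top : V.1 ≤ ⊤) s)
    refine ⟨V, _, c, hyV, he'', hc, fun i => ?_⟩
    rw [fatPoint_ideal_of_notMem _ _ _ fun h => hT i (hV.trans inf_le_left h)]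
    trivial

include hL hH hs hQ in
theorem mem_H0Twist [IsIntegral X] [IsIntegral H.subscheme]
    (hne : ((H.subschemeι ⁻¹ᵁ U.1 : H.subscheme.Opens) : Set H.subscheme).Nonempty)
    (he : IsFrame e) {h b : Γ(X, U.1)} (hU : H.ideal U = Ideal.span {h})
    (hb : res L (le_top : U.1 ≤ ⊤) s = (h * b) • e) (m : Fin r → ℕ)
    (hbQ : ∀ i, b ∈ RingHom.ker (evalAt ((Q i).1 ≫ H.subschemeι) (hQ i)) ^ m i ⊔
      Ideal.span {h ^ (m i - 1)}) :
    s ∈ H0Twist (residualScheme H W ⊓ ⨅ i, simpleResidue H ((Q i).1 ≫ H.subschemeι) (m i)) L H := by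
  have : IsLocallyNoetherian X := LocallyOfFiniteType.isLocallyNoetherian f
  have hpull : pullbackSection H.subschemeι L ⊤ s = 0 := by
    refine (hL.pullback H.subschemeι).eq_zero_of_res_eq_zero hne ?_
    have h1 := pullbackSection_res H.subschemeι L (le_top : U.1 ≤ ⊤) s
    have h0 : H.subschemeι.app U.1 (h * b) = 0 := by
      have : h * b ∈ RingHom.ker (H.subschemeι.app U.1).hom := by
        rw [Scheme.IdealSheafData.ker_subschemeι_app, hU]
        exact Ideal.mul_mem_right _ _ (Ideal.mem_span_singleton_self h)
      exact this
    rw [hb, pullbackSection_smul, h0, zero_smul] at h1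
    exact h1.symm
  refine hL.mem_H0_of_local _ _ fun x => ?_
  suffices ∃ (V : X.affineOpens) (e : Γ(L, V.1)) (h b : Γ(X, V.1)), x ∈ V.1 ∧
      IsFrame e ∧ res L (le_top : V.1 ≤ ⊤) s = (h * b) • e ∧ H.ideal V = Ideal.span {h} ∧
      ∀ i, b ∈ (simpleResidue H ((Q i).1 ≫ H.subschemeι) (m i)).ideal V by
    obtain ⟨V, e, h, b, hxV, he, hb, hV, hbQ⟩ := this
    refine ⟨V, hxV, ?_⟩
    have hbW : h * b ∈ W.ideal V := by
      rw [← he.smul_mem_iff, ← hb]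
      exact hs V
    rw [hb, he.smul_mem_iff, mul_comm h b]
    refine Ideal.mul_mem_mul ?_ (by rw [hV]; exact Ideal.mem_span_singleton_self h)
    rw [Scheme.IdealSheafData.ideal_inf, Scheme.IdealSheafData.ideal_iInf, Pi.inf_apply,
      iInf_apply]
    exact ⟨mem_residualScheme_ideal hV hbW, Ideal.mem_iInf.mpr hbQ⟩
  by_cases hx : x ∈ U.1
  · refine ⟨U, e, h, b, hx, he, hb, hU, fun i => ?_⟩
    rw [simpleResidue_ideal_of_mem ((Q i).1 ≫ H.subschemeι) _ hU (hQ i)]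
    exact hbQ i
  · obtain ⟨T, hxT, hT⟩ := exists_open_notMem f Q hx hQ
    obtain ⟨V, hxV, hVT, ⟨e', he'⟩, h', -, hV⟩ := hH.exists_affineOpens hL hxT
    obtain ⟨c, hc⟩ := he'.1.exists_eq_smul (res L (le_top : V.1 ≤ ⊤) s)
    have h0 : c ∈ RingHom.ker (H.subschemeι.app V.1).hom := he'.app_eq_zero <| by
      rw [← hc, pullbackSection_res, hpull, map_zero]
    rw [Scheme.IdealSheafData.ker_subschemeι_app, hV, Ideal.mem_span_singleton] at h0
    obtain ⟨d, rfl⟩ := h0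
    refine ⟨V, e', h', d, hxV, he'.1, hc, hV, fun i => ?_⟩
    rw [simpleResidue_ideal_of_notMem _ _ fun h => hT i (hVT h)]
    trivial

end Horace

section GenericOpens

variable {k : Type u} [Field k] {X : Scheme.{u}} (f : X ⟶ Spec (.of k)) {r : ℕ}

/-- The power of an open subset, as an open subset of the fibre power. -/
noncomputable def openPower (r : ℕ) (U : X.Opens) : (fibrePower f r).Opens :=
  ⟨⋂ i : Fin r, (WidePullback.π (fun _ : Fin r => f) i ⁻¹ᵁ U : (fibrePower f r).Opens),
    isOpen_iInter_of_finite fun i => (WidePullback.π (fun _ : Fin r => f) i ⁻¹ᵁ U).2⟩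

theorem openPower_le (U : X.Opens) (i : Fin r) :
    openPower f r U ≤ WidePullback.π (fun _ : Fin r => f) i ⁻¹ᵁ U :=
  fun _ hx => Set.mem_iInter.mp hx i

theorem tuplePoint_mem_openPower_iff (U : X.Opens) (p : Fin r → RatPoint f) :
    tuplePoint f p (IsLocalRing.closedPoint k) ∈ openPower f r U ↔
      ∀ i, (p i).1 (IsLocalRing.closedPoint k) ∈ U := by
  refine Set.mem_iInter.trans (forall_congr' fun i => ?_)
  rw [← tuplePoint_π f p i]
  rfl

variable [IsAlgClosed k] [LocallyOfFiniteType f]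

theorem ForGeneric.exists_forall_mem {f : X ⟶ Spec (.of k)} [LocallyOfFiniteType f]
    {Φ Ψ : (Fin r → RatPoint f) → Prop}
    (hΦ : ForGeneric f r Φ) (hΨ : ForGeneric f r Ψ) (U : X.Opens) (hU : (U : Set X).Nonempty) :
    ∃ p : Fin r → RatPoint f, (∀ i, (p i).1 (IsLocalRing.closedPoint k) ∈ U) ∧ Φ p ∧ Ψ p := by
  obtain ⟨O₁, hd₁, h₁⟩ := hΦ
  obtain ⟨O₂, hd₂, h₂⟩ := hΨ
  obtain ⟨p, hp⟩ := exists_ratPoint_mem f U hU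
  have hne : (openPower f r U : Set (fibrePower f r)).Nonempty :=
    ⟨_, (tuplePoint_mem_openPower_iff f U fun _ => p).mpr fun _ => hp⟩
  obtain ⟨x, hxU, hx₁, hx₂⟩ := (hd₁.inter_of_isOpen_left hd₂ O₁.2).inter_open_nonempty
    _ (openPower f r U).2 hne
  obtain ⟨q, hqU, hq₁, hq₂⟩ := exists_tuplePoint_mem f (openPower f r U ⊓ (O₁ ⊓ O₂))
    ⟨x, hxU, hx₁, hx₂⟩
  exact ⟨q, (tuplePoint_mem_openPower_iff f U q).mp hqU, h₁ q hq₁, h₂ q hq₂⟩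

/-- A property that holds where a nonzero polynomial in local functions does not vanish holds
generically. -/
theorem forGeneric_of_aeval_ne_zero [IrreducibleSpace X] {Φ : (Fin r → RatPoint f) → Prop}
    {U : X.Opens} (hU : IsAffineOpen U) (D : MvPolynomial (Fin r × Γ(X, U)) k) :
    letI := sectionAlgebra f U
    (∃ P : Fin r → Γ(X, U) →ₐ[k] k, MvPolynomial.aeval (fun l => P l.1 l.2) D ≠ 0) →
    (∀ (p : Fin r → RatPoint f) (hp : ∀ i, (p i).1 (IsLocalRing.closedPoint k) ∈ U),
      MvPolynomial.aeval (fun l : Fin r × Γ(X, U) => evalAlgHom f (p l.1) (hp l.1) l.2) D ≠ 0 →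
      Φ p) → ForGeneric f r Φ := by
  let := sectionAlgebra f U
  intro ⟨P, hP⟩ hΦ
  let b := WidePullback.base (fun _ : Fin r => f)
  let := sectionAlgebra b (openPower f r U)
  let F : Γ(fibrePower f r, openPower f r U) := MvPolynomial.aeval (fun l : Fin r × Γ(X, U) =>
    (WidePullback.π (fun _ : Fin r => f) l.1).appLE U _ (openPower_le f U l.1) l.2) D
  have key (p : Fin r → RatPoint f) (hp : ∀ i, (p i).1 (IsLocalRing.closedPoint k) ∈ U) :
      tuplePoint f p (IsLocalRing.closedPoint k) ∈ (fibrePower f r).basicOpen F ↔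
      MvPolynomial.aeval (fun l : Fin r × Γ(X, U) => evalAlgHom f (p l.1) (hp l.1) l.2) D ≠ 0 := by
    have hq := (tuplePoint_mem_openPower_iff f U p).mpr hp
    rw [mem_basicOpen_iff_evalAt_ne_zero _ hq]
    let q : RatPoint b := ⟨tuplePoint f p, tuplePoint_base f p⟩
    have h1 : evalAt (tuplePoint f p) hq F = evalAlgHom b q hq F := rfl
    rw [h1, ← AlgHom.comp_apply, MvPolynomial.comp_aeval]
    have h2 : (fun l : Fin r × Γ(X, U) => evalAlgHom b q hq
        ((WidePullback.π (fun _ : Fin r => f) l.1).appLE U _ (openPower_le f U l.1) l.2)) =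
        fun l => evalAlgHom f (p l.1) (hp l.1) l.2 := by
      funext l
      have h3 := evalAt_appLE (tuplePoint f p) (WidePullback.π (fun _ : Fin r => f) l.1)
        (openPower_le f U l.1) hq (by rw [tuplePoint_π]; exact hp l.1) l.2
      refine h3.trans ?_
      simp only [tuplePoint_π]
      rfl
    rw [h2]
  choose p hp hpP using fun i => exists_ratPoint_evalAlgHom_eq f hU (P i)
  refine ⟨(fibrePower f r).basicOpen F, dense_of_tuplePoint_mem f _ p ((key p hp).mpr ?_),
    fun q hq => ?_⟩
  · simpa only [hpP] using hP
  · have hqU := (tuplePoint_mem_openPower_iff f U q).mp ((fibrePower f r).basicOpen_le F hq)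
    exact hΦ q hqU ((key q hqU).mp hq)

end GenericOpens

section EtaleChart

variable {k : Type u} [Field k] [IsAlgClosed k] {X : Scheme.{u}} (f : X ⟶ Spec (.of k))
  [LocallyOfFiniteType f] [IsIntegral X] {L : X.Modules}
  {H : X.IdealSheafData} [IsIntegral H.subscheme]

theorem isDomain_section (U : X.Opens) (hU : (U : Set X).Nonempty) : IsDomain Γ(X, U) :=
  haveI : Nonempty U := hU.to_subtype
  inferInstance

/-- Near the generic point of an integral Cartier divisor there are étale coordinates, one of which
is an equation of the divisor. -/
theorem exists_etale_chart (hL : IsLineBundle L) (hH : IsEffectiveCartier H) :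
    ∃ U : X.affineOpens, ((H.subschemeι ⁻¹ᵁ U.1 : H.subscheme.Opens) : Set H.subscheme).Nonempty ∧
      (∃ e : Γ(L, U.1), IsPullbackFrame H.subschemeι e) ∧
      letI := sectionAlgebra f U.1
      ∃ (n : ℕ) (z : Option (Fin n) → Γ(X, U.1)),
        z none ≠ 0 ∧ H.ideal U = Ideal.span {z none} ∧ IsEtaleCoordinates k z := by
  obtain ⟨y⟩ : Nonempty H.subscheme := inferInstance
  obtain ⟨V, hyV, -, ⟨e, he⟩, h, h0, hV⟩ :=
    hH.exists_affineOpens hL (x := H.subschemeι y) (O := ⊤) trivial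
  have : IsDomain Γ(X, V.1) := isDomain_section V.1 ⟨_, hyV⟩
  have : IsDomain Γ(H.subscheme, H.subschemeι ⁻¹ᵁ V.1) := isDomain_section _ ⟨y, hyV⟩
  let := sectionAlgebra f V.1
  have : Algebra.FiniteType k Γ(X, V.1) := finiteType_sectionAlgebra f V.2
  have : (Ideal.span {h}).IsPrime := by
    rw [← hV, ← Scheme.IdealSheafData.ker_subschemeι_app]
    exact RingHom.ker_isPrime _
  obtain ⟨g, hg, hcoord⟩ := exists_isEtaleCoordinates (k := k) h h0
  let U := X.affineBasicOpen g
  have hUV : U.1 ≤ V.1 := X.basicOpen_le g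
  let := sectionAlgebra f U.1
  let : Algebra Γ(X, V.1) Γ(X, U.1) := (resO hUV).toAlgebra
  have : IsScalarTower k Γ(X, V.1) Γ(X, U.1) :=
    .of_algebraMap_eq fun c => (resO_sectionAlgebra f hUV c).symm
  have : IsLocalization.Away g Γ(X, U.1) := V.2.isLocalization_basicOpen g
  obtain ⟨n, z, hz0, hz⟩ := hcoord Γ(X, U.1)
  have hne : ((H.subschemeι ⁻¹ᵁ U.1 : H.subscheme.Opens) : Set H.subscheme).Nonempty := by
    change ((H.subschemeι ⁻¹ᵁ X.basicOpen g : H.subscheme.Opens) : Set H.subscheme).Nonempty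
    rw [Scheme.preimage_basicOpen, Set.nonempty_iff_ne_empty]
    intro hempty
    have : H.subschemeι.app V.1 g = 0 :=
      (basicOpen_eq_bot_iff _).mp (TopologicalSpace.Opens.ext hempty)
    refine hg ?_
    rw [← hV, ← Scheme.IdealSheafData.ker_subschemeι_app]
    exact this
  refine ⟨U, hne, ⟨_, he.restrict hUV⟩, n, z, ?_, ?_, hz⟩
  · have : Nonempty U.1 := hne.elim fun y hy => ⟨⟨_, hy⟩⟩
    rw [hz0]
    exact fun h1 => h0 (map_injective_of_isIntegral X (homOfLE hUV) (h1.trans (map_zero _).symm))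
  · rw [hz0]
    exact ideal_eq_span_resO hUV hV

/-- The `k`-submodule of local expressions of the global sections of `𝓘_W ⊗ L` in a frame. -/
noncomputable def localExpressions (W : X.IdealSheafData) {U : X.Opens} (e : Γ(L, U)) :
    letI := sectionAlgebra f U
    Submodule k Γ(X, U) :=
  letI := sectionAlgebra f U
  { carrier := {a | ∃ s ∈ H0 W L, res L (le_top : U ≤ ⊤) s = a • e}
    add_mem' := by
      rintro a b ⟨s, hs, ha⟩ ⟨t, ht, hb⟩
      exact ⟨s + t, add_mem hs ht, by rw [map_add, ha, hb, add_smul]⟩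
    zero_mem' := ⟨0, zero_mem _, by rw [map_zero, zero_smul]⟩
    smul_mem' := by
      rintro c a ⟨s, hs, ha⟩
      refine ⟨(sectionAlgebra f ⊤).algebraMap c • s, Submodule.smul_mem _ _ hs, ?_⟩
      rw [res_smul, resO_sectionAlgebra, ha, smul_smul, Algebra.smul_def] }

end EtaleChart

end DiffHorace

theorem statement_17 {k : Type u} [Field k] [IsAlgClosed k]
    (X : Scheme.{u}) (f : X ⟶ Spec (.of k)) (hf : IsProjective f) [IsIntegral X]
    (n : ℕ) (hn : topologicalKrullDim X = n)
    (L : X.Modules) (hL : IsLineBundle L)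
    (H : X.IdealSheafData) (hH : IsEffectiveCartier H) [IsIntegral H.subscheme]
    (hHsing : ¬ (H.support : Set X) ⊆ singularLocus X)
    (W : X.IdealSheafData) (hW : ¬ W ≤ H)
    (r : ℕ) (m : Fin r → ℕ) (hm : ∀ i, 0 < m i)
    -- (Dime)
    (dime : ForGeneric (H.subschemeι ≫ f) r fun Q =>
      H0 (traceScheme H W ⊓ ⨅ i, fatPoint (Q i).1 1) (restrictTo L H) = ⊥)
    -- (Degue)
    (degue : ForGeneric (H.subschemeι ≫ f) r fun Q =>
      H0Twist (residualScheme H W ⊓ ⨅ i, simpleResidue H ((Q i).1 ≫ H.subschemeι) (m i)) L H = ⊥) :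
    ForGeneric f r fun P =>
      H0 (W ⊓ ⨅ i, fatPoint (P i).1 (m i)) L = ⊥ := by
  have := hf.locallyOfFiniteType
  obtain ⟨U, hne, ⟨e, he⟩, N, z, hz0, hz, hcoord⟩ := exists_etale_chart f hL hH
  let := sectionAlgebra f U.1
  have hneX : (U.1 : Set X).Nonempty := hne.elim fun y hy => ⟨_, hy⟩
  have : IsDomain Γ(X, U.1) := isDomain_section U.1 hneX
  have : Algebra.FiniteType k Γ(X, U.1) := finiteType_sectionAlgebra f U.2
  obtain ⟨Q, hQ, hdime, hdegue⟩ := dime.exists_forall_mem degue _ hne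
  let q (i : Fin r) : RatPoint f :=
    ⟨(Q i).1 ≫ H.subschemeι, by rw [Category.assoc, (Q i).2]⟩
  have hdvd {a : Γ(X, U.1)} (ha : H.subschemeι.app U.1 a = 0) : z none ∣ a := by
    rw [← Ideal.mem_span_singleton, ← hz, ← Scheme.IdealSheafData.ker_subschemeι_app]
    exact ha
  have hzero : H.subschemeι.app U.1 (z none) = 0 := by
    have : z none ∈ RingHom.ker (H.subschemeι.app U.1).hom := by
      rw [Scheme.IdealSheafData.ker_subschemeι_app, hz]
      exact Ideal.mem_span_singleton_self _
    exact this
  obtain ⟨D, hD, hD'⟩ := hcoord.exists_generic_polynomial none (localExpressions f W e) m hm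
    (fun i => evalAlgHom f (q i) (hQ i))
    (fun i => by
      have := evalAt_app (Q i).1 H.subschemeι (hQ i) (hQ i) (z none)
      rw [hzero, map_zero] at this
      exact this.symm)
    (fun a ⟨s, hs, ha⟩ haQ => by
      have := (Submodule.eq_bot_iff _).mp hdime _
        (pullbackSection_mem_H0 f hL Q hs hQ he.1 ha haQ)
      refine hdvd (he.app_eq_zero ?_)
      rw [← ha, pullbackSection_res]
      exact (congrArg _ this).trans (map_zero _))
    (fun b ⟨s, hs, hb⟩ hbQ => by
      have := mem_H0Twist f hL hH Q hs hQ hne he.1 hz hb m hbQ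
      rw [hdegue, Submodule.mem_bot] at this
      rw [this, map_zero] at hb
      have h0 : z none * b = 0 := he.1.smul_injective (by rw [← hb, zero_smul])
      exact (mul_eq_zero.mp h0).resolve_left hz0)
  refine forGeneric_of_aeval_ne_zero f U.2 D hD fun p hp hpD => (Submodule.eq_bot_iff _).mpr ?_
  intro s hs
  obtain ⟨a, ha⟩ := he.1.exists_eq_smul (res L (le_top : U.1 ≤ ⊤) s)
  have ha' : a ∈ (W ⊓ ⨅ i, fatPoint (p i).1 (m i)).ideal U := by
    rw [← he.1.smul_mem_iff, ← ha]
    exact hs U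
  rw [Scheme.IdealSheafData.ideal_inf, Scheme.IdealSheafData.ideal_iInf, Pi.inf_apply,
    iInf_apply] at ha'
  have h0 : a = 0 := by
    refine hD' (fun i => evalAlgHom f (p i) (hp i)) hpD a ⟨s, fun V => ?_, ha⟩ fun i => ?_
    · exact Submodule.smul_mono_left (inf_le_left (a := W) (b := _) V) (hs V)
    · have := Ideal.mem_iInf.mp ha'.2 i
      rwa [fatPoint_ideal_of_mem _ _ _ (hp i)] at this
  refine hL.eq_zero_of_res_eq_zero hneX ?_
  rw [ha, h0, zero_smul]
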